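/- Existence of weak solutions (Proposition 2.2, weak-solution part): For every T>0, every V₀ ∈ ℝ and every q₀ ∈ L^∞(D) that is odd in y, there exists a weak solution (V,q) of the barotropic quasi-geostrophic equations on [0,T] with initial datum (V₀,q₀), in the sense of the weak formulation described in the context. -/

import Mathlib

open MeasureTheory Real Set

noncomputable section

namespace BQG

/-- The fundamental domain `D = [−π,π]²` of the two-dimensional torus. -/
def Dom : Set (ℝ × ℝ) := Ioc (-π) π ×ˢ Ioc (-π) π

/-- The Fourier coefficient of `f` against the mode `e_{-j} s_k`,
`f̂_{j,k} = ∫_D f(x,y) e^{−ijx}/(2π) · sin(ky) dx dy`. -/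
def fhat (f : ℝ × ℝ → ℝ) (j : ℤ) (k : ℕ) : ℂ :=
  ∫ z in Dom, (f z : ℂ) * Complex.exp (-(Complex.I * (j : ℂ) * (z.1 : ℂ))) / (2 * π)
    * (Real.sin ((k : ℝ) * z.2) : ℂ)

/-- The Fourier coefficient of `f` against the cosine-type mode `e_{-j} c_k`. -/
def chat (f : ℝ × ℝ → ℝ) (j : ℤ) (k : ℕ) : ℂ :=
  ∫ z in Dom, (f z : ℂ) * Complex.exp (-(Complex.I * (j : ℂ) * (z.1 : ℂ))) / (2 * π)
    * (Real.cos ((k : ℝ) * z.2) : ℂ)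

/-- `f` is odd in `y`: its `L²`-expansion only uses the modes `e_j s_k`, i.e. all its
cosine-type Fourier coefficients vanish. -/
def OddInY (f : ℝ × ℝ → ℝ) : Prop := ∀ (j : ℤ) (k : ℕ), chat f j k = 0

/-- The Fourier coefficient of `Δ⁻¹ f` on the mode `e_j s_k`, namely `−f̂_{j,k}/(j²+k²)`. -/
def invLapCoeff (f : ℝ × ℝ → ℝ) (j : ℤ) (k : ℕ) : ℂ :=
  -(fhat f j k) / ((j : ℂ)^2 + (k : ℂ)^2)

/-- The velocity field `u = (V,0) + ∇^⊥ ψ′` with `ψ′ = Δ⁻¹ f`, characterized as the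
square-integrable vector field on `D` whose Fourier coefficients are those obtained by
termwise application of `∇^⊥ = (−∂_y, ∂_x)` to the Fourier series of `Δ⁻¹ f`, plus the
constant `(V,0)`. -/
def IsVelocity (f : ℝ × ℝ → ℝ) (V : ℝ) (u : ℝ × ℝ → ℝ × ℝ) : Prop :=
  MemLp u 2 (volume.restrict Dom) ∧
  (∀ (j : ℤ) (k : ℕ),
    chat (fun z => (u z).1) j k
      = (if j = 0 ∧ k = 0 then (2 * π * V : ℂ) else 0)
        + (if 1 ≤ k then -(invLapCoeff f j k) * (k : ℂ) / 2 else 0)) ∧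
  (∀ (j : ℤ) (k : ℕ), 1 ≤ k → fhat (fun z => (u z).1) j k = 0) ∧
  (∀ (j : ℤ) (k : ℕ), 1 ≤ k →
    fhat (fun z => (u z).2) j k = invLapCoeff f j k * Complex.I * (j : ℂ) / 2) ∧
  (∀ (j : ℤ) (k : ℕ), chat (fun z => (u z).2) j k = 0)

/-- **Weak solutions of the barotropic quasi-geostrophic equations** (Definition 2.1).
`(V,q)` is a weak solution on `[0,T]` with initial datum `(V₀,q₀)`, with associated velocity
field `u(t,·) = (V(t),0) + ∇^⊥Δ⁻¹(q(t,·) − h − βy)`; the test functions `φ` are `C¹` and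
`2π`-periodic in both space variables. -/
structure IsWeakSolution (T β : ℝ) (h : ℝ × ℝ → ℝ) (V₀ : ℝ) (q₀ : ℝ × ℝ → ℝ)
    (V : ℝ → ℝ) (q : ℝ → ℝ × ℝ → ℝ) (u : ℝ → ℝ × ℝ → ℝ × ℝ) : Prop where
  /-- `V ∈ L^∞([0,T];ℝ)`. -/
  measV : Measurable V
  bddV : ∃ M : ℝ, ∀ t ∈ Icc (0 : ℝ) T, |V t| ≤ M
  /-- `q ∈ L^∞([0,T]×D)`. -/
  measq : Measurable fun p : ℝ × (ℝ × ℝ) => q p.1 p.2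
  bddq : ∃ M : ℝ, ∀ᵐ p ∂(volume.restrict (Icc (0 : ℝ) T ×ˢ Dom)), |q p.1 p.2| ≤ M
  /-- `q(t,·)` is odd in `y` for a.e. `t`. -/
  oddq : ∀ᵐ t ∂(volume.restrict (Icc (0 : ℝ) T)), OddInY (q t)
  /-- `t ↦ ∫_D q(t,z)ϕ(z) dz` is continuous on `[0,T]` for every continuous `ϕ`. -/
  contq : ∀ ϕ : ℝ × ℝ → ℝ, Continuous ϕ →
    ContinuousOn (fun t => ∫ z in Dom, q t z * ϕ z) (Icc (0 : ℝ) T)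
  measu : Measurable fun p : ℝ × (ℝ × ℝ) => u p.1 p.2
  /-- `u(t,·) = (V(t),0) + ∇^⊥ψ′(t,·)` with `ψ′(t,·) = Δ⁻¹(q(t,·) − h − βy)`. -/
  vel : ∀ᵐ t ∂(volume.restrict (Icc (0 : ℝ) T)),
    IsVelocity (fun z => q t z - h z - β * z.2) (V t) (u t)
  /-- Weak vorticity formulation (i). -/
  weak_q : ∀ φ : ℝ × ℝ × ℝ → ℝ, ContDiff ℝ 1 φ →
    (∀ t x y : ℝ, φ (t, x + 2 * π, y) = φ (t, x, y)) →
    (∀ t x y : ℝ, φ (t, x, y + 2 * π) = φ (t, x, y)) →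
    (∫ z in Dom, φ (T, z) * q T z) - (∫ z in Dom, φ (0, z) * q₀ z)
      = ∫ s in Icc (0 : ℝ) T, ∫ z in Dom,
          (fderiv ℝ φ (s, z) (1, 0, 0) + fderiv ℝ φ (s, z) (0, u s z)) * q s z
  /-- Mean-flow equation (ii): `V(t) = V₀ + ∫₀ᵗ ⨍_D h ∂_xψ′(s,·) dz ds`, where
  `∂_xψ′(s,·)` is the second component of `u(s,·)`. -/
  meanflow : ∀ t ∈ Icc (0 : ℝ) T,
    V t = V₀ + ∫ s in Ioc (0 : ℝ) t, (∫ z in Dom, h z * (u s z).2) / (4 * π^2)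

end BQG

namespace BQG

lemma setInt_Dom {E : Type*} [NormedAddCommGroup E] [NormedSpace ℝ E] (F : ℝ × ℝ → E)
    (hF : IntegrableOn F Dom) :
    ∫ z in Dom, F z = ∫ x in (-π)..π, ∫ y in (-π)..π, F (x, y) := by
  have hp : (-π) ≤ π := by linarith [pi_pos]
  simp only [intervalIntegral.integral_of_le hp]
  unfold Dom at *
  rw [Measure.volume_eq_prod] at *
  rw [setIntegral_prod _ hF]

lemma vol_Dom : volume Dom = ENNReal.ofReal (4 * π ^ 2) := by
  unfold Dom
  rw [Measure.volume_eq_prod, Measure.prod_prod, Real.volume_Ioc, ← ENNReal.ofReal_mul]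
  · congr 1; ring
  · linarith [pi_pos]

instance : IsFiniteMeasure (volume.restrict Dom) :=
  ⟨by rw [Measure.restrict_apply_univ, vol_Dom]; exact ENNReal.ofReal_lt_top⟩

lemma measurableSet_Dom : MeasurableSet Dom := measurableSet_Ioc.prod measurableSet_Ioc

lemma volr_Dom : (volume.restrict Dom).real univ = 4 * π ^ 2 := by
  rw [Measure.real, Measure.restrict_apply_univ, vol_Dom, ENNReal.toReal_ofReal (by positivity)]

lemma int_bdd {E : Type*} [NormedAddCommGroup E] {α : Type*} [MeasurableSpace α]
    {ν : Measure α} [IsFiniteMeasure ν] {F : α → E} (hF : AEStronglyMeasurable F ν)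
    (C : ℝ) (hb : ∀ z, ‖F z‖ ≤ C) : Integrable F ν :=
  Integrable.of_bound hF C (Filter.Eventually.of_forall hb)

lemma shift_int (H : ℝ → ℝ) (hH : Function.Periodic H (2 * π)) (c : ℝ) :
    ∫ y in (-π)..π, H (y + c) = ∫ y in (-π)..π, H y := by
  rw [intervalIntegral.integral_comp_add_right]
  have := hH.intervalIntegral_add_eq (-π + c) (-π)
  convert this using 2 <;> ring

lemma shift_int' (H : ℝ → ℝ) (k : ℤ) (hH : Function.Periodic H (2 * π * k)) (c : ℝ) :
    ∫ y in (0)..(2 * π * k), H (y + c) = ∫ y in (0)..(2 * π * k), H y := by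
  rw [intervalIntegral.integral_comp_add_right]
  have := hH.intervalIntegral_add_eq (0 + c) (0)
  convert this using 2 <;> ring

lemma fin_uIoc (a b : ℝ) : IsFiniteMeasure (volume.restrict (uIoc a b)) :=
  ⟨by rw [Measure.restrict_apply_univ, uIoc]; exact measure_Ioc_lt_top⟩

lemma fin_box (a b c d : ℝ) : IsFiniteMeasure (volume.restrict (uIoc a b ×ˢ uIoc c d)) :=
  ⟨by
    rw [Measure.restrict_apply_univ, uIoc, uIoc, Measure.volume_eq_prod, Measure.prod_prod]
    exact ENNReal.mul_lt_top measure_Ioc_lt_top measure_Ioc_lt_top⟩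

lemma bigbox (G : ℝ × ℝ → ℝ) (hG : Measurable G) (C : ℝ) (hb : ∀ z, |G z| ≤ C)
    (hx : ∀ x y, G (x + 2 * π, y) = G (x, y)) (k : ℤ) :
    ∫ x in (0)..(2 * π * k), ∫ y in (-π)..π, G (x, y) = k * ∫ z in Dom, G z := by
  rw [setInt_Dom G (int_bdd hG.aestronglyMeasurable C hb)]
  have hp : Function.Periodic (fun x => ∫ y in (-π)..π, G (x, y)) (2 * π) := by
    intro x; simp only [hx]
  have hpi : (-π) ≤ π := by linarith [pi_pos]
  have hm : StronglyMeasurable (fun x => ∫ y in (-π)..π, G (x, y)) := by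
    simp only [intervalIntegral.integral_of_le hpi]
    exact StronglyMeasurable.integral_prod_right (f := fun x y => G (x, y)) hG.stronglyMeasurable
  have hbd : ∀ x, ‖∫ y in (-π)..π, G (x, y)‖ ≤ C * |π - (-π)| := fun x =>
    intervalIntegral.norm_integral_le_of_norm_le_const (fun y _ => hb (x, y))
  have hI : ∀ a b : ℝ, IntervalIntegrable (fun x => ∫ y in (-π)..π, G (x, y)) volume a b := by
    intro a b
    rw [intervalIntegrable_iff]
    have := fin_uIoc a b
    exact int_bdd hm.aestronglyMeasurable _ hbd
  have h1 := hp.intervalIntegral_add_zsmul_eq k 0 hI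
  have h2 := hp.intervalIntegral_add_eq 0 (-π)
  simp only [zsmul_eq_mul, zero_add] at h1 h2
  rw [show 2 * π * (k : ℝ) = k * (2 * π) by ring, h1, h2]
  congr 2; ring

/-- Invariance of the integral over the torus under a shear along a rational direction. -/
lemma shear_inv (F : ℝ × ℝ → ℝ) (hF : Measurable F) (C : ℝ) (hb : ∀ z, |F z| ≤ C)
    (hx : ∀ x y, F (x + 2 * π, y) = F (x, y)) (hy : ∀ x y, F (x, y + 2 * π) = F (x, y))
    (j k : ℤ) (hk : k ≠ 0) (g : ℝ → ℝ) (hg : Measurable g) (gper : Function.Periodic g (2 * π)) :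
    ∫ z in Dom, F (z.1 + k * g (j * z.1 + k * z.2), z.2 - j * g (j * z.1 + k * z.2))
      = ∫ z in Dom, F z := by
  have hk' : (k : ℝ) ≠ 0 := by exact_mod_cast hk
  have hpx : ∀ y, Function.Periodic (fun x => F (x, y)) (2 * π) := fun y x => hx x y
  have hpy : ∀ x, Function.Periodic (fun y => F (x, y)) (2 * π) := fun x y => hy x y
  have e1 : (k : ℝ) * ∫ z in Dom, F (z.1 + k * g (j * z.1 + k * z.2), z.2 - j * g (j * z.1 + k * z.2))
      = k * ∫ z in Dom, F z := by
    rw [← bigbox _ (by fun_prop) C (fun z => hb _) ?_ k, ← bigbox F hF C hb hx k]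
    · have s1 : ∀ x : ℝ, ∫ y in (-π)..π, F (x + k * g (j * x + k * y), y - j * g (j * x + k * y))
          = ∫ y in (-π)..π, F (x + k * g (k * y), (y - (j / k) * x) - j * g (k * y)) := by
        intro x
        rw [← shift_int _ ?_ (-(j / k * x))]
        · apply intervalIntegral.integral_congr
          intro y _
          have : (j : ℝ) * x + k * (y + -(j / k * x)) = k * y := by field_simp; ring
          simp only [this]
          ring_nf
        · intro y
          have : g (j * x + k * (y + 2 * π)) = g (j * x + k * y) := by
            have := gper.int_mul k (j * x + k * y)
            rw [← this]; congr 1; push_cast; ring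
          simp only [this]
          rw [← hy _ (y - _)]; congr 2; ring
      simp only [s1]
      rw [intervalIntegral_intervalIntegral_swap]
      · have s2 : ∀ y : ℝ, ∫ x in (0)..(2 * π * k), F (x + k * g (k * y), (y - (j / k) * x) - j * g (k * y))
          = ∫ x in (0)..(2 * π * k), F (x, y - (j / k) * x) := by
          intro y
          rw [← shift_int' (fun x => F (x, y - (j / k) * x)) k ?_ (k * g (k * y))]
          · apply intervalIntegral.integral_congr
            intro x _
            simp only
            congr 2
            field_simp; try ring
          · intro x
            have a1 := (hpx (y - (j / k) * (x + 2 * π * k))).int_mul k x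
            have a2 := (hpy x).int_mul (-j) (y - (j / k) * x)
            rw [show x + 2 * π * k = x + k * (2 * π) by ring] at *
            beta_reduce
            rw [a1, ← a2]; congr 2; push_cast; field_simp; try ring
        simp only [s2]
        rw [intervalIntegral_intervalIntegral_swap]
        · apply intervalIntegral.integral_congr
          intro x _
          simp only
          rw [← shift_int _ (hpy x) (-(j / k * x))]
          apply intervalIntegral.integral_congr
          intro y _
          simp only [sub_eq_add_neg]
        · have := fin_box (-π) π 0 (2 * π * k)
          refine int_bdd (Measurable.aestronglyMeasurable ?_) C (fun z => hb _)
          fun_prop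
      · have := fin_box 0 (2 * π * k) (-π) π
        refine int_bdd (Measurable.aestronglyMeasurable ?_) C (fun z => hb _)
        fun_prop
    · intro x y
      have : g (j * (x + 2 * π) + k * y) = g (j * x + k * y) := by
        have := gper.int_mul j (j * x + k * y)
        rw [← this]; congr 1; push_cast; ring
      simp only [this]
      rw [← hx (x + _)]; congr 2; ring
  exact mul_left_cancel₀ hk' e1

end BQG

namespace BQG

/-- plane waves -/
def ee (m : ℤ × ℤ) (z : ℝ × ℝ) : ℂ :=
  Complex.exp (Complex.I * ((m.1 : ℂ) * (z.1 : ℂ) + (m.2 : ℂ) * (z.2 : ℂ)))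

lemma ee_cont (m : ℤ × ℤ) : Continuous (ee m) := by
  unfold ee; fun_prop

lemma ee_norm (m : ℤ × ℤ) (z : ℝ × ℝ) : ‖ee m z‖ = 1 := by
  unfold ee
  rw [mul_comm, show ((m.1 : ℂ) * (z.1 : ℂ) + (m.2 : ℂ) * (z.2 : ℂ))
    = ((m.1 * z.1 + m.2 * z.2 : ℝ) : ℂ) by push_cast; ring]
  exact Complex.norm_exp_ofReal_mul_I _

lemma ee_split (m : ℤ × ℤ) (x y : ℝ) : ee m (x, y) =
    Complex.exp (Complex.I * ((m.1 : ℂ) * (x : ℂ))) * Complex.exp (Complex.I * ((m.2 : ℂ) * (y : ℂ))) := by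
  unfold ee; rw [← Complex.exp_add]; congr 1; ring

lemma ee_conj (m : ℤ × ℤ) (z : ℝ × ℝ) : (starRingEnd ℂ) (ee m z) = ee (-m) z := by
  unfold ee
  rw [← Complex.exp_conj]; congr 1
  simp; ring

lemma ee_mul (m n : ℤ × ℤ) (z : ℝ × ℝ) : ee m z * ee n z = ee (m + n) z := by
  unfold ee
  rw [← Complex.exp_add]; congr 1
  simp; ring

lemma exp1 (j : ℤ) : ∫ x in (-π)..π, Complex.exp (Complex.I * ((j : ℂ) * (x : ℂ)))
    = if j = 0 then (2 * π : ℂ) else 0 := by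
  split_ifs with h
  · subst h; simp; ring
  · have hj : (j : ℂ) ≠ 0 := by exact_mod_cast h
    have := integral_exp_mul_complex (a := -π) (b := π) (c := Complex.I * j) (by simp [hj])
    simp only [← mul_assoc]
    rw [this]
    have e : Complex.exp (Complex.I * j * (π : ℝ)) = Complex.exp (Complex.I * j * ((-π : ℝ) : ℂ)) := by
      rw [Complex.exp_eq_exp_iff_exists_int]
      exact ⟨j, by push_cast; ring⟩
    rw [e]; simp

lemma ee_integrable (m : ℤ × ℤ) : Integrable (ee m) (volume.restrict Dom) :=
  int_bdd (ee_cont m).aestronglyMeasurable 1 (fun z => (ee_norm m z).le)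

lemma ee_int (m : ℤ × ℤ) : ∫ z in Dom, ee m z = if m = 0 then (4 * π ^ 2 : ℂ) else 0 := by
  rw [setInt_Dom _ (ee_integrable m)]
  simp only [ee_split, intervalIntegral.integral_const_mul, intervalIntegral.integral_mul_const, exp1]
  obtain ⟨a, b⟩ := m
  by_cases ha : a = 0 <;> by_cases hb : b = 0 <;> simp [ha, hb]
  ring

lemma parseval_fin (s : Finset (ℤ × ℤ)) (c : ℤ × ℤ → ℂ) :
    ∫ z in Dom, ‖∑ m ∈ s, c m * ee m z‖ ^ 2 = 4 * π ^ 2 * ∑ m ∈ s, ‖c m‖ ^ 2 := by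
  have h1 : ∀ z, ((‖∑ m ∈ s, c m * ee m z‖ ^ 2 : ℝ) : ℂ)
      = ∑ m ∈ s, ∑ n ∈ s, c m * (starRingEnd ℂ) (c n) * ee (m - n) z := by
    intro z
    rw [Complex.ofReal_pow, ← Complex.mul_conj', map_sum, Finset.sum_mul_sum]
    refine Finset.sum_congr rfl fun m _ => Finset.sum_congr rfl fun n _ => ?_
    rw [map_mul, ee_conj, sub_eq_add_neg, ← ee_mul]; ring
  have h2 : ((∫ z in Dom, ‖∑ m ∈ s, c m * ee m z‖ ^ 2 : ℝ) : ℂ)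
      = ((4 * π ^ 2 * ∑ m ∈ s, ‖c m‖ ^ 2 : ℝ) : ℂ) := by
    rw [← integral_complex_ofReal]
    simp only [h1]
    rw [integral_finsetSum]
    · simp_rw [integral_finsetSum s (fun n _ => (ee_integrable _).const_mul _)]
      simp only [integral_const_mul, ee_int, sub_eq_zero]
      push_cast
      rw [Finset.mul_sum]
      refine Finset.sum_congr rfl fun m hm => ?_
      simp only [mul_ite, mul_zero, Finset.sum_ite_eq, hm, if_true]
      rw [Complex.mul_conj']; ring
    · intro m _
      exact integrable_finsetSum _ (fun n _ => (ee_integrable _).const_mul _)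
  exact_mod_cast h2

lemma bessel (f : ℝ × ℝ → ℂ) (hf : MemLp f 2 (volume.restrict Dom)) (s : Finset (ℤ × ℤ)) :
    ∑ m ∈ s, ‖∫ z in Dom, f z * ee (-m) z‖ ^ 2 ≤ 4 * π ^ 2 * ∫ z in Dom, ‖f z‖ ^ 2 := by
  set F : ℤ × ℤ → ℂ := fun m => ∫ z in Dom, f z * ee (-m) z with hF
  have hfi : Integrable f (volume.restrict Dom) := hf.integrable (by norm_num)
  have hfe : ∀ m, Integrable (fun z => f z * ee m z) (volume.restrict Dom) := fun m =>
    hfi.mul_bdd (c := 1) (ee_cont m).aestronglyMeasurable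
      (Filter.Eventually.of_forall fun z => (ee_norm m z).le)
  have hf2 : Integrable (fun z => ‖f z‖ ^ 2) (volume.restrict Dom) := hf.integrable_norm_pow (by norm_num)
  set c : ℤ × ℤ → ℂ := fun m => F m / (4 * π ^ 2) with hc
  have hS : Continuous (fun z => ∑ m ∈ s, c m * ee m z) :=
    continuous_finsetSum _ fun m _ => continuous_const.mul (ee_cont m)
  have hSi : Integrable (fun z => ‖∑ m ∈ s, c m * ee m z‖ ^ 2) (volume.restrict Dom) := by
    refine int_bdd (hS.norm.pow 2).aestronglyMeasurable ((∑ m ∈ s, ‖c m‖) ^ 2) (fun z => ?_)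
    rw [norm_pow, norm_norm]
    gcongr
    refine (norm_sum_le _ _).trans (Finset.sum_le_sum fun m _ => ?_)
    rw [norm_mul, ee_norm, mul_one]
  have hcr : ∀ z, (f z * (starRingEnd ℂ) (∑ m ∈ s, c m * ee m z))
      = ∑ m ∈ s, (starRingEnd ℂ) (c m) * (f z * ee (-m) z) := by
    intro z
    rw [map_sum, Finset.mul_sum]
    refine Finset.sum_congr rfl fun m _ => ?_
    rw [map_mul, ee_conj]; ring
  have hci : Integrable (fun z => f z * (starRingEnd ℂ) (∑ m ∈ s, c m * ee m z)) (volume.restrict Dom) := by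
    simp only [hcr]
    exact integrable_finsetSum _ fun m _ => (hfe _).const_mul _
  have h0 : 0 ≤ ∫ z in Dom, ‖f z - ∑ m ∈ s, c m * ee m z‖ ^ 2 :=
    integral_nonneg fun z => by positivity
  have h1 : ∀ z, ‖f z - ∑ m ∈ s, c m * ee m z‖ ^ 2 = ‖f z‖ ^ 2 + ‖∑ m ∈ s, c m * ee m z‖ ^ 2
      - 2 * (f z * (starRingEnd ℂ) (∑ m ∈ s, c m * ee m z)).re := by
    intro z
    rw [← Complex.normSq_eq_norm_sq, ← Complex.normSq_eq_norm_sq, ← Complex.normSq_eq_norm_sq, Complex.normSq_sub]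
  have hre : ∫ z in Dom, (f z * (starRingEnd ℂ) (∑ m ∈ s, c m * ee m z)).re
      = 1 / (4 * π ^ 2) * ∑ m ∈ s, ‖F m‖ ^ 2 := by
    have := integral_re hci
    simp only [RCLike.re_to_complex] at this
    rw [this]
    simp only [hcr]
    rw [integral_finsetSum _ fun m _ => (hfe _).const_mul _]
    simp only [integral_const_mul]
    rw [Complex.re_sum, Finset.mul_sum]
    refine Finset.sum_congr rfl fun m _ => ?_
    change ((starRingEnd ℂ) (F m / (4 * π ^ 2)) * F m).re = _
    rw [show (F m / (4 * π ^ 2) : ℂ) = ((1 / (4 * π ^ 2) : ℝ) : ℂ) * F m by push_cast; ring,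
      map_mul, Complex.conj_ofReal, mul_assoc, Complex.re_ofReal_mul, Complex.conj_mul']
    congr 1
    exact_mod_cast rfl
  simp only [h1] at h0
  have hA : Integrable (fun z => ‖f z‖ ^ 2 + ‖∑ m ∈ s, c m * ee m z‖ ^ 2) (volume.restrict Dom) := hf2.add hSi
  have hB : Integrable (fun z => 2 * (f z * (starRingEnd ℂ) (∑ m ∈ s, c m * ee m z)).re) (volume.restrict Dom) := hci.re.const_mul 2
  rw [integral_sub hA hB, integral_add hf2 hSi, parseval_fin,
    integral_const_mul, hre] at h0
  have hcn : ∀ m, ‖c m‖ ^ 2 = (1 / (4 * π ^ 2)) ^ 2 * ‖F m‖ ^ 2 := by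
    intro m
    rw [hc, show (fun m => F m / (4 * π ^ 2 : ℂ)) m = ((1 / (4 * π ^ 2) : ℝ) : ℂ) * F m by push_cast; ring,
      norm_mul, mul_pow, Complex.norm_real, norm_eq_abs, sq_abs]
  simp only [hcn, ← Finset.mul_sum] at h0
  have hp : 0 < 4 * π ^ 2 := by positivity
  set S := ∑ m ∈ s, ‖F m‖ ^ 2
  have : (1 / (4 * π ^ 2)) * S ≤ ∫ z in Dom, ‖f z‖ ^ 2 := by
    have e : 4 * π ^ 2 * ((1 / (4 * π ^ 2)) ^ 2 * S) = 1 / (4 * π ^ 2) * S := by field_simp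
    rw [e] at h0; linarith
  calc S = 4 * π ^ 2 * ((1 / (4 * π ^ 2)) * S) := by field_simp
    _ ≤ _ := by gcongr

lemma sq_int_le {α : Type*} [MeasurableSpace α] (ν : Measure α) [IsFiniteMeasure ν] (g : α → ℝ)
    (h1 : Integrable g ν) (h2 : Integrable (fun x => g x ^ 2) ν) :
    (∫ x, g x ∂ν) ^ 2 ≤ ν.real univ * ∫ x, g x ^ 2 ∂ν := by
  set a := ∫ x, g x ∂ν with ha
  set V := ν.real univ with hV
  have hV0 : 0 ≤ V := measureReal_nonneg
  rcases hV0.eq_or_lt with h | h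
  · have : ν = 0 := by
      rw [← Measure.measure_univ_eq_zero]
      exact (measureReal_eq_zero_iff (measure_ne_top _ _)).1 h.symm
    rw [← h]; simp [ha, this]
  · have h0 : 0 ≤ ∫ x, (V * g x - a) ^ 2 ∂ν := integral_nonneg fun y => by positivity
    have e : ∀ x, (V * g x - a) ^ 2 = (V ^ 2 * g x ^ 2 - 2 * V * a * g x) + a ^ 2 := fun y => by ring
    simp only [e] at h0
    have hA : Integrable (fun x => V ^ 2 * g x ^ 2) ν := h2.const_mul _
    have hB : Integrable (fun x => 2 * V * a * g x) ν := h1.const_mul _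
    have hC : Integrable (fun x => V ^ 2 * g x ^ 2 - 2 * V * a * g x) ν := hA.sub hB
    rw [integral_add hC (integrable_const _), integral_sub hA hB, integral_const_mul,
      integral_const_mul, integral_const, smul_eq_mul, ← ha, ← hV] at h0
    have h3 : 0 ≤ V * (V * ∫ x, g x ^ 2 ∂ν - a ^ 2) := by linarith
    have := nonneg_of_mul_nonneg_right h3 h
    linarith

lemma complete1 (f : ℝ → ℂ) (hf : MemLp f 2 (volume.restrict (Ioc (-π) π)))
    (h0 : ∀ j : ℤ, ∫ x in (-π)..π, f x * Complex.exp (Complex.I * ((j : ℂ) * (x : ℂ))) = 0) :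
    f =ᵐ[volume.restrict (Ioc (-π) π)] 0 := by
  have hab : -π < π := by linarith [pi_pos]
  have hs := hasSum_sq_fourierCoeffOn hab hf
  have hz : ∀ i, fourierCoeffOn hab f i = 0 := by
    intro i
    rw [fourierCoeffOn_eq_integral]
    have : ∀ x : ℝ, (fourier (-i) (x : AddCircle (π - -π)) : ℂ) • f x
        = f x * Complex.exp (Complex.I * (((-i : ℤ) : ℂ) * (x : ℂ))) := by
      intro x
      rw [fourier_coe_apply, smul_eq_mul, mul_comm]
      congr 2
      have : (π : ℂ) ≠ 0 := by exact_mod_cast pi_ne_zero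
      push_cast; field_simp; ring
    simp only [this, h0, smul_zero]
  have hs0 : HasSum (fun i => ‖fourierCoeffOn hab f i‖ ^ 2) 0 := by
    simp only [hz, norm_zero]
    simpa using (hasSum_zero : HasSum (fun _ : ℤ => (0 : ℝ)) 0)
  have h1 := hs.unique hs0
  have h2 : ∫ x in (-π)..π, ‖f x‖ ^ 2 = 0 := by
    have : (π - -π)⁻¹ ≠ 0 := by
      apply inv_ne_zero; linarith
    simpa [this] using h1
  rw [intervalIntegral.integral_of_le hab.le] at h2
  rw [integral_eq_zero_iff_of_nonneg (fun x => by positivity) (hf.integrable_norm_pow (by norm_num))] at h2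
  filter_upwards [h2] with x hx
  simpa using hx

lemma complete2 (f : ℝ × ℝ → ℂ) (hm : Measurable f) (hf : MemLp f 2 (volume.restrict Dom))
    (h0 : ∀ m, ∫ z in Dom, f z * ee m z = 0) : f =ᵐ[volume.restrict Dom] 0 := by
  set ν := volume.restrict (Ioc (-π) π) with hν
  have hab : -π ≤ π := by linarith [pi_pos]
  have hμ : volume.restrict Dom = ν.prod ν := by
    rw [hν, Measure.prod_restrict]; rfl
  rw [hμ] at hf ⊢
  have hf2 : Integrable (fun z => ‖f z‖ ^ 2) (ν.prod ν) := hf.integrable_norm_pow (by norm_num)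
  have hfi : Integrable f (ν.prod ν) := hf.integrable (by norm_num)
  have hsl : ∀ᵐ x ∂ν, MemLp (fun y => f (x, y)) 2 ν := by
    filter_upwards [hf2.prod_right_ae] with x hx
    rw [memLp_two_iff_integrable_sq_norm]
    · exact hx
    · exact (hm.comp measurable_prodMk_left).aestronglyMeasurable
  have hk : ∀ k : ℤ, ∀ᵐ x ∂ν, ∫ y in (-π)..π, f (x, y) * Complex.exp (Complex.I * ((k : ℂ) * (y : ℂ))) = 0 := by
    intro k
    have hmm : StronglyMeasurable (fun x => ∫ y, f (x, y) * Complex.exp (Complex.I * ((k : ℂ) * (y : ℂ))) ∂ν) := by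
      apply StronglyMeasurable.integral_prod_right (f := fun x y => f (x, y) * Complex.exp (Complex.I * ((k : ℂ) * (y : ℂ))))
      apply Measurable.stronglyMeasurable
      unfold Function.uncurry
      fun_prop
    simp only [intervalIntegral.integral_of_le hab]
    refine complete1 (fun x => ∫ y, f (x, y) * Complex.exp (Complex.I * ((k : ℂ) * (y : ℂ))) ∂ν) ?_ ?_
    · rw [memLp_two_iff_integrable_sq_norm hmm.aestronglyMeasurable]
      have hb := hf2.integral_prod_left.const_mul (2 * π)
      refine hb.mono' (hmm.norm.pow 2).aestronglyMeasurable ?_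
      filter_upwards [hsl] with x hx
      have hx1 : Integrable (fun y => ‖f (x, y)‖) ν := (hx.integrable (by norm_num)).norm
      have e1 : ‖∫ y, f (x, y) * Complex.exp (Complex.I * ((k : ℂ) * (y : ℂ))) ∂ν‖ ≤ ∫ y, ‖f (x, y)‖ ∂ν := by
        refine (norm_integral_le_integral_norm _).trans (le_of_eq ?_)
        congr 1; ext y
        rw [norm_mul, mul_comm Complex.I, show ((k : ℂ) * (y : ℂ)) = ((k * y : ℝ) : ℂ) by push_cast; ring,
          Complex.norm_exp_ofReal_mul_I, mul_one]
      have e2 : (∫ y, ‖f (x, y)‖ ∂ν) ^ 2 ≤ 2 * π * ∫ y, ‖f (x, y)‖ ^ 2 ∂ν := by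
        have h3 := sq_int_le ν _ hx1 (hx.integrable_norm_pow (by norm_num))
        have hp : ν.real univ = 2 * π := by
          rw [hν, Measure.real, Measure.restrict_apply_univ, Real.volume_Ioc,
            ENNReal.toReal_ofReal (by linarith [pi_pos])]
          ring
        rwa [hp] at h3
      rw [norm_pow, norm_norm]
      exact (pow_le_pow_left₀ (norm_nonneg _) e1 2).trans e2
    · intro j
      have := h0 (j, k)
      rw [setInt_Dom] at this
      · rw [← this]
        simp only [intervalIntegral.integral_of_le hab]
        congr 1; ext x
        rw [← integral_mul_const]
        congr 1; ext y
        rw [ee_split]; ring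
      · rw [IntegrableOn, hμ]
        exact hfi.mul_bdd (c := 1) (ee_cont _).aestronglyMeasurable
          (Filter.Eventually.of_forall fun z => (ee_norm _ z).le)
  have hk' := ae_all_iff.2 hk
  have hfin : ∀ᵐ x ∂ν, ∀ᵐ y ∂ν, f (x, y) = 0 := by
    filter_upwards [hsl, hk'] with x h1 h2
    exact complete1 _ h1 h2
  have hms : MeasurableSet {z : ℝ × ℝ | f z = 0} := hm (measurableSet_singleton 0)
  exact (Measure.ae_prod_iff_ae_ae hms).2 hfin

end BQG

namespace BQG

/-- Bounded measurable functions on the domain. -/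
structure Adm (F : ℝ) (f : ℝ × ℝ → ℝ) : Prop where
  meas : Measurable f
  bdd : ∀ᵐ z ∂(volume.restrict Dom), |f z| ≤ F

lemma Adm.integrable {F : ℝ} {f : ℝ × ℝ → ℝ} (hf : Adm F f) : Integrable f (volume.restrict Dom) :=
  Integrable.of_bound hf.meas.aestronglyMeasurable F hf.bdd

lemma Adm.nonneg {F : ℝ} {f : ℝ × ℝ → ℝ} (hf : Adm F f) : 0 ≤ F := by
  have h : (ae (volume.restrict Dom)).NeBot := by
    rw [ae_neBot]
    intro h
    have := congrArg (fun ν => ν univ) h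
    simp only [Measure.restrict_apply_univ, vol_Dom] at this
    simp only [Measure.coe_zero, Pi.zero_apply, ENNReal.ofReal_eq_zero] at this
    have : 0 < 4 * π ^ 2 := by positivity
    linarith
  obtain ⟨z, hz⟩ := hf.bdd.exists
  exact (abs_nonneg _).trans hz

lemma Adm.memLp {F : ℝ} {f : ℝ × ℝ → ℝ} (hf : Adm F f) : MemLp f 2 (volume.restrict Dom) :=
  MemLp.of_bound hf.meas.aestronglyMeasurable F hf.bdd

lemma Adm.mul_int {F : ℝ} {f : ℝ × ℝ → ℝ} (hf : Adm F f) {g : ℝ × ℝ → ℝ}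
    (hg : Integrable g (volume.restrict Dom)) : Integrable (fun z => f z * g z) (volume.restrict Dom) :=
  hg.bdd_mul (c := F) hf.meas.aestronglyMeasurable hf.bdd

def cA (f : ℝ × ℝ → ℝ) (m : ℤ × ℤ) : ℝ := ∫ z in Dom, f z * (cos (m.1 * z.1) * sin (m.2 * z.2))
def cB (f : ℝ × ℝ → ℝ) (m : ℤ × ℤ) : ℝ := ∫ z in Dom, f z * (sin (m.1 * z.1) * sin (m.2 * z.2))
def lam (m : ℤ × ℤ) : ℝ := 1 / (4 * π ^ 2 * ((m.1 : ℝ) ^ 2 + (m.2 : ℝ) ^ 2))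
def gg (f : ℝ × ℝ → ℝ) (m : ℤ × ℤ) (θ : ℝ) : ℝ :=
  lam m / 2 * (cA f m * cos θ + cB f m * sin θ)
def ph (m : ℤ × ℤ) (z : ℝ × ℝ) : ℝ := m.1 * z.1 + m.2 * z.2
def Wm (V : ℝ) (f : ℝ × ℝ → ℝ) (m : ℤ × ℤ) (z : ℝ × ℝ) : ℝ × ℝ :=
  if m = 0 then (V, 0) else (m.2 * gg f m (ph m z), -(m.1 * gg f m (ph m z)))
def box (N : ℕ) : Finset (ℤ × ℤ) := Finset.Icc (-(N : ℤ)) N ×ˢ Finset.Icc (-(N : ℤ)) N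
def vN (N : ℕ) (f : ℝ × ℝ → ℝ) (z : ℝ × ℝ) : ℝ × ℝ :=
  (∑ m ∈ box N, m.2 * gg f m (ph m z), -∑ m ∈ box N, m.1 * gg f m (ph m z))
def uN (N : ℕ) (V : ℝ) (f : ℝ × ℝ → ℝ) (z : ℝ × ℝ) : ℝ × ℝ := (V, 0) + vN N f z
def cf (f : ℝ × ℝ → ℝ) (m : ℤ × ℤ) : ℂ := cA f m - Complex.I * cB f m

lemma mem_box (N : ℕ) (m : ℤ × ℤ) : m ∈ box N ↔ (-(N : ℤ) ≤ m.1 ∧ m.1 ≤ N) ∧ (-(N : ℤ) ≤ m.2 ∧ m.2 ≤ N) := by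
  simp [box, Finset.mem_product, Finset.mem_Icc]

lemma box_mono {K N : ℕ} (h : K ≤ N) : box K ⊆ box N := by
  intro m; rw [mem_box, mem_box]; omega

lemma zero_mem_box (N : ℕ) : (0 : ℤ × ℤ) ∈ box N := by rw [mem_box]; simp

lemma sum_Wm (N : ℕ) (V : ℝ) (f : ℝ × ℝ → ℝ) (z : ℝ × ℝ) : ∑ m ∈ box N, Wm V f m z = uN N V f z := by
  have h1 : ∀ m, Wm V f m z = (if m = 0 then (V, 0) else 0) +
      (m.2 * gg f m (ph m z), -(m.1 * gg f m (ph m z))) := by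
    intro m
    unfold Wm
    split_ifs with h
    · subst h; simp
    · simp
  simp only [h1, Finset.sum_add_distrib, Finset.sum_ite_eq', zero_mem_box, if_true]
  unfold uN vN
  congr 1
  ext <;> simp [Prod.fst_sum, Prod.snd_sum]

lemma cA_bar (f : ℝ × ℝ → ℝ) (j k : ℤ) : cA f (j, -k) = - cA f (j, k) := by
  unfold cA
  rw [← integral_neg]; congr 1; ext z; push_cast
  rw [neg_mul, sin_neg]; ring
lemma cB_bar (f : ℝ × ℝ → ℝ) (j k : ℤ) : cB f (j, -k) = - cB f (j, k) := by
  unfold cB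
  rw [← integral_neg]; congr 1; ext z; push_cast
  rw [neg_mul, sin_neg]; ring
lemma cA_neg (f : ℝ × ℝ → ℝ) (m : ℤ × ℤ) : cA f (-m) = - cA f m := by
  unfold cA
  rw [← integral_neg]; congr 1; ext z; simp only [Prod.fst_neg, Prod.snd_neg]; push_cast
  rw [neg_mul, neg_mul, sin_neg, cos_neg]; ring
lemma cB_neg (f : ℝ × ℝ → ℝ) (m : ℤ × ℤ) : cB f (-m) = cB f m := by
  unfold cB
  congr 1; ext z; simp only [Prod.fst_neg, Prod.snd_neg]; push_cast
  rw [neg_mul, neg_mul, sin_neg, sin_neg]; ring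
lemma lam_neg (m : ℤ × ℤ) : lam (-m) = lam m := by
  unfold lam; simp
lemma lam_bar (j k : ℤ) : lam (j, -k) = lam (j, k) := by
  unfold lam; simp
lemma lam_nonneg (m : ℤ × ℤ) : 0 ≤ lam m := by unfold lam; positivity
lemma cf_bar (f : ℝ × ℝ → ℝ) (j k : ℤ) : cf f (j, -k) = - cf f (j, k) := by
  unfold cf; rw [cA_bar, cB_bar]; push_cast; ring

/-- Reflection symmetry. -/
lemma Wm_refl (V : ℝ) (f : ℝ × ℝ → ℝ) (j k : ℤ) (x y : ℝ) :
    Wm V f (j, k) (x, -y) = ((Wm V f (j, -k) (x, y)).1, -(Wm V f (j, -k) (x, y)).2) := by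
  unfold Wm
  have e : ((j, -k) : ℤ × ℤ) = 0 ↔ ((j, k) : ℤ × ℤ) = 0 := by simp [Prod.ext_iff]
  simp only [e]
  split_ifs with h
  · simp
  · have hp : ph (j, k) (x, -y) = ph (j, -k) (x, y) := by unfold ph; push_cast; ring
    have hg : ∀ θ, gg f (j, -k) θ = - gg f (j, k) θ := by
      intro θ; unfold gg; rw [lam_bar, cA_bar, cB_bar]; ring
    simp only [hp, hg]
    push_cast
    ext <;> simp

lemma coef_bound {F : ℝ} {f : ℝ × ℝ → ℝ} (hf : Adm F f) (c : ℝ × ℝ → ℝ)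
    (hcb : ∀ z, |c z| ≤ 1) : |∫ z in Dom, f z * c z| ≤ 4 * π ^ 2 * F := by
  have := norm_integral_le_of_norm_le_const (μ := volume.restrict Dom) (f := fun z => f z * c z) (C := F) (by
    filter_upwards [hf.bdd] with z hz
    rw [norm_mul]
    calc ‖f z‖ * ‖c z‖ ≤ F * 1 := mul_le_mul hz (hcb z) (norm_nonneg _) hf.nonneg
      _ = F := mul_one _)
  rw [volr_Dom] at this
  rw [← norm_eq_abs]; linarith

lemma abs_mul_le_one {a b : ℝ} (ha : |a| ≤ 1) (hb : |b| ≤ 1) : |a * b| ≤ 1 := by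
  rw [abs_mul]; nlinarith [abs_nonneg a, abs_nonneg b]

lemma cA_bound {F : ℝ} {f : ℝ × ℝ → ℝ} (hf : Adm F f) (m) : |cA f m| ≤ 4 * π ^ 2 * F :=
  coef_bound hf _ fun _ => abs_mul_le_one (abs_cos_le_one _) (abs_sin_le_one _)
lemma cB_bound {F : ℝ} {f : ℝ × ℝ → ℝ} (hf : Adm F f) (m) : |cB f m| ≤ 4 * π ^ 2 * F :=
  coef_bound hf _ fun _ => abs_mul_le_one (abs_sin_le_one _) (abs_sin_le_one _)

lemma m_sq_pos {m : ℤ × ℤ} (h : m ≠ 0) : 1 ≤ (m.1 : ℝ) ^ 2 + (m.2 : ℝ) ^ 2 := by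
  have : 1 ≤ m.1 ^ 2 + m.2 ^ 2 := by
    have h' : ¬ (m.1 = 0 ∧ m.2 = 0) := by simpa [Prod.ext_iff] using h
    rcases not_and_or.1 h' with h1 | h1
    · have := pow_pos (abs_pos.2 h1) 2; rw [sq_abs] at this; nlinarith [sq_nonneg m.2]
    · have := pow_pos (abs_pos.2 h1) 2; rw [sq_abs] at this; nlinarith [sq_nonneg m.1]
  exact_mod_cast this

lemma gg_bound {F : ℝ} {f : ℝ × ℝ → ℝ} (hf : Adm F f) (m : ℤ × ℤ) (hm : m ≠ 0) (θ : ℝ) :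
    |gg f m θ| ≤ F / ((m.1 : ℝ) ^ 2 + (m.2 : ℝ) ^ 2) := by
  unfold gg
  have h1 : |cA f m * cos θ + cB f m * sin θ| ≤ 8 * π ^ 2 * F := by
    refine (abs_add_le _ _).trans ?_
    rw [abs_mul, abs_mul]
    have := mul_le_mul (cA_bound hf m) (abs_cos_le_one θ) (abs_nonneg _) (by have := hf.nonneg; positivity)
    have := mul_le_mul (cB_bound hf m) (abs_sin_le_one θ) (abs_nonneg _) (by have := hf.nonneg; positivity)
    linarith
  rw [abs_mul, abs_of_nonneg (by have := lam_nonneg m; positivity)]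
  calc lam m / 2 * _ ≤ lam m / 2 * (8 * π ^ 2 * F) := by
        have := lam_nonneg m
        gcongr
    _ = _ := by
        have := m_sq_pos hm
        unfold lam; field_simp; ring

lemma Wm_bound {F : ℝ} {f : ℝ × ℝ → ℝ} (hf : Adm F f) (V : ℝ) (m : ℤ × ℤ) (z : ℝ × ℝ) :
    ‖Wm V f m z‖ ≤ |V| + F := by
  have hF := hf.nonneg
  unfold Wm
  split_ifs with h
  · rw [Prod.norm_def]; simp [hF]
  · have h1 := gg_bound hf m h (ph m z)
    have h2 := m_sq_pos h
    have key : ∀ a : ℝ, |a| ≤ (m.1 : ℝ) ^ 2 + (m.2 : ℝ) ^ 2 → |a * gg f m (ph m z)| ≤ F := by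
      intro a ha
      rw [abs_mul]
      calc _ ≤ ((m.1 : ℝ) ^ 2 + (m.2 : ℝ) ^ 2) * (F / ((m.1 : ℝ) ^ 2 + (m.2 : ℝ) ^ 2)) := by gcongr
        _ = F := by field_simp
    have hi : ∀ a : ℤ, |(a : ℝ)| ≤ (a : ℝ) ^ 2 := by
      intro a
      have : |a| ≤ a ^ 2 := by
        rw [← sq_abs]; nlinarith [abs_nonneg a, Int.le_self_sq |a|]
      exact_mod_cast this
    rw [Prod.norm_def]
    simp only [norm_neg, norm_eq_abs]
    refine max_le ?_ ?_
    · exact (key _ ((hi _).trans (by nlinarith [sq_nonneg (m.1 : ℝ)]))).trans (by linarith [abs_nonneg V])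
    · exact (key _ ((hi _).trans (by nlinarith [sq_nonneg (m.2 : ℝ)]))).trans (by linarith [abs_nonneg V])

lemma gg_cont (f) (m : ℤ × ℤ) : Continuous (gg f m) := by unfold gg; fun_prop
lemma ph_cont (m : ℤ × ℤ) : Continuous (ph m) := by unfold ph; fun_prop
lemma vN_cont (N f) : Continuous (vN N f) := by
  unfold vN
  have h : ∀ m, Continuous (fun z => gg f m (ph m z)) := fun m => (gg_cont f m).comp (ph_cont m)
  refine Continuous.prodMk ?_ (Continuous.neg ?_)
  · exact continuous_finsetSum _ fun m _ => continuous_const.mul (h m)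
  · exact continuous_finsetSum _ fun m _ => continuous_const.mul (h m)
lemma uN_cont (N V f) : Continuous (uN N V f) := by
  unfold uN; exact continuous_const.add (vN_cont N f)
lemma Wm_cont (V f m) : Continuous (Wm V f m) := by
  unfold Wm
  have h : Continuous (fun z => gg f m (ph m z)) := (gg_cont f m).comp (ph_cont m)
  split_ifs <;> fun_prop

/-- the complex term of the Fourier series -/
lemma term_re (f : ℝ × ℝ → ℝ) (m : ℤ × ℤ) (z : ℝ × ℝ) (a : ℝ) :
    ((a * (lam m / 2) : ℝ) * cf f m * ee m z).re = a * gg f m (ph m z) := by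
  have e : ee m z = ((cos (ph m z) : ℝ) : ℂ) + ((sin (ph m z) : ℝ) : ℂ) * Complex.I := by
    unfold ee ph
    rw [show (Complex.I * ((m.1 : ℂ) * (z.1 : ℂ) + (m.2 : ℂ) * (z.2 : ℂ)))
      = ((m.1 * z.1 + m.2 * z.2 : ℝ) : ℂ) * Complex.I by push_cast; ring, Complex.exp_mul_I,
      ← Complex.ofReal_cos, ← Complex.ofReal_sin]
  rw [e]
  unfold cf gg
  simp only [Complex.mul_re, Complex.mul_im, Complex.add_re, Complex.add_im, Complex.sub_re, Complex.sub_im,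
    Complex.ofReal_re, Complex.ofReal_im, Complex.I_re, Complex.I_im]
  ring

lemma term_im_neg (f : ℝ × ℝ → ℝ) (m : ℤ × ℤ) (z : ℝ × ℝ) (a : ℝ) :
    ((-a * (lam (-m) / 2) : ℝ) * cf f (-m) * ee (-m) z).im = - ((a * (lam m / 2) : ℝ) * cf f m * ee m z).im := by
  have : ((-a * (lam (-m) / 2) : ℝ) * cf f (-m) * ee (-m) z) = (starRingEnd ℂ) ((a * (lam m / 2) : ℝ) * cf f m * ee m z) := by
    rw [map_mul, map_mul, ee_conj, Complex.conj_ofReal, lam_neg]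
    unfold cf
    rw [cA_neg, cB_neg]; simp; ring
  rw [this, Complex.conj_im]

lemma cplx_sum (N : ℕ) (f : ℝ × ℝ → ℝ) (z : ℝ × ℝ) (a : ℤ × ℤ → ℝ) (ha : ∀ m, a (-m) = - a m) :
    ∑ m ∈ box N, ((a m * (lam m / 2) : ℝ) * cf f m * ee m z : ℂ)
      = ((∑ m ∈ box N, a m * gg f m (ph m z) : ℝ) : ℂ) := by
  apply Complex.ext
  · rw [Complex.re_sum, Complex.ofReal_re]
    exact Finset.sum_congr rfl fun m _ => term_re f m z _
  · rw [Complex.im_sum, Complex.ofReal_im]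
    have h : ∑ m ∈ box N, ((a m * (lam m / 2) : ℝ) * cf f m * ee m z : ℂ).im
        = ∑ m ∈ box N, ((a (-m) * (lam (-m) / 2) : ℝ) * cf f (-m) * ee (-m) z : ℂ).im := by
      refine Finset.sum_nbij' (fun m => -m) (fun m => -m) ?_ ?_ ?_ ?_ ?_
      · intro m; simp only [mem_box, Prod.fst_neg, Prod.snd_neg]; omega
      · intro m; simp only [mem_box, Prod.fst_neg, Prod.snd_neg]; omega
      · intro m _; simp
      · intro m _; simp
      · intro m _; simp
    simp only [ha, term_im_neg, Finset.sum_neg_distrib] at h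
    linarith

lemma v1_cplx (N f z) : (((vN N f z).1 : ℝ) : ℂ) = ∑ m ∈ box N, (((m.2 : ℝ) * (lam m / 2) : ℝ) * cf f m) * ee m z := by
  rw [cplx_sum N f z (fun m => (m.2 : ℝ)) (by intro m; simp)]; rfl

lemma v2_cplx (N f z) : (((vN N f z).2 : ℝ) : ℂ) = ∑ m ∈ box N, ((-(m.1 : ℝ) * (lam m / 2) : ℝ) * cf f m) * ee m z := by
  rw [cplx_sum N f z (fun m => -(m.1 : ℝ)) (by intro m; simp)]
  simp [vN]

lemma cf_eq {F : ℝ} {f : ℝ × ℝ → ℝ} (hf : Adm F f) (m : ℤ × ℤ) :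
    cf f m = ∫ z in Dom, (f z : ℂ) * (Complex.exp (-(Complex.I * (m.1 : ℂ) * (z.1 : ℂ))) * (sin ((m.2 : ℝ) * z.2) : ℂ)) := by
  have h1 : Integrable (fun z : ℝ × ℝ => f z * (cos (m.1 * z.1) * sin (m.2 * z.2))) (volume.restrict Dom) := by
    apply hf.mul_int
    exact int_bdd (by fun_prop) 1 (fun z => abs_mul_le_one (abs_cos_le_one _) (abs_sin_le_one _))
  have h2 : Integrable (fun z : ℝ × ℝ => f z * (sin (m.1 * z.1) * sin (m.2 * z.2))) (volume.restrict Dom) := by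
    apply hf.mul_int
    exact int_bdd (by fun_prop) 1 (fun z => abs_mul_le_one (abs_sin_le_one _) (abs_sin_le_one _))
  unfold cf cA cB
  rw [← integral_complex_ofReal, ← integral_complex_ofReal, ← integral_const_mul,
    ← integral_sub h1.ofReal (h2.ofReal.const_mul _)]
  congr 1; ext z
  rw [show -(Complex.I * (m.1 : ℂ) * (z.1 : ℂ)) = ((-(m.1 * z.1) : ℝ) : ℂ) * Complex.I by push_cast; ring,
    Complex.exp_mul_I, ← Complex.ofReal_cos, ← Complex.ofReal_sin, cos_neg, sin_neg]
  push_cast; ring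

lemma fhat_eq {F : ℝ} {f : ℝ × ℝ → ℝ} (hf : Adm F f) (j : ℤ) (k : ℕ) :
    fhat f j k = cf f (j, (k : ℤ)) / (2 * π) := by
  rw [cf_eq hf, ← integral_div]
  unfold fhat
  congr 1; ext z; push_cast; ring

lemma cf_ee {F : ℝ} {f : ℝ × ℝ → ℝ} (hf : Adm F f) (j k : ℤ) :
    cf f (j, k) = ((∫ z in Dom, (f z : ℂ) * ee (-(j, -k)) z) - ∫ z in Dom, (f z : ℂ) * ee (-(j, k)) z) / (2 * Complex.I) := by
  have hi : ∀ m, Integrable (fun z => (f z : ℂ) * ee m z) (volume.restrict Dom) := fun m =>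
    hf.integrable.ofReal.mul_bdd (c := 1) (ee_cont m).aestronglyMeasurable
      (Filter.Eventually.of_forall fun z => (ee_norm m z).le)
  rw [cf_eq hf, ← integral_sub (hi _) (hi _), ← integral_div]
  congr 1; ext z
  obtain ⟨x, y⟩ := z
  rw [← mul_sub, mul_div_assoc]
  congr 1
  simp only [ee_split, Prod.fst_neg, Prod.snd_neg, Complex.ofReal_sin, Complex.sin, neg_neg]
  have hI : Complex.I ≠ 0 := Complex.I_ne_zero
  have hI2 : Complex.I ^ 2 = -1 := Complex.I_sq
  push_cast
  have e1 : Complex.exp (-(Complex.I * (j : ℂ) * (x : ℂ))) = Complex.exp (Complex.I * (-(j : ℂ) * (x : ℂ))) := by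
    congr 1; ring
  have e2 : Complex.exp (-((k : ℂ) * (y : ℂ)) * Complex.I) = Complex.exp (Complex.I * (-(k : ℂ) * (y : ℂ))) := by
    congr 1; ring
  have e3 : Complex.exp (((k : ℂ) * (y : ℂ)) * Complex.I) = Complex.exp (Complex.I * ((k : ℂ) * (y : ℂ))) := by
    congr 1; ring
  rw [e1, e2, e3]
  generalize Complex.exp (Complex.I * (-(j : ℂ) * (x : ℂ))) = A
  generalize Complex.exp (Complex.I * (-(k : ℂ) * (y : ℂ))) = B
  generalize Complex.exp (Complex.I * ((k : ℂ) * (y : ℂ))) = C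
  field_simp
  rw [hI2]; ring

lemma cf_bessel {F : ℝ} {f : ℝ × ℝ → ℝ} (hf : Adm F f) (s : Finset (ℤ × ℤ)) :
    ∑ m ∈ s, ‖cf f m‖ ^ 2 ≤ 16 * π ^ 4 * F ^ 2 := by
  have hL : MemLp (fun z => (f z : ℂ)) 2 (volume.restrict Dom) := hf.memLp.ofReal
  have hb := bessel _ hL s
  have hb' := bessel _ hL (s.image (fun m => (m.1, -m.2)))
  rw [Finset.sum_image (by
    intro a _ b _ h; simp only [Prod.mk.injEq, neg_inj] at h; exact Prod.ext h.1 h.2)] at hb'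
  have hI : ∫ z in Dom, ‖(f z : ℂ)‖ ^ 2 ≤ 4 * π ^ 2 * F ^ 2 := by
    have := integral_mono_ae (μ := volume.restrict Dom) (f := fun z => ‖(f z : ℂ)‖ ^ 2) (g := fun _ => F ^ 2)
      (hL.integrable_norm_pow (by norm_num)) (integrable_const _) (by
        filter_upwards [hf.bdd] with z hz
        rw [Complex.norm_real]
        exact pow_le_pow_left₀ (norm_nonneg _) hz 2)
    rwa [integral_const, volr_Dom, smul_eq_mul] at this
  have h1 : ∀ m : ℤ × ℤ, ‖cf f m‖ ^ 2 ≤ (‖∫ z in Dom, (f z : ℂ) * ee (-(m.1, -m.2)) z‖ ^ 2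
      + ‖∫ z in Dom, (f z : ℂ) * ee (-m) z‖ ^ 2) / 2 := by
    rintro ⟨j, k⟩
    rw [cf_ee hf, norm_div, div_pow]
    have := norm_sub_le (∫ z in Dom, (f z : ℂ) * ee (-(j, -k)) z) (∫ z in Dom, (f z : ℂ) * ee (-(j, k)) z)
    set a := ‖∫ z in Dom, (f z : ℂ) * ee (-(j, -k)) z‖
    set b := ‖∫ z in Dom, (f z : ℂ) * ee (-(j, k)) z‖
    simp only [Complex.norm_mul, Complex.norm_I, Complex.norm_ofNat, mul_one]
    have h0 := norm_nonneg ((∫ z in Dom, (f z : ℂ) * ee (-(j, -k)) z) - ∫ z in Dom, (f z : ℂ) * ee (-(j, k)) z)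
    nlinarith [sq_nonneg (a - b)]
  calc ∑ m ∈ s, ‖cf f m‖ ^ 2 ≤ ∑ m ∈ s, (‖∫ z in Dom, (f z : ℂ) * ee (-(m.1, -m.2)) z‖ ^ 2
      + ‖∫ z in Dom, (f z : ℂ) * ee (-m) z‖ ^ 2) / 2 := Finset.sum_le_sum fun m _ => h1 m
    _ ≤ 4 * π ^ 2 * ∫ z in Dom, ‖(f z : ℂ)‖ ^ 2 := by
      rw [← Finset.sum_div, Finset.sum_add_distrib]; linarith
    _ ≤ 4 * π ^ 2 * (4 * π ^ 2 * F ^ 2) := by gcongr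
    _ = _ := by ring

end BQG

namespace BQG

lemma tail_sq {F : ℝ} {f : ℝ × ℝ → ℝ} (hf : Adm F f) {K N : ℕ} (hKN : K ≤ N) :
    ∫ z in Dom, ‖(((vN N f z).1 - (vN K f z).1 : ℝ) : ℂ) + Complex.I * (((vN N f z).2 - (vN K f z).2 : ℝ) : ℂ)‖ ^ 2
      ≤ (π * F / (K + 1)) ^ 2 := by
  set c : ℤ × ℤ → ℂ := fun m => (((m.2 : ℝ) : ℂ) - Complex.I * ((m.1 : ℝ) : ℂ)) * ((lam m / 2 : ℝ) : ℂ) * cf f m with hc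
  have h1 : ∀ z, (((vN N f z).1 - (vN K f z).1 : ℝ) : ℂ) + Complex.I * (((vN N f z).2 - (vN K f z).2 : ℝ) : ℂ)
      = ∑ m ∈ box N \ box K, c m * ee m z := by
    intro z
    have hA : ∀ L, ((vN L f z).1 : ℂ) + Complex.I * ((vN L f z).2 : ℂ) = ∑ m ∈ box L, c m * ee m z := by
      intro L
      rw [v1_cplx, v2_cplx, Finset.mul_sum, ← Finset.sum_add_distrib]
      refine Finset.sum_congr rfl fun m _ => ?_
      rw [hc]; push_cast; ring
    have := Finset.sum_sdiff (f := fun m => c m * ee m z) (box_mono hKN)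
    rw [← hA, ← hA] at this
    push_cast
    linear_combination -this
  simp only [h1]
  rw [parseval_fin]
  have hK : (0 : ℝ) < (K : ℝ) + 1 := by positivity
  have h2 : ∀ m ∈ box N \ box K, ‖c m‖ ^ 2 ≤ 1 / (64 * π ^ 4 * ((K : ℝ) + 1) ^ 2) * ‖cf f m‖ ^ 2 := by
    intro m hm
    have hm' : ((K : ℝ) + 1) ^ 2 ≤ (m.1 : ℝ) ^ 2 + (m.2 : ℝ) ^ 2 := by
      have hm2 := (Finset.mem_sdiff.1 hm).2
      rw [mem_box] at hm2
      have : ((K : ℤ) + 1) ^ 2 ≤ m.1 ^ 2 + m.2 ^ 2 := by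
        have h4 : (K : ℤ) + 1 ≤ |m.1| ∨ (K : ℤ) + 1 ≤ |m.2| := by
          rw [le_abs, le_abs]; omega
        rcases h4 with h4 | h4
        · have := pow_le_pow_left₀ (by positivity) h4 2
          rw [sq_abs] at this; nlinarith [sq_nonneg m.2]
        · have := pow_le_pow_left₀ (by positivity) h4 2
          rw [sq_abs] at this; nlinarith [sq_nonneg m.1]
      exact_mod_cast this
    have h5 : ‖((m.2 : ℝ) : ℂ) - Complex.I * ((m.1 : ℝ) : ℂ)‖ ^ 2 = (m.1 : ℝ) ^ 2 + (m.2 : ℝ) ^ 2 := by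
      rw [← Complex.normSq_eq_norm_sq, Complex.normSq_apply]
      simp; ring
    rw [hc]
    simp only [norm_mul, mul_pow, h5]
    gcongr
    rw [Complex.norm_real, norm_eq_abs, sq_abs]
    unfold lam
    set r := (m.1 : ℝ) ^ 2 + (m.2 : ℝ) ^ 2
    have hr : 0 < r := lt_of_lt_of_le (by positivity) hm'
    rw [show r * (1 / (4 * π ^ 2 * r) / 2) ^ 2 = 1 / (64 * π ^ 4 * r) by field_simp; ring]
    gcongr
  calc 4 * π ^ 2 * ∑ m ∈ box N \ box K, ‖c m‖ ^ 2
      ≤ 4 * π ^ 2 * ∑ m ∈ box N \ box K, 1 / (64 * π ^ 4 * ((K : ℝ) + 1) ^ 2) * ‖cf f m‖ ^ 2 := by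
        gcongr with m hm; exact h2 m hm
    _ = 4 * π ^ 2 * (1 / (64 * π ^ 4 * ((K : ℝ) + 1) ^ 2)) * ∑ m ∈ box N \ box K, ‖cf f m‖ ^ 2 := by
        rw [← Finset.mul_sum]; ring
    _ ≤ 4 * π ^ 2 * (1 / (64 * π ^ 4 * ((K : ℝ) + 1) ^ 2)) * (16 * π ^ 4 * F ^ 2) := by
        gcongr; exact cf_bessel hf _
    _ = _ := by field_simp; norm_num

lemma cplx_norm_ge (a b : ℝ) : ‖((a, b) : ℝ × ℝ)‖ ≤ ‖(a : ℂ) + Complex.I * (b : ℂ)‖ := by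
  rw [Prod.norm_def]
  refine max_le ?_ ?_
  · have := Complex.abs_re_le_norm ((a : ℂ) + Complex.I * (b : ℂ)); simpa using this
  · have := Complex.abs_im_le_norm ((a : ℂ) + Complex.I * (b : ℂ)); simpa using this

lemma cont_memLp {E : Type*} [NormedAddCommGroup E] [SecondCountableTopology E] [MeasurableSpace E] [BorelSpace E] {g : ℝ × ℝ → E}
    (hg : Continuous g) (p : ENNReal) : MemLp g p (volume.restrict Dom) := by
  obtain ⟨C, hC⟩ := (isCompact_Icc (a := ((-π, -π) : ℝ × ℝ)) (b := (π, π))).exists_bound_of_continuousOn hg.continuousOn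
  refine MemLp.of_bound hg.measurable.aestronglyMeasurable C ?_
  refine ae_restrict_of_forall_mem measurableSet_Dom fun z hz => hC z ?_
  simp only [Dom, mem_prod, mem_Ioc] at hz
  exact ⟨⟨hz.1.1.le, hz.2.1.le⟩, ⟨hz.1.2, hz.2.2⟩⟩

lemma tail_eLp {F : ℝ} {f : ℝ × ℝ → ℝ} (hf : Adm F f) {K N : ℕ} (hKN : K ≤ N) :
    eLpNorm (fun z => vN N f z - vN K f z) 2 (volume.restrict Dom) ≤ ENNReal.ofReal (π * F / (K + 1)) := by
  set w : ℝ × ℝ → ℂ := fun z => (((vN N f z).1 - (vN K f z).1 : ℝ) : ℂ) + Complex.I * (((vN N f z).2 - (vN K f z).2 : ℝ) : ℂ) with hw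
  have hwc : Continuous w := by
    have h1 := vN_cont N f
    have h2 := vN_cont K f
    exact (Complex.continuous_ofReal.comp ((continuous_fst.comp h1).sub (continuous_fst.comp h2))).add
      (continuous_const.mul (Complex.continuous_ofReal.comp ((continuous_snd.comp h1).sub (continuous_snd.comp h2))))
  have h1 : eLpNorm (fun z => vN N f z - vN K f z) 2 (volume.restrict Dom) ≤ eLpNorm w 2 (volume.restrict Dom) :=
    eLpNorm_mono fun z => cplx_norm_ge _ _
  refine h1.trans ?_
  have hm : MemLp w 2 (volume.restrict Dom) := cont_memLp hwc 2
  rw [hm.eLpNorm_eq_integral_rpow_norm (by norm_num) (by norm_num)]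
  have hF := hf.nonneg
  apply ENNReal.ofReal_le_ofReal
  have := tail_sq hf hKN
  simp only [ENNReal.toReal_ofNat, rpow_two]
  rw [show (2 : ℝ)⁻¹ = 1 / 2 by norm_num, ← sqrt_eq_rpow]
  exact (sqrt_le_left (by positivity)).2 this

/-- The limiting velocity. -/
def vv (f : ℝ × ℝ → ℝ) (z : ℝ × ℝ) : ℝ × ℝ := Filter.limUnder Filter.atTop (fun l : ℕ => vN (2 ^ l) f z)

lemma vv_ae {F : ℝ} {f : ℝ × ℝ → ℝ} (hf : Adm F f) : ∀ᵐ z ∂(volume.restrict Dom),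
    Filter.Tendsto (fun l : ℕ => vN (2 ^ l) f z) Filter.atTop (nhds (vv f z)) := by
  have hF := hf.nonneg
  have h1 := Lp.ae_tendsto_of_cauchy_eLpNorm (μ := volume.restrict Dom) (p := 2) (f := fun l : ℕ => vN (2 ^ l) f)
    (fun n => (vN_cont _ _).aestronglyMeasurable) (by norm_num)
    (B := fun l => ENNReal.ofReal ((π * F + 1) * (1 / 2) ^ l)) (by
      rw [← ENNReal.ofReal_tsum_of_nonneg]
      · exact ENNReal.ofReal_ne_top
      · intro n; positivity
      · exact Summable.mul_left _ (summable_geometric_of_lt_one (by norm_num) (by norm_num))) (by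
      intro N n m hn hm
      have key : ∀ a b : ℕ, N ≤ a → a ≤ b → eLpNorm (fun z => vN (2 ^ b) f z - vN (2 ^ a) f z) 2 (volume.restrict Dom)
          < ENNReal.ofReal ((π * F + 1) * (1 / 2) ^ N) := by
        intro a b hNa hab
        refine (tail_eLp hf (pow_le_pow_right₀ (by norm_num) hab)).trans_lt ?_
        apply ENNReal.ofReal_lt_ofReal_iff (by positivity) |>.2
        have hp : (2 : ℝ) ^ N ≤ 2 ^ a := pow_le_pow_right₀ (by norm_num) hNa
        have hp0 : (0 : ℝ) < 2 ^ N := by positivity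
        push_cast
        rw [one_div, inv_pow, ← div_eq_mul_inv, div_lt_div_iff₀ (by positivity) (by positivity)]
        have : π * F * 2 ^ N ≤ π * F * 2 ^ a := by gcongr
        nlinarith [mul_nonneg pi_pos.le hF]
      rcases le_total m n with h | h
      · exact key m n hm h
      · rw [eLpNorm_sub_comm]; exact key n m hn h)
  filter_upwards [h1] with z hz
  exact tendsto_nhds_limUnder hz

lemma vv_aesm {F : ℝ} {f : ℝ × ℝ → ℝ} (hf : Adm F f) : AEStronglyMeasurable (vv f) (volume.restrict Dom) :=
  aestronglyMeasurable_of_tendsto_ae _ (fun l => (vN_cont (2 ^ l) f).aestronglyMeasurable) (vv_ae hf)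

lemma vv_tail {F : ℝ} {f : ℝ × ℝ → ℝ} (hf : Adm F f) (K : ℕ) :
    eLpNorm (fun z => vv f z - vN K f z) 2 (volume.restrict Dom) ≤ ENNReal.ofReal (π * F / (K + 1)) := by
  refine (Lp.eLpNorm_lim_le_liminf_eLpNorm (μ := volume.restrict Dom) (p := 2)
    (f := fun l z => vN (2 ^ l) f z - vN K f z) (fun l => ((vN_cont _ f).sub (vN_cont K f)).aestronglyMeasurable)
    (fun z => vv f z - vN K f z) ?_).trans ?_
  · filter_upwards [vv_ae hf] with z hz
    exact hz.sub_const _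
  · refine Filter.liminf_le_of_frequently_le' (Filter.Eventually.frequently ?_)
    filter_upwards [Filter.eventually_ge_atTop K] with l hl
    exact tail_eLp hf (hl.trans Nat.lt_two_pow_self.le)

lemma vv_memLp {F : ℝ} {f : ℝ × ℝ → ℝ} (hf : Adm F f) : MemLp (vv f) 2 (volume.restrict Dom) := by
  have h1 : MemLp (fun z => vv f z - vN 0 f z) 2 (volume.restrict Dom) :=
    ⟨(vv_aesm hf).sub (vN_cont 0 f).aestronglyMeasurable, (vv_tail hf 0).trans_lt ENNReal.ofReal_lt_top⟩
  have h2 := h1.add (cont_memLp (vN_cont 0 f) 2)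
  refine h2.ae_eq (Filter.Eventually.of_forall fun z => ?_)
  simp

lemma L1_of_L2 {E : Type*} [NormedAddCommGroup E] {g : ℝ × ℝ → E} (hg : AEStronglyMeasurable g (volume.restrict Dom)) {A : ℝ} (hA : 0 ≤ A)
    (h : eLpNorm g 2 (volume.restrict Dom) ≤ ENNReal.ofReal A) :
    ∫ z in Dom, ‖g z‖ ≤ 2 * π * A := by
  have hm : MemLp g 2 (volume.restrict Dom) := ⟨hg, h.trans_lt ENNReal.ofReal_lt_top⟩
  have h1 := sq_int_le (volume.restrict Dom) (fun z => ‖g z‖) (hm.integrable (by norm_num)).norm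
    (hm.integrable_norm_pow (by norm_num))
  rw [hm.eLpNorm_eq_integral_rpow_norm (by norm_num) (by norm_num)] at h
  have h2 := (ENNReal.ofReal_le_ofReal_iff hA).1 h
  simp only [ENNReal.toReal_ofNat, rpow_two] at h2
  rw [show (2 : ℝ)⁻¹ = 1 / 2 by norm_num, ← sqrt_eq_rpow] at h2
  have h3 := (Real.sqrt_le_left hA).1 h2
  rw [volr_Dom] at h1
  have : (∫ z in Dom, ‖g z‖) ^ 2 ≤ (2 * π * A) ^ 2 := by
    refine h1.trans ?_
    calc 4 * π ^ 2 * ∫ z in Dom, ‖g z‖ ^ 2 ≤ 4 * π ^ 2 * A ^ 2 := by gcongr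
      _ = _ := by ring
  exact (sq_le_sq₀ (integral_nonneg fun _ => norm_nonneg _) (by positivity)).1 this

lemma tail_L1 {F : ℝ} {f : ℝ × ℝ → ℝ} (hf : Adm F f) {K N : ℕ} (hKN : K ≤ N) :
    ∫ z in Dom, ‖vN N f z - vN K f z‖ ≤ 2 * π * (π * F / (K + 1)) :=
  L1_of_L2 ((vN_cont _ f).sub (vN_cont K f)).aestronglyMeasurable (by have := hf.nonneg; positivity) (tail_eLp hf hKN)

lemma vv_tail_L1 {F : ℝ} {f : ℝ × ℝ → ℝ} (hf : Adm F f) (K : ℕ) :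
    ∫ z in Dom, ‖vv f z - vN K f z‖ ≤ 2 * π * (π * F / (K + 1)) :=
  L1_of_L2 ((vv_aesm hf).sub (vN_cont K f).aestronglyMeasurable) (by have := hf.nonneg; positivity) (vv_tail hf K)

lemma vN_zero (f z) : vN 0 f z = 0 := by
  have : box 0 = {0} := by ext m; rw [mem_box, Finset.mem_singleton, Prod.ext_iff]; simp; omega
  unfold vN; rw [this]; simp

lemma vN_L1 {F : ℝ} {f : ℝ × ℝ → ℝ} (hf : Adm F f) (N : ℕ) :
    ∫ z in Dom, ‖vN N f z‖ ≤ 2 * π * (π * F) := by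
  have := tail_L1 hf (Nat.zero_le N)
  simpa [vN_zero] using this

lemma vv_L1 {F : ℝ} {f : ℝ × ℝ → ℝ} (hf : Adm F f) :
    ∫ z in Dom, ‖vv f z‖ ≤ 2 * π * (π * F) := by
  have := vv_tail_L1 hf 0
  simpa [vN_zero] using this

/-- Fourier integrals -/
def EE (g : ℝ × ℝ → ℝ) (n : ℤ × ℤ) : ℂ := ∫ z in Dom, (g z : ℂ) * ee n z

lemma EE_integrable {g : ℝ × ℝ → ℝ} (hg : Integrable g (volume.restrict Dom)) (n) :
    Integrable (fun z => (g z : ℂ) * ee n z) (volume.restrict Dom) :=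
  hg.ofReal.mul_bdd (c := 1) (ee_cont n).aestronglyMeasurable
      (Filter.Eventually.of_forall fun z => (ee_norm n z).le)

lemma EE_sub {g g' : ℝ × ℝ → ℝ} (hg : Integrable g (volume.restrict Dom)) (hg' : Integrable g' (volume.restrict Dom)) (n) :
    ‖EE g n - EE g' n‖ ≤ ∫ z in Dom, |g z - g' z| := by
  unfold EE
  rw [← integral_sub (EE_integrable hg n) (EE_integrable hg' n)]
  refine (norm_integral_le_integral_norm _).trans (le_of_eq ?_)
  congr 1; ext z
  rw [← sub_mul, norm_mul, ee_norm, mul_one, ← Complex.ofReal_sub, Complex.norm_real, norm_eq_abs]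

lemma chat_EE {g : ℝ × ℝ → ℝ} (hg : Integrable g (volume.restrict Dom)) (j : ℤ) (k : ℕ) :
    chat g j k = (EE g (-j, k) + EE g (-j, -k)) / (4 * π) := by
  unfold EE chat
  rw [← integral_add (EE_integrable hg _) (EE_integrable hg _), ← integral_div]
  congr 1; ext z
  obtain ⟨x, y⟩ := z
  have hp : (π : ℂ) ≠ 0 := by exact_mod_cast pi_ne_zero
  simp only [ee_split, Complex.ofReal_cos, Complex.cos]
  push_cast
  have e1 : Complex.exp (-(Complex.I * (j : ℂ) * (x : ℂ))) = Complex.exp (Complex.I * (-(j : ℂ) * (x : ℂ))) := by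
    congr 1; ring
  have e2 : Complex.exp (-((k : ℂ) * (y : ℂ)) * Complex.I) = Complex.exp (Complex.I * (-(k : ℂ) * (y : ℂ))) := by
    congr 1; ring
  have e3 : Complex.exp (((k : ℂ) * (y : ℂ)) * Complex.I) = Complex.exp (Complex.I * ((k : ℂ) * (y : ℂ))) := by
    congr 1; ring
  rw [e1, e2, e3]
  field_simp
  ring

lemma fhat_EE {g : ℝ × ℝ → ℝ} (hg : Integrable g (volume.restrict Dom)) (j : ℤ) (k : ℕ) :
    fhat g j k = (EE g (-j, k) - EE g (-j, -k)) / (4 * π * Complex.I) := by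
  unfold EE fhat
  rw [← integral_sub (EE_integrable hg _) (EE_integrable hg _), ← integral_div]
  congr 1; ext z
  obtain ⟨x, y⟩ := z
  have hp : (π : ℂ) ≠ 0 := by exact_mod_cast pi_ne_zero
  have hI : Complex.I ≠ 0 := Complex.I_ne_zero
  have hI2 : Complex.I ^ 2 = -1 := Complex.I_sq
  simp only [ee_split, Complex.ofReal_sin, Complex.sin]
  push_cast
  have e1 : Complex.exp (-(Complex.I * (j : ℂ) * (x : ℂ))) = Complex.exp (Complex.I * (-(j : ℂ) * (x : ℂ))) := by
    congr 1; ring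
  have e2 : Complex.exp (-((k : ℂ) * (y : ℂ)) * Complex.I) = Complex.exp (Complex.I * (-(k : ℂ) * (y : ℂ))) := by
    congr 1; ring
  have e3 : Complex.exp (((k : ℂ) * (y : ℂ)) * Complex.I) = Complex.exp (Complex.I * ((k : ℂ) * (y : ℂ))) := by
    congr 1; ring
  rw [e1, e2, e3]
  generalize Complex.exp (Complex.I * (-(j : ℂ) * (x : ℂ))) = A
  generalize Complex.exp (Complex.I * (-(k : ℂ) * (y : ℂ))) = B
  generalize Complex.exp (Complex.I * ((k : ℂ) * (y : ℂ))) = C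
  field_simp
  rw [hI2]; ring

lemma sum_ee_int (s : Finset (ℤ × ℤ)) (c : ℤ × ℤ → ℂ) (n : ℤ × ℤ) (hn : -n ∈ s) :
    ∫ z in Dom, (∑ m ∈ s, c m * ee m z) * ee n z = 4 * π ^ 2 * c (-n) := by
  simp only [Finset.sum_mul, mul_assoc, ee_mul]
  rw [integral_finsetSum _ (fun m _ => (ee_integrable _).const_mul _)]
  simp only [integral_const_mul, ee_int]
  rw [Finset.sum_eq_single (-n)]
  · simp; ring
  · intro m _ hm
    have : m + n ≠ 0 := fun h => hm (eq_neg_of_add_eq_zero_left h)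
    simp [this]
  · exact fun h => absurd hn h

lemma mem_box_self (n : ℤ × ℤ) {N : ℕ} (h : n.1.natAbs + n.2.natAbs ≤ N) : -n ∈ box N := by
  rw [mem_box]; simp only [Prod.fst_neg, Prod.snd_neg]; omega

lemma vv_int {F : ℝ} {f : ℝ × ℝ → ℝ} (hf : Adm F f) : Integrable (vv f) (volume.restrict Dom) :=
  (vv_memLp hf).integrable (by norm_num)

lemma eq_of_tail {a b : ℂ} {C : ℝ} {N₀ : ℕ} (h : ∀ N ≥ N₀, ‖a - b‖ ≤ C / ((N : ℝ) + 1)) : a = b := by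
  have h1 : Filter.Tendsto (fun N : ℕ => C / ((N : ℝ) + 1)) Filter.atTop (nhds 0) := by
    simpa [Function.comp_def] using (tendsto_const_div_atTop_nhds_zero_nat C).comp (Filter.tendsto_add_atTop_nat 1)
  have : ‖a - b‖ ≤ 0 := ge_of_tendsto h1 (Filter.eventually_atTop.2 ⟨N₀, h⟩)
  exact sub_eq_zero.1 (norm_le_zero_iff.1 this)

lemma EE_vv1 {F : ℝ} {f : ℝ × ℝ → ℝ} (hf : Adm F f) (n : ℤ × ℤ) :
    EE (fun z => (vv f z).1) n = 4 * π ^ 2 * ((((-n).2 : ℝ) * (lam (-n) / 2) : ℝ) * cf f (-n)) := by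
  apply eq_of_tail (C := 2 * π * (π * F)) (N₀ := n.1.natAbs + n.2.natAbs)
  intro N hN
  have h2 : EE (fun z => (vN N f z).1) n = 4 * π ^ 2 * ((((-n).2 : ℝ) * (lam (-n) / 2) : ℝ) * cf f (-n)) := by
    unfold EE; simp only [v1_cplx]; exact sum_ee_int _ _ n (mem_box_self n hN)
  rw [← h2]
  have hc := ((cont_memLp (vN_cont N f) 1).integrable le_rfl)
  refine (EE_sub (vv_int hf).fst hc.fst n).trans ?_
  refine (integral_mono ((vv_int hf).fst.sub hc.fst).abs ((vv_int hf).sub hc).norm (fun z => norm_fst_le (vv f z - vN N f z))).trans ?_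
  refine (vv_tail_L1 hf N).trans (le_of_eq (by ring))

lemma EE_vv2 {F : ℝ} {f : ℝ × ℝ → ℝ} (hf : Adm F f) (n : ℤ × ℤ) :
    EE (fun z => (vv f z).2) n = 4 * π ^ 2 * ((-((-n).1 : ℝ) * (lam (-n) / 2) : ℝ) * cf f (-n)) := by
  apply eq_of_tail (C := 2 * π * (π * F)) (N₀ := n.1.natAbs + n.2.natAbs)
  intro N hN
  have h2 : EE (fun z => (vN N f z).2) n = 4 * π ^ 2 * ((-((-n).1 : ℝ) * (lam (-n) / 2) : ℝ) * cf f (-n)) := by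
    unfold EE; simp only [v2_cplx]; exact sum_ee_int _ _ n (mem_box_self n hN)
  rw [← h2]
  have hc := ((cont_memLp (vN_cont N f) 1).integrable le_rfl)
  refine (EE_sub (vv_int hf).snd hc.snd n).trans ?_
  refine (integral_mono ((vv_int hf).snd.sub hc.snd).abs ((vv_int hf).sub hc).norm (fun z => norm_snd_le (vv f z - vN N f z))).trans ?_
  refine (vv_tail_L1 hf N).trans (le_of_eq (by ring))

lemma EE_const (V : ℝ) (n : ℤ × ℤ) : EE (fun _ => V) n = if n = 0 then (V * (4 * π ^ 2) : ℂ) else 0 := by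
  unfold EE; rw [integral_const_mul, ee_int]; split_ifs <;> simp

end BQG

namespace BQG

set_option maxHeartbeats 400000 in
lemma isVelocity_vv {F : ℝ} {f : ℝ × ℝ → ℝ} (hf : Adm F f) (V : ℝ) :
    IsVelocity f V (fun z => (V, 0) + vv f z) := by
  have i1 := (vv_int hf).fst
  have i2 := (vv_int hf).snd
  have ic : Integrable (fun _ : ℝ × ℝ => V) (volume.restrict Dom) := integrable_const _
  have hp : (π : ℂ) ≠ 0 := by exact_mod_cast pi_ne_zero
  have hI : Complex.I ≠ 0 := Complex.I_ne_zero
  have hI2 : Complex.I ^ 2 = -1 := Complex.I_sq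
  have e1 : ∀ n, EE (fun z => ((V, 0) + vv f z).1) n = EE (fun _ => V) n + EE (fun z => (vv f z).1) n := by
    intro n
    unfold EE
    rw [← integral_add (EE_integrable ic n) (EE_integrable i1 n)]
    congr 1; ext z; simp; ring
  have e2 : ∀ n, EE (fun z => ((V, 0) + vv f z).2) n = EE (fun z => (vv f z).2) n := by
    intro n
    unfold EE; simp
  have I1 : Integrable (fun z => ((V, 0) + vv f z).1) (volume.restrict Dom) := by
    simpa using ic.add i1
  have I2 : Integrable (fun z => ((V, 0) + vv f z).2) (volume.restrict Dom) := by
    simpa using i2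
  have hcond : ∀ (j : ℤ) (k : ℕ), (((-j, (k : ℤ)) : ℤ × ℤ) = 0 ↔ (j = 0 ∧ k = 0)) ∧ (((-j, -(k : ℤ)) : ℤ × ℤ) = 0 ↔ (j = 0 ∧ k = 0)) := by
    intro j k; simp [Prod.ext_iff]
  have hMem : MemLp (fun z => (V, 0) + vv f z) 2 (volume.restrict Dom) := by
    exact (memLp_const ((V, 0) : ℝ × ℝ)).add (vv_memLp hf)
  refine ⟨hMem, ?_, ?_, ?_, ?_⟩
  · intro j k
    rw [chat_EE I1, e1, e1, EE_const, EE_const, EE_vv1 hf, EE_vv1 hf]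
    simp only [(hcond j k).1, (hcond j k).2, Prod.neg_mk, neg_neg]
    rw [cf_bar, lam_bar]
    unfold invLapCoeff
    rw [fhat_eq hf]
    have hA : (if j = 0 ∧ k = 0 then ((V : ℂ) * (4 * π ^ 2)) else 0) = 2 * π * (if j = 0 ∧ k = 0 then (2 * π * V : ℂ) else 0) := by
      split_ifs <;> ring
    rw [hA]
    have hB : (if 1 ≤ k then - (-(cf f (j, (k : ℤ)) / (2 * π)) / ((j : ℂ) ^ 2 + (k : ℂ) ^ 2)) * (k : ℂ) / 2 else 0)
        = - (-(cf f (j, (k : ℤ)) / (2 * π)) / ((j : ℂ) ^ 2 + (k : ℂ) ^ 2)) * (k : ℂ) / 2 := by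
      split_ifs with h
      · rfl
      · have : k = 0 := by omega
        subst this; simp
    rw [hB]
    unfold lam
    push_cast
    generalize (if j = 0 ∧ k = 0 then (2 * π * V : ℂ) else 0) = X
    rw [one_div, mul_inv]
    generalize cf f (j, (k : ℤ)) = c
    simp only [div_eq_mul_inv, mul_inv]
    generalize ((j : ℂ) ^ 2 + (k : ℂ) ^ 2)⁻¹ = r
    field_simp
    ring
  · intro j k hk
    rw [fhat_EE I1, e1, e1, EE_const, EE_const, EE_vv1 hf, EE_vv1 hf]
    simp only [(hcond j k).1, (hcond j k).2, Prod.neg_mk, neg_neg]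
    rw [cf_bar, lam_bar]
    push_cast; ring
  · intro j k hk
    rw [fhat_EE I2, e2, e2, EE_vv2 hf, EE_vv2 hf]
    simp only [Prod.neg_mk, neg_neg]
    rw [cf_bar, lam_bar]
    unfold invLapCoeff
    rw [fhat_eq hf]
    unfold lam
    push_cast
    rw [one_div, mul_inv]
    generalize cf f (j, (k : ℤ)) = c
    simp only [div_eq_mul_inv, mul_inv]
    generalize ((j : ℂ) ^ 2 + (k : ℂ) ^ 2)⁻¹ = r
    field_simp
    rw [hI2]
    ring
  · intro j k
    rw [chat_EE I2, e2, e2, EE_vv2 hf, EE_vv2 hf]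
    simp only [Prod.neg_mk, neg_neg]
    rw [cf_bar, lam_bar]
    push_cast; ring

end BQG

namespace BQG

/-- pointwise well-behaved vorticities -/
structure Good (M : ℝ) (q : ℝ × ℝ → ℝ) : Prop where
  meas : Measurable q
  bdd : ∀ z, |q z| ≤ M
  perx : ∀ x y, q (x + 2 * π, y) = q (x, y)
  pery : ∀ x y, q (x, y + 2 * π) = q (x, y)
  odd : ∀ x y, q (x, -y) = - q (x, y)

def ff (h : ℝ × ℝ → ℝ) (β : ℝ) (q : ℝ × ℝ → ℝ) (z : ℝ × ℝ) : ℝ := q z - h z - β * z.2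

def PP (N : ℕ) (τ V : ℝ) (f q : ℝ × ℝ → ℝ) (z : ℝ × ℝ) : ℝ :=
  (1 / ((box N).card : ℝ)) * ∑ m ∈ box N, q (z - (((box N).card : ℝ) * τ) • Wm V f m z)

lemma card_pos (N : ℕ) : (0 : ℝ) < (box N).card := by
  have : 0 < (box N).card := Finset.card_pos.2 ⟨0, zero_mem_box N⟩
  exact_mod_cast this

lemma gg_per (f m) : Function.Periodic (gg f m) (2 * π) := by
  intro θ; unfold gg; rw [cos_add_two_pi, sin_add_two_pi]

lemma Wm_perx (V f m) (x y : ℝ) : Wm V f m (x + 2 * π, y) = Wm V f m (x, y) := by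
  unfold Wm
  have : gg f m (ph m (x + 2 * π, y)) = gg f m (ph m (x, y)) := by
    have h1 : ph m (x + 2 * π, y) = ph m (x, y) + m.1 * (2 * π) := by unfold ph; simp; ring
    rw [h1]; exact (gg_per f m).int_mul m.1 _
  rw [this]

lemma Wm_pery (V f m) (x y : ℝ) : Wm V f m (x, y + 2 * π) = Wm V f m (x, y) := by
  unfold Wm
  have : gg f m (ph m (x, y + 2 * π)) = gg f m (ph m (x, y)) := by
    have h1 : ph m (x, y + 2 * π) = ph m (x, y) + m.2 * (2 * π) := by unfold ph; simp; ring
    rw [h1]; exact (gg_per f m).int_mul m.2 _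
  rw [this]

lemma sub_cont (V f m) (a : ℝ) : Continuous fun z : ℝ × ℝ => z - a • Wm V f m z := by
  have := Wm_cont V f m
  exact continuous_id.sub (this.const_smul a)

lemma add_cont (V f m) (a : ℝ) : Continuous fun z : ℝ × ℝ => z + a • Wm V f m z := by
  have := Wm_cont V f m
  exact continuous_id.add (this.const_smul a)

lemma Good.subx {M : ℝ} {q : ℝ × ℝ → ℝ} (hq : Good M q) (x y a : ℝ) (w : ℝ × ℝ) :
    q ((x + 2 * π, y) - a • w) = q ((x, y) - a • w) := by
  have := hq.perx (x - a * w.1) (y - a * w.2)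
  rw [show ((x, y) : ℝ × ℝ) - a • w = (x - a * w.1, y - a * w.2) by ext <;> simp, ← this]
  congr 1
  ext
  · simp; ring
  · simp

lemma Good.suby {M : ℝ} {q : ℝ × ℝ → ℝ} (hq : Good M q) (x y a : ℝ) (w : ℝ × ℝ) :
    q ((x, y + 2 * π) - a • w) = q ((x, y) - a • w) := by
  have := hq.pery (x - a * w.1) (y - a * w.2)
  rw [show ((x, y) : ℝ × ℝ) - a • w = (x - a * w.1, y - a * w.2) by ext <;> simp, ← this]
  congr 1
  ext
  · simp
  · simp; ring

lemma PP_good {M : ℝ} {q : ℝ × ℝ → ℝ} (hq : Good M q) (N : ℕ) (τ V : ℝ) (f : ℝ × ℝ → ℝ) : Good M (PP N τ V f q) := by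
  have hK := card_pos N
  constructor
  · unfold PP
    refine Measurable.const_mul (Finset.measurable_sum _ fun m _ => hq.meas.comp ?_) _
    exact (sub_cont V f m _).measurable
  · intro z
    unfold PP
    rw [abs_mul, abs_of_pos (by positivity)]
    calc _ ≤ 1 / ((box N).card : ℝ) * ∑ m ∈ box N, M := by
          gcongr
          exact (Finset.abs_sum_le_sum_abs _ _).trans (Finset.sum_le_sum fun m _ => hq.bdd _)
      _ = M := by rw [Finset.sum_const, nsmul_eq_mul]; field_simp
  · intro x y
    unfold PP
    congr 1
    refine Finset.sum_congr rfl fun m _ => ?_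
    rw [Wm_perx, hq.subx]
  · intro x y
    unfold PP
    congr 1
    refine Finset.sum_congr rfl fun m _ => ?_
    rw [Wm_pery, hq.suby]
  · intro x y
    unfold PP
    rw [← mul_neg, ← Finset.sum_neg_distrib]
    congr 1
    refine Finset.sum_nbij' (fun m => (m.1, -m.2)) (fun m => (m.1, -m.2)) ?_ ?_ ?_ ?_ ?_
    · intro m; simp only [mem_box]; omega
    · intro m; simp only [mem_box]; omega
    · intro m _; simp
    · intro m _; simp
    · rintro ⟨j, k⟩ _
      rw [Wm_refl, ← hq.odd]
      congr 1
      ext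
      · simp
      · simp; ring

lemma gg_k0 (f : ℝ × ℝ → ℝ) (j : ℤ) (θ : ℝ) : gg f (j, 0) θ = 0 := by
  unfold gg cA cB; simp

lemma per_bdd {φ : ℝ × ℝ → ℝ} (hc : Continuous φ) (hx : ∀ x y, φ (x + 2 * π, y) = φ (x, y))
    (hy : ∀ x y, φ (x, y + 2 * π) = φ (x, y)) : ∃ C, ∀ z, |φ z| ≤ C := by
  obtain ⟨C, hC⟩ := (isCompact_Icc (a := ((0, 0) : ℝ × ℝ)) (b := (2 * π, 2 * π))).exists_bound_of_continuousOn hc.continuousOn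
  refine ⟨C, fun z => ?_⟩
  obtain ⟨x, y⟩ := z
  obtain ⟨x', hx', ex⟩ := Function.Periodic.exists_mem_Ico₀ (f := fun x => φ (x, y)) (c := 2 * π) (fun x => hx x y) (by positivity) x
  obtain ⟨y', hy', ey⟩ := Function.Periodic.exists_mem_Ico₀ (f := fun y => φ (x', y)) (c := 2 * π) (fun y => hy x' y) (by positivity) y
  refine le_of_eq_of_le (congrArg abs (ex.trans ey)) ?_
  exact hC _ ⟨⟨hx'.1, hy'.1⟩, ⟨hx'.2.le, hy'.2.le⟩⟩

lemma transport {M : ℝ} {q : ℝ × ℝ → ℝ} (hq : Good M q) {φ : ℝ × ℝ → ℝ} (hc : Continuous φ)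
    (hx : ∀ x y, φ (x + 2 * π, y) = φ (x, y)) (hy : ∀ x y, φ (x, y + 2 * π) = φ (x, y))
    (V : ℝ) (f : ℝ × ℝ → ℝ) (m : ℤ × ℤ) (a : ℝ) :
    ∫ z in Dom, φ z * q (z - a • Wm V f m z) = ∫ z in Dom, φ (z + a • Wm V f m z) * q z := by
  obtain ⟨C, hC⟩ := per_bdd hc hx hy
  set Fn : ℝ × ℝ → ℝ := fun z => φ z * q (z - a • Wm V f m z) with hF
  have hFm : Measurable Fn := hc.measurable.mul (hq.meas.comp (sub_cont V f m a).measurable)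
  have hFb : ∀ z, |Fn z| ≤ C * M := fun z => by
    rw [hF]; simp only [abs_mul]
    exact mul_le_mul (hC z) (hq.bdd _) (abs_nonneg _) ((abs_nonneg _).trans (hC z))
  have hFx : ∀ x y, Fn (x + 2 * π, y) = Fn (x, y) := fun x y => by
    simp only [hF]
    rw [hx, Wm_perx, hq.subx]
  have hFy : ∀ x y, Fn (x, y + 2 * π) = Fn (x, y) := fun x y => by
    simp only [hF]
    rw [hy, Wm_pery, hq.suby]
  by_cases h0 : m = 0
  · have := shear_inv Fn hFm (C * M) hFb hFx hFy 0 1 one_ne_zero (fun _ => a * V) measurable_const (fun _ => rfl)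
    rw [← this]
    congr 1; ext z
    simp only [hF, Wm, h0, if_true]
    congr 2
    · ext <;> simp
    · ext <;> simp
  · obtain ⟨j, k⟩ := m
    by_cases hk : k = 0
    · subst hk
      have hW : ∀ z, Wm V f (j, 0) z = 0 := by
        intro z; unfold Wm; rw [if_neg h0, gg_k0]; simp
      simp [hF, hW]
    · have := shear_inv Fn hFm (C * M) hFb hFx hFy j k hk (fun θ => a * gg f (j, k) θ)
        ((gg_cont f (j, k)).measurable.const_mul a) (fun θ => by simp only [gg_per f (j, k) θ])
      rw [← this]
      congr 1; ext z
      obtain ⟨x, y⟩ := z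
      simp only [hF, Wm, if_neg h0]
      have e : ph (j, k) (x + k * (a * gg f (j, k) (j * x + k * y)), y - j * (a * gg f (j, k) (j * x + k * y))) = ph (j, k) (x, y) := by
        unfold ph; simp; ring
      rw [e]
      have e2 : (j * x + k * y : ℝ) = ph (j, k) (x, y) := rfl
      rw [e2]
      congr 2
      · ext <;> simp <;> ring
      · ext <;> simp <;> ring

lemma Good.mul_int {M : ℝ} {q : ℝ × ℝ → ℝ} (hq : Good M q) {g : ℝ × ℝ → ℝ}
    (hg : Integrable g (volume.restrict Dom)) : Integrable (fun z => g z * q z) (volume.restrict Dom) :=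
  hg.mul_bdd (c := M) hq.meas.aestronglyMeasurable (Filter.Eventually.of_forall hq.bdd)

lemma cont_int {g : ℝ × ℝ → ℝ} (hg : Continuous g) : Integrable g (volume.restrict Dom) :=
  (cont_memLp hg 1).integrable le_rfl

/-- Smooth periodic test functions with derivative locally Lipschitz. -/
structure Test (T L : ℝ) (φ : ℝ × ℝ × ℝ → ℝ) : Prop where
  c1 : ContDiff ℝ 1 φ
  perx : ∀ t x y : ℝ, φ (t, x + 2 * π, y) = φ (t, x, y)
  pery : ∀ t x y : ℝ, φ (t, x, y + 2 * π) = φ (t, x, y)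
  bdd0 : ∀ t ∈ Icc (0 : ℝ) T, ∀ z, |φ (t, z)| ≤ L
  bdd1 : ∀ t ∈ Icc (0 : ℝ) T, ∀ z, ‖fderiv ℝ φ (t, z)‖ ≤ L
  lip : ∀ t ∈ Icc (0 : ℝ) T, ∀ z ∈ Dom, ∀ p, ‖p - (t, z)‖ ≤ 1 → ‖fderiv ℝ φ p - fderiv ℝ φ (t, z)‖ ≤ L * ‖p - (t, z)‖

def GG (φ : ℝ × ℝ × ℝ → ℝ) (u : ℝ × ℝ → ℝ × ℝ) (q : ℝ × ℝ → ℝ) (s : ℝ) : ℝ :=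
  ∫ z in Dom, (fderiv ℝ φ (s, z) (1, 0, 0) + fderiv ℝ φ (s, z) (0, u z)) * q z

lemma fd_add (φ : ℝ × ℝ × ℝ → ℝ) (p) (u : ℝ × ℝ) : fderiv ℝ φ p (1, 0, 0) + fderiv ℝ φ p (0, u) = fderiv ℝ φ p (1, u) := by
  rw [← map_add]; congr 1; ext <;> simp

lemma fd_cont {φ : ℝ × ℝ × ℝ → ℝ} (hφ : ContDiff ℝ 1 φ) (s : ℝ) {u : ℝ × ℝ → ℝ × ℝ} (hu : Continuous u) :
    Continuous (fun z => fderiv ℝ φ (s, z) (1, u z)) := by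
  have h1 := hφ.continuous_fderiv one_ne_zero
  exact (h1.comp (by fun_prop : Continuous fun z : ℝ × ℝ => (s, z))).clm_apply (by fun_prop)

lemma uN_bound {F : ℝ} {f : ℝ × ℝ → ℝ} (hf : Adm F f) (N : ℕ) (V : ℝ) (z) : ‖uN N V f z‖ ≤ (box N).card * (|V| + F) := by
  rw [← sum_Wm]
  refine (norm_sum_le _ _).trans ((Finset.sum_le_sum fun m _ => Wm_bound hf V m z).trans ?_)
  rw [Finset.sum_const, nsmul_eq_mul]

lemma step {T L M F V C : ℝ} {φ : ℝ × ℝ × ℝ → ℝ} (hφ : Test T L φ) {q f : ℝ × ℝ → ℝ} (hq : Good M q) (hM : 0 ≤ M)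
    (hL : 0 ≤ L)
    (hf : Adm F f) (hV : |V| + F ≤ C) (N : ℕ) {t τ : ℝ} (ht : t ∈ Icc 0 T) (hτ : 0 ≤ τ)
    (hs : τ * (1 + (box N).card * C) ≤ 1) :
    |(∫ z in Dom, φ (t + τ, z) * PP N τ V f q z) - (∫ z in Dom, φ (t, z) * q z) - τ * GG φ (uN N V f) q t|
      ≤ 4 * π ^ 2 * (M * (L * (τ * (1 + (box N).card * C)) ^ 2)) := by
  set K : ℝ := ((box N).card : ℝ) with hKd
  have hK : 0 < K := card_pos N
  have hC : 0 ≤ C := (add_nonneg (abs_nonneg V) hf.nonneg).trans hV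
  have hcφ : ∀ s : ℝ, Continuous fun z : ℝ × ℝ => φ (s, z) := fun s => hφ.c1.continuous.comp (by fun_prop)
  have hcA : ∀ m, Continuous fun z : ℝ × ℝ => φ (t + τ, z + (K * τ) • Wm V f m z) := fun m =>
    (hcφ (t + τ)).comp (add_cont V f m _)
  have e1 : ∫ z in Dom, φ (t + τ, z) * PP N τ V f q z
      = ∫ z in Dom, ((1 / K) * ∑ m ∈ box N, φ (t + τ, z + (K * τ) • Wm V f m z)) * q z := by
    have a1 : ∫ z in Dom, φ (t + τ, z) * PP N τ V f q z
        = ∫ z in Dom, (1 / K) * ∑ m ∈ box N, φ (t + τ, z) * q (z - (K * τ) • Wm V f m z) := by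
      congr 1; ext z; unfold PP; rw [Finset.mul_sum, Finset.mul_sum, Finset.mul_sum]
      refine Finset.sum_congr rfl fun m _ => by ring
    have a2 : ∀ m, Integrable (fun z => φ (t + τ, z) * q (z - (K * τ) • Wm V f m z)) (volume.restrict Dom) := fun m =>
      (cont_int (hcφ _)).mul_bdd (c := M) (hq.meas.comp (sub_cont V f m _).measurable).aestronglyMeasurable
        (Filter.Eventually.of_forall fun z => hq.bdd _)
    rw [a1, integral_const_mul, integral_finsetSum _ (fun m _ => a2 m)]
    simp only [transport hq (hcφ (t + τ)) (hφ.perx _) (hφ.pery _)]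
    rw [← integral_finsetSum _ (fun m _ => hq.mul_int (cont_int (hcA m))), ← integral_const_mul]
    congr 1; ext z; rw [← Finset.sum_mul, mul_assoc]
  have hcu := fd_cont hφ.c1 t (uN_cont N V f)
  have hcS : Continuous fun z : ℝ × ℝ => (1 / K) * ∑ m ∈ box N, φ (t + τ, z + (K * τ) • Wm V f m z) :=
    continuous_const.mul (continuous_finsetSum _ fun m _ => hcA m)
  have hi_1 := hq.mul_int (cont_int hcS)
  have hi_2 := hq.mul_int (cont_int (hcφ t))
  have hi_3 := hq.mul_int (cont_int hcu)
  unfold GG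
  simp only [fd_add]
  have hi_4 : Integrable (fun z => (1 / K * ∑ m ∈ box N, φ (t + τ, z + (K * τ) • Wm V f m z)) * q z - φ (t, z) * q z)
    (volume.restrict Dom) := hi_1.sub hi_2
  rw [e1, ← integral_const_mul, ← integral_sub hi_1 hi_2, ← integral_sub hi_4 (hi_3.const_mul τ)]
  have key : ∀ z ∈ Dom, ‖(1 / K * ∑ m ∈ box N, φ (t + τ, z + (K * τ) • Wm V f m z)) * q z - φ (t, z) * q z
      - τ * (fderiv ℝ φ (t, z) (1, uN N V f z) * q z)‖ ≤ M * (L * (τ * (1 + K * C)) ^ 2) := by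
    intro z hz
    have f1 : τ * fderiv ℝ φ (t, z) (1, uN N V f z) = 1 / K * ∑ m ∈ box N, fderiv ℝ φ (t, z) (τ, (K * τ) • Wm V f m z) := by
      rw [← map_sum, ← sum_Wm, ← smul_eq_mul, ← smul_eq_mul, ← map_smul, ← map_smul]
      congr 1
      ext
      · simp [Prod.fst_sum, ← hKd]; field_simp
      · simp [Prod.snd_sum, Prod.fst_sum, ← Finset.mul_sum]; field_simp
      · simp [Prod.snd_sum, ← Finset.mul_sum]; field_simp
    have f2 : φ (t, z) = 1 / K * ∑ m ∈ box N, φ (t, z) := by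
      rw [Finset.sum_const, nsmul_eq_mul, ← hKd]; field_simp
    have f3 : ∀ m, |φ (t + τ, z + (K * τ) • Wm V f m z) - φ (t, z) - fderiv ℝ φ (t, z) (τ, (K * τ) • Wm V f m z)|
        ≤ L * (τ * (1 + K * C)) ^ 2 := by
      intro m
      set d : ℝ × ℝ × ℝ := (τ, (K * τ) • Wm V f m z) with hd
      have hdn : ‖d‖ ≤ τ * (1 + K * C) := by
        rw [hd, Prod.norm_def]
        refine max_le ?_ ?_
        · simp only [norm_eq_abs, abs_of_nonneg hτ]; nlinarith [mul_nonneg hτ (mul_nonneg hK.le hC)]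
        · simp only [norm_smul, norm_eq_abs, abs_of_nonneg (mul_nonneg hK.le hτ)]
          have := (Wm_bound hf V m z).trans hV
          nlinarith [mul_le_mul_of_nonneg_left this (mul_nonneg hK.le hτ)]
      have hseg : ∀ p ∈ segment ℝ ((t, z) : ℝ × ℝ × ℝ) ((t, z) + d), ‖p - (t, z)‖ ≤ ‖d‖ := by
        intro p hp
        have := norm_sub_le_of_mem_segment hp
        simpa using this
      have := (convex_segment ((t, z) : ℝ × ℝ × ℝ) ((t, z) + d)).norm_image_sub_le_of_norm_fderiv_le' (𝕜 := ℝ)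
        (f := φ) (φ := fderiv ℝ φ (t, z)) (C := L * ‖d‖)
        (fun p _ => (hφ.c1.differentiable one_ne_zero) p)
        (fun p hp => (hφ.lip t ht z hz p ((hseg p hp).trans (hdn.trans hs))).trans (by gcongr; exact hseg p hp))
        (left_mem_segment ℝ _ _) (right_mem_segment ℝ _ _)
      rw [add_sub_cancel_left] at this
      have e3 : ((t, z) : ℝ × ℝ × ℝ) + d = (t + τ, z + (K * τ) • Wm V f m z) := by rw [hd]; rfl
      rw [e3, norm_eq_abs] at this
      refine this.trans ?_
      rw [mul_assoc, ← sq]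
      gcongr
    have f4 : (1 / K * ∑ m ∈ box N, φ (t + τ, z + (K * τ) • Wm V f m z)) * q z - φ (t, z) * q z
      - τ * (fderiv ℝ φ (t, z) (1, uN N V f z) * q z)
      = q z * (1 / K * ∑ m ∈ box N, (φ (t + τ, z + (K * τ) • Wm V f m z) - φ (t, z) - fderiv ℝ φ (t, z) (τ, (K * τ) • Wm V f m z))) := by
      rw [Finset.sum_sub_distrib, Finset.sum_sub_distrib, mul_sub (1 / K), mul_sub (1 / K), ← f1, ← f2]; ring
    rw [f4, norm_mul]
    refine mul_le_mul (hq.bdd z) ?_ (norm_nonneg _) hM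
    rw [norm_mul, norm_eq_abs, abs_of_pos (one_div_pos.2 hK)]
    calc _ ≤ 1 / K * ∑ m ∈ box N, L * (τ * (1 + K * C)) ^ 2 := by
          refine mul_le_mul_of_nonneg_left ?_ (one_div_pos.2 hK).le
          exact (norm_sum_le _ _).trans (Finset.sum_le_sum fun m _ => f3 m)
      _ = _ := by rw [Finset.sum_const, nsmul_eq_mul, ← hKd, one_div, inv_mul_cancel_left₀ hK.ne']
  have := norm_integral_le_of_norm_le_const (μ := volume.restrict Dom) (ae_restrict_of_forall_mem measurableSet_Dom key)
  rw [volr_Dom] at this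
  exact this.trans (le_of_eq (mul_comm _ _))

end BQG

namespace BQG

lemma floor_eq_of {τ s : ℝ} (hτ : 0 < τ) {i : ℕ} (h1 : i * τ ≤ s) (h2 : s < (i + 1) * τ) : ⌊s / τ⌋₊ = i := by
  rw [Nat.floor_eq_iff (by have : 0 ≤ (i : ℝ) * τ := by positivity
                           have := this.trans h1; positivity)]
  constructor
  · rwa [le_div_iff₀ hτ]
  · rwa [div_lt_iff₀ hτ]

lemma floor_piece {τ : ℝ} (hτ : 0 < τ) (g : ℕ → ℝ → ℝ) (i : ℕ)
    (hc : ContinuousOn (g i) (Icc (i * τ) ((i + 1) * τ))) :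
    IntervalIntegrable (fun s => g ⌊s / τ⌋₊ s) volume (i * τ) ((i + 1) * τ) ∧
    ∫ s in (i * τ)..((i + 1) * τ), g ⌊s / τ⌋₊ s = ∫ s in (i * τ)..((i + 1) * τ), g i s := by
  have hle : (i : ℝ) * τ ≤ (i + 1) * τ := by nlinarith
  have hi : IntervalIntegrable (g i) volume (i * τ) ((i + 1) * τ) := by
    apply ContinuousOn.intervalIntegrable; rwa [uIcc_of_le hle]
  have hae : ∀ᵐ s : ℝ, s ∈ uIoc (i * τ) ((i + 1) * τ) → g i s = g ⌊s / τ⌋₊ s := by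
    have h0 : ∀ᵐ s : ℝ, s ≠ (i + 1) * τ := by
      simp [ae_iff]
    filter_upwards [h0] with s hs hs'
    rw [uIoc_of_le hle] at hs'
    rw [floor_eq_of hτ hs'.1.le (lt_of_le_of_ne hs'.2 hs)]
  refine ⟨hi.congr_ae ?_, (intervalIntegral.integral_congr_ae hae).symm⟩
  exact (ae_restrict_iff' measurableSet_uIoc).2 hae

lemma floor_sum {τ : ℝ} (hτ : 0 < τ) (g : ℕ → ℝ → ℝ) (n : ℕ)
    (hc : ∀ i < n, ContinuousOn (g i) (Icc (i * τ) ((i + 1) * τ))) :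
    IntervalIntegrable (fun s => g ⌊s / τ⌋₊ s) volume 0 (n * τ) ∧
    ∫ s in (0 : ℝ)..(n * τ), g ⌊s / τ⌋₊ s = ∑ i ∈ Finset.range n, ∫ s in (i * τ)..((i + 1) * τ), g i s := by
  induction n with
  | zero => simp
  | succ n ih =>
    obtain ⟨h1, h2⟩ := ih fun i hi => hc i (by omega)
    obtain ⟨h3, h4⟩ := floor_piece hτ g n (hc n (by omega))
    push_cast
    refine ⟨h1.trans h3, ?_⟩
    rw [← intervalIntegral.integral_add_adjacent_intervals h1 h3, h2, h4, Finset.sum_range_succ]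

def St (h : ℝ × ℝ → ℝ) (β : ℝ) (N : ℕ) (τ V₀ : ℝ) (q₀ : ℝ × ℝ → ℝ) : ℕ → ℝ × (ℝ × ℝ → ℝ)
  | 0 => (V₀, q₀)
  | i + 1 => ((St h β N τ V₀ q₀ i).1 + τ * ((∫ z in Dom, h z * (uN N (St h β N τ V₀ q₀ i).1 (ff h β (St h β N τ V₀ q₀ i).2) z).2) / (4 * π ^ 2)),
      PP N τ (St h β N τ V₀ q₀ i).1 (ff h β (St h β N τ V₀ q₀ i).2) (St h β N τ V₀ q₀ i).2)

lemma ff_adm' {H M β : ℝ} {h q : ℝ × ℝ → ℝ} (hh : Adm H h) (hq : Adm M q) : Adm (M + H + |β| * π) (ff h β q) := by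
  constructor
  · exact (hq.meas.sub hh.meas).sub (measurable_snd.const_mul β)
  · filter_upwards [hh.bdd, hq.bdd, ae_restrict_mem measurableSet_Dom] with z h1 h2 h3
    unfold ff
    have h4 : |β * z.2| ≤ |β| * π := by
      rw [abs_mul]; gcongr; rw [abs_le]; exact ⟨h3.2.1.le, h3.2.2⟩
    calc _ ≤ |q z - h z| + |β * z.2| := abs_sub _ _
      _ ≤ (|q z| + |h z|) + |β * z.2| := by gcongr; exact abs_sub _ _
      _ ≤ _ := by linarith

lemma Good.adm {M : ℝ} {q : ℝ × ℝ → ℝ} (hq : Good M q) : Adm M q := ⟨hq.meas, Filter.Eventually.of_forall hq.bdd⟩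

lemma hmean_bound {H F : ℝ} {h : ℝ × ℝ → ℝ} (hh : Adm H h) {w : ℝ × ℝ → ℝ × ℝ} (hw : Integrable w (volume.restrict Dom))
    (hb : ∫ z in Dom, ‖w z‖ ≤ 2 * π * (π * F)) : |(∫ z in Dom, h z * (w z).2) / (4 * π ^ 2)| ≤ H * F := by
  have hH := hh.nonneg
  have h1 : |∫ z in Dom, h z * (w z).2| ≤ H * (2 * π * (π * F)) := by
    rw [← norm_eq_abs]
    refine (norm_integral_le_integral_norm _).trans ?_
    calc ∫ z in Dom, ‖h z * (w z).2‖ ≤ ∫ z in Dom, H * ‖w z‖ := by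
          refine integral_mono_ae (hh.mul_int hw.snd).norm (hw.norm.const_mul H) ?_
          filter_upwards [hh.bdd] with z hz
          rw [norm_mul]
          exact mul_le_mul hz (norm_snd_le _) (norm_nonneg _) hH
      _ = H * ∫ z in Dom, ‖w z‖ := integral_const_mul _ _
      _ ≤ _ := by gcongr
  have hF : 0 ≤ 2 * π * (π * F) := (integral_nonneg fun _ => norm_nonneg _).trans hb
  have hF' : 0 ≤ F := by
    by_contra hc; push Not at hc
    have : 2 * π * (π * F) < 0 := by
      have := pi_pos; have : π * F < 0 := mul_neg_of_pos_of_neg this hc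
      nlinarith
    linarith
  rw [abs_div, abs_of_pos (by positivity : 0 < 4 * π ^ 2), div_le_iff₀ (by positivity)]
  refine h1.trans ?_
  have : 0 ≤ H * F * π ^ 2 := by positivity
  nlinarith

lemma uN_snd (N V f z) : (uN N V f z).2 = (vN N f z).2 := by simp [uN]

lemma vN_int (N f) : Integrable (vN N f) (volume.restrict Dom) := (cont_memLp (vN_cont N f) 1).integrable le_rfl

section
variable {H M β V₀ τ : ℝ} {h q₀ : ℝ × ℝ → ℝ}

lemma St_good (hq : Good M q₀) (N : ℕ) (i : ℕ) :
    Good M (St h β N τ V₀ q₀ i).2 := by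
  induction i with
  | zero => exact hq
  | succ i ih => exact PP_good ih _ _ _ _

lemma St_rate (hh : Adm H h) (hq : Good M q₀) (N : ℕ) (i : ℕ) :
    |(∫ z in Dom, h z * (uN N (St h β N τ V₀ q₀ i).1 (ff h β (St h β N τ V₀ q₀ i).2) z).2) / (4 * π ^ 2)| ≤ H * (M + H + |β| * π) := by
  simp only [uN_snd]
  exact hmean_bound hh (vN_int _ _) (vN_L1 (ff_adm' hh (St_good hq N i).adm) N)

lemma St_V (hh : Adm H h) (hq : Good M q₀) (hτ : 0 ≤ τ) (N : ℕ) (i j : ℕ) :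
    |(St h β N τ V₀ q₀ (i + j)).1 - (St h β N τ V₀ q₀ i).1| ≤ j * τ * (H * (M + H + |β| * π)) := by
  induction j with
  | zero => simp
  | succ j ih =>
    rw [← add_assoc]
    have e : (St h β N τ V₀ q₀ (i + j + 1)).1 = (St h β N τ V₀ q₀ (i + j)).1 + τ * ((∫ z in Dom, h z * (uN N (St h β N τ V₀ q₀ (i + j)).1 (ff h β (St h β N τ V₀ q₀ (i + j)).2) z).2) / (4 * π ^ 2)) := rfl
    rw [e]
    have h1 := St_rate (β := β) (V₀ := V₀) (τ := τ) hh hq N (i + j)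
    set r := (∫ z in Dom, h z * (uN N (St h β N τ V₀ q₀ (i + j)).1 (ff h β (St h β N τ V₀ q₀ (i + j)).2) z).2) / (4 * π ^ 2)
    have h2 : |τ * r| ≤ τ * (H * (M + H + |β| * π)) := by
      rw [abs_mul, abs_of_nonneg hτ]; gcongr
    push_cast
    calc _ = |((St h β N τ V₀ q₀ (i + j)).1 - (St h β N τ V₀ q₀ i).1) + τ * r| := by congr 1; ring
      _ ≤ _ := abs_add_le _ _
      _ ≤ _ := add_le_add ih h2
      _ = _ := by ring
end

lemma uN_L1 {F : ℝ} {f : ℝ × ℝ → ℝ} (hf : Adm F f) (N : ℕ) (V : ℝ) :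
    ∫ z in Dom, (1 + ‖uN N V f z‖) ≤ 4 * π ^ 2 * (1 + |V| + F) := by
  have h1 : ∫ z in Dom, (1 + ‖uN N V f z‖) ≤ ∫ z in Dom, ((1 + |V|) + ‖vN N f z‖) := by
    refine integral_mono ((integrable_const _).add (cont_int (uN_cont N V f).norm)) ((integrable_const _).add (vN_int N f).norm) ?_
    intro z
    simp only
    have : ‖uN N V f z‖ ≤ ‖((V, 0) : ℝ × ℝ)‖ + ‖vN N f z‖ := norm_add_le _ _
    have h2 : ‖((V, 0) : ℝ × ℝ)‖ = |V| := by rw [Prod.norm_def]; simp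
    linarith
  refine h1.trans ?_
  rw [integral_add (integrable_const _) (vN_int N f).norm, integral_const, volr_Dom, smul_eq_mul]
  have := vN_L1 hf N
  have := hf.nonneg
  nlinarith [mul_nonneg (sq_nonneg π) this]

lemma GG_diff {M L : ℝ} {q : ℝ × ℝ → ℝ} (hq : Adm M q) {u : ℝ × ℝ → ℝ × ℝ} (hu : Integrable u (volume.restrict Dom))
    {A B : ℝ × ℝ → (ℝ × ℝ × ℝ →L[ℝ] ℝ)} (hA : Continuous A) (hB : Continuous B)
    (hAB : ∀ z ∈ Dom, ‖A z - B z‖ ≤ L) (hM : 0 ≤ M) (hL : 0 ≤ L) :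
    |(∫ z in Dom, A z (1, u z) * q z) - ∫ z in Dom, B z (1, u z) * q z| ≤ L * M * ∫ z in Dom, (1 + ‖u z‖) := by
  have hm : ∀ A : ℝ × ℝ → (ℝ × ℝ × ℝ →L[ℝ] ℝ), Continuous A → Integrable (fun z => A z (1, u z) * q z) (volume.restrict Dom) := by
    intro A hA
    obtain ⟨C, hC⟩ := (isCompact_Icc (a := ((-π, -π) : ℝ × ℝ)) (b := (π, π))).exists_bound_of_continuousOn hA.continuousOn
    have hc : Continuous fun p : (ℝ × ℝ × ℝ →L[ℝ] ℝ) × (ℝ × ℝ × ℝ) => p.1 p.2 := by fun_prop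
    have hI : Integrable (fun z => A z (1, u z)) (volume.restrict Dom) := by
      refine Integrable.mono' (g := fun z => C * (1 + ‖u z‖)) (((integrable_const _).add hu.norm).const_mul C) ?_ ?_
      · exact hc.comp_aestronglyMeasurable (hA.aestronglyMeasurable.prodMk (aestronglyMeasurable_const.prodMk hu.aestronglyMeasurable))
      · refine ae_restrict_of_forall_mem measurableSet_Dom fun z hz => ?_
        have hz' : z ∈ Icc ((-π, -π) : ℝ × ℝ) (π, π) := by
          simp only [Dom, mem_prod, mem_Ioc] at hz
          exact ⟨⟨hz.1.1.le, hz.2.1.le⟩, ⟨hz.1.2, hz.2.2⟩⟩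
        refine ((A z).le_opNorm _).trans ?_
        have h0 := norm_nonneg (A z)
        refine mul_le_mul (hC z hz') ?_ (norm_nonneg _) (h0.trans (hC z hz'))
        rw [Prod.norm_def]; simp only [norm_one]
        exact max_le (by linarith [norm_nonneg (u z)]) (by linarith)
    exact hI.mul_bdd (c := M) hq.meas.aestronglyMeasurable hq.bdd
  rw [← integral_sub (hm A hA) (hm B hB), ← norm_eq_abs]
  refine (norm_integral_le_integral_norm _).trans ?_
  rw [← integral_const_mul]
  refine integral_mono_ae ((hm A hA).sub (hm B hB)).norm (((integrable_const _).add hu.norm).const_mul _) ?_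
  filter_upwards [hq.bdd, ae_restrict_mem measurableSet_Dom] with z hz hzD
  rw [← sub_mul, norm_mul, ← sub_apply]
  have h1 : ‖(A z - B z) (1, u z)‖ ≤ L * (1 + ‖u z‖) := by
    refine ((A z - B z).le_opNorm _).trans ?_
    refine mul_le_mul (hAB z hzD) ?_ (norm_nonneg _) hL
    rw [Prod.norm_def]; simp only [norm_one]
    exact max_le (by linarith [norm_nonneg (u z)]) (by linarith)
  calc _ ≤ L * (1 + ‖u z‖) * M := mul_le_mul h1 hz (abs_nonneg _) (by positivity)
    _ = _ := by ring

end BQG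

namespace BQG

lemma Good.nonneg {M : ℝ} {q : ℝ × ℝ → ℝ} (hq : Good M q) : 0 ≤ M := (abs_nonneg _).trans (hq.bdd 0)

lemma fder_cont {φ : ℝ × ℝ × ℝ → ℝ} (hφ : ContDiff ℝ 1 φ) (s : ℝ) : Continuous fun z : ℝ × ℝ => fderiv ℝ φ (s, z) :=
  (hφ.continuous_fderiv one_ne_zero).comp (by fun_prop)

lemma GG_eq (φ : ℝ × ℝ × ℝ → ℝ) (u q s) : GG φ u q s = ∫ z in Dom, fderiv ℝ φ (s, z) (1, u z) * q z := by
  unfold GG; simp only [fd_add]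

lemma GG_lip {T L M : ℝ} {φ : ℝ × ℝ × ℝ → ℝ} (hφ : Test T L φ) (hL : 0 ≤ L) {q : ℝ × ℝ → ℝ} (hq : Adm M q)
    {u : ℝ × ℝ → ℝ × ℝ} (hu : Integrable u (volume.restrict Dom)) {B : ℝ} (hB : ∫ z in Dom, (1 + ‖u z‖) ≤ B)
    {t s : ℝ} (ht : t ∈ Icc 0 T) (hs : |s - t| ≤ 1) : |GG φ u q s - GG φ u q t| ≤ L * M * B * |s - t| := by
  have hM := hq.nonneg
  rw [GG_eq, GG_eq]
  have h1 := GG_diff hq hu (fder_cont hφ.c1 s) (fder_cont hφ.c1 t) (L := L * |s - t|) (fun z hz => by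
    have e : ‖((s, z) : ℝ × ℝ × ℝ) - (t, z)‖ = |s - t| := by simp [Prod.norm_def]
    have := hφ.lip t ht z hz (s, z) (by rw [e]; exact hs)
    rwa [e] at this) hM (by positivity)
  refine h1.trans ?_
  calc L * |s - t| * M * ∫ z in Dom, (1 + ‖u z‖) ≤ L * |s - t| * M * B := by gcongr
    _ = _ := by ring

lemma GG_bd {L M : ℝ} {φ : ℝ × ℝ × ℝ → ℝ} (hc : ContDiff ℝ 1 φ) {t : ℝ} (hφ : ∀ z ∈ Dom, ‖fderiv ℝ φ (t, z)‖ ≤ L) (hL : 0 ≤ L)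
    {q : ℝ × ℝ → ℝ} (hq : Adm M q)
    {u : ℝ × ℝ → ℝ × ℝ} (hu : Integrable u (volume.restrict Dom)) {B : ℝ} (hB : ∫ z in Dom, (1 + ‖u z‖) ≤ B) :
    |GG φ u q t| ≤ L * M * B := by
  have hM := hq.nonneg
  rw [GG_eq]
  have h1 := GG_diff hq hu (fder_cont hc t) (continuous_const (y := (0 : ℝ × ℝ × ℝ →L[ℝ] ℝ))) (L := L) (fun z hz => by
    rw [sub_zero]; exact hφ z hz) hM hL
  simp only [zero_apply, zero_mul, integral_zero, sub_zero] at h1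
  exact h1.trans (by gcongr)

lemma GG_cont {T L M : ℝ} {φ : ℝ × ℝ × ℝ → ℝ} (hφ : Test T L φ) (hL : 0 ≤ L) {q : ℝ × ℝ → ℝ} (hq : Adm M q)
    {u : ℝ × ℝ → ℝ × ℝ} (hu : Integrable u (volume.restrict Dom)) : ContinuousOn (GG φ u q) (Icc 0 T) := by
  intro t ht
  apply ContinuousAt.continuousWithinAt
  rw [ContinuousAt, tendsto_iff_norm_sub_tendsto_zero]
  have h0 : Filter.Tendsto (fun s => L * M * (∫ z in Dom, (1 + ‖u z‖)) * |s - t|) (nhds t) (nhds 0) := by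
    have : Continuous (fun s => L * M * (∫ z in Dom, (1 + ‖u z‖)) * |s - t|) := by fun_prop
    have := this.tendsto t
    simpa using this
  refine squeeze_zero' (Filter.Eventually.of_forall fun _ => norm_nonneg _) ?_ h0
  filter_upwards [Metric.closedBall_mem_nhds t one_pos] with s hs
  exact GG_lip hφ hL hq hu le_rfl ht (by simpa [dist_eq] using hs)

/-- Approximate solutions. -/
structure Apx (T M β : ℝ) (h : ℝ × ℝ → ℝ) (V₀ : ℝ) (q₀ : ℝ × ℝ → ℝ) (C : ℝ) (N : ℕ) (V : ℝ → ℝ) (q : ℝ → ℝ × ℝ → ℝ) : Prop where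
  good : ∀ t, Good M (q t)
  Vb : ∀ t ∈ Icc (0 : ℝ) T, |V t| ≤ C
  q0 : q 0 = q₀
  V0 : V 0 = V₀
  main : ∀ (L : ℝ) (φ : ℝ × ℝ × ℝ → ℝ), Test T L φ → 0 ≤ L →
    IntervalIntegrable (fun s => GG φ (uN N (V s) (ff h β (q s))) (q s) s) volume 0 T ∧
    |(∫ z in Dom, φ (T, z) * q T z) - (∫ z in Dom, φ (0, z) * q₀ z)
      - ∫ s in (0 : ℝ)..T, GG φ (uN N (V s) (ff h β (q s))) (q s) s| ≤ C * L * (1 / (N + 1))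
  equi : ∀ (L : ℝ) (ϕ : ℝ × ℝ → ℝ), Test T L (fun p => ϕ p.2) → 0 ≤ L → ∀ s ∈ Icc (0 : ℝ) T, ∀ t ∈ Icc (0 : ℝ) T,
    |(∫ z in Dom, ϕ z * q t z) - ∫ z in Dom, ϕ z * q s z| ≤ C * L * (|t - s| + 1 / (N + 1))
  Vequi : ∀ s ∈ Icc (0 : ℝ) T, ∀ t ∈ Icc (0 : ℝ) T, |V t - V s| ≤ C * (|t - s| + 1 / (N + 1))
  Vint : IntervalIntegrable (fun s => (∫ z in Dom, h z * (vN N (ff h β (q s)) z).2) / (4 * π ^ 2)) volume 0 T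
  Veq : ∀ t ∈ Icc (0 : ℝ) T, |V t - V₀ - ∫ s in (0 : ℝ)..t, (∫ z in Dom, h z * (vN N (ff h β (q s)) z).2) / (4 * π ^ 2)|
      ≤ C * (1 / (N + 1))

section
variable {T H M β V₀ τ C F : ℝ} {h q₀ : ℝ × ℝ → ℝ} {N n : ℕ}

lemma St_Vb (hT : 0 ≤ T) (hh : Adm H h) (hq : Good M q₀) (hF : F = M + H + |β| * π) (hτ : 0 ≤ τ)
    (hn : n * τ = T) {i : ℕ} (hi : i ≤ n) : |(St h β N τ V₀ q₀ i).1| ≤ |V₀| + T * (H * F) := by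
  have h1 := St_V (β := β) (V₀ := V₀) hh hq hτ N 0 i
  rw [zero_add, ← hF] at h1
  have hHF : 0 ≤ H * F := mul_nonneg hh.nonneg (hF ▸ (ff_adm' (β := β) hh hq.adm).nonneg)
  have h2 : (i : ℝ) * τ ≤ T := by rw [← hn]; gcongr
  have h3 : (i : ℝ) * τ * (H * F) ≤ T * (H * F) := by gcongr
  have e : (St h β N τ V₀ q₀ 0).1 = V₀ := rfl
  rw [e] at h1
  have := abs_sub_abs_le_abs_sub (St h β N τ V₀ q₀ i).1 V₀
  linarith

lemma C_nn (hT : 0 < T) (hh : Adm H h) (hq : Good M q₀) (hF : F = M + H + |β| * π) (hC : C = |V₀| + T * (H * F) + F)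
    (hτ : 0 < τ) (hn : n * τ = T) (hs : τ * (1 + (box N).card * C) ^ 2 ≤ 1 / (N + 1)) : 0 ≤ C ∧ 0 ≤ F ∧ 0 ≤ H := by
  have hF0 : 0 ≤ F := hF ▸ (ff_adm' (β := β) hh hq.adm).nonneg
  have := hh.nonneg
  refine ⟨?_, hF0, this⟩
  rw [hC]; positivity

lemma tau_le (hT : 0 < T) (hh : Adm H h) (hq : Good M q₀) (hF : F = M + H + |β| * π) (hC : C = |V₀| + T * (H * F) + F)
    (hτ : 0 < τ) (hn : n * τ = T) (hs : τ * (1 + (box N).card * C) ^ 2 ≤ 1 / (N + 1)) : τ ≤ 1 / (N + 1) ∧ τ * (1 + (box N).card * C) ≤ 1 := by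
  obtain ⟨hC0, -, -⟩ := C_nn hT hh hq hF hC hτ hn hs
  have hx : 1 ≤ (1 + (box N).card * C) := by have : 0 ≤ (box N).card * C := by positivity
                                             linarith
  have h1 : (1 + (box N).card * C) ≤ (1 + (box N).card * C) ^ 2 := by nlinarith
  have h2 : 1 / ((N : ℝ) + 1) ≤ 1 := by rw [div_le_one (by positivity)]; linarith [(Nat.cast_nonneg N : (0 : ℝ) ≤ N)]
  constructor
  · nlinarith
  · nlinarith

lemma onestep (hT : 0 < T) (hh : Adm H h) (hq : Good M q₀) (hF : F = M + H + |β| * π) (hC : C = |V₀| + T * (H * F) + F)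
    (hτ : 0 < τ) (hn : n * τ = T) (hs : τ * (1 + (box N).card * C) ^ 2 ≤ 1 / (N + 1)) {L : ℝ} {φ : ℝ × ℝ × ℝ → ℝ} (hφ : Test T L φ) (hL : 0 ≤ L) {i : ℕ} (hi : i < n) :
    |(∫ z in Dom, φ ((i + 1) * τ, z) * (St h β N τ V₀ q₀ (i + 1)).2 z) - (∫ z in Dom, φ (i * τ, z) * (St h β N τ V₀ q₀ i).2 z)
      - τ * GG φ (uN N (St h β N τ V₀ q₀ i).1 (ff h β (St h β N τ V₀ q₀ i).2)) (St h β N τ V₀ q₀ i).2 (i * τ)|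
      ≤ τ * (4 * π ^ 2 * (M * L) * (1 / (N + 1))) := by
  obtain ⟨hC0, -, -⟩ := C_nn hT hh hq hF hC hτ hn hs
  have hM := hq.nonneg
  have ht : (i : ℝ) * τ ∈ Icc 0 T := by
    refine ⟨by positivity, ?_⟩
    rw [← hn]; gcongr
  have := step hφ (St_good (h := h) (β := β) (τ := τ) (V₀ := V₀) hq N i) hM hL (ff_adm' (β := β) hh (St_good (h := h) (β := β) (τ := τ) (V₀ := V₀) hq N i).adm)
    (V := (St h β N τ V₀ q₀ i).1) (C := C) (by
      rw [hC, ← hF]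
      have := St_Vb (N := N) (V₀ := V₀) hT.le hh hq hF hτ.le hn hi.le
      linarith) N ht hτ.le (tau_le hT hh hq hF hC hτ hn hs).2
  have e : (i : ℝ) * τ + τ = (i + 1) * τ := by ring
  rw [e] at this
  refine this.trans ?_
  calc 4 * π ^ 2 * (M * (L * (τ * (1 + (box N).card * C)) ^ 2)) = 4 * π ^ 2 * (M * L) * τ * (τ * (1 + (box N).card * C) ^ 2) := by ring
    _ ≤ 4 * π ^ 2 * (M * L) * τ * (1 / (N + 1)) := by
      refine mul_le_mul_of_nonneg_left hs (by positivity)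
    _ = _ := by ring

lemma uN_L1' (hT : 0 < T) (hh : Adm H h) (hq : Good M q₀) (hF : F = M + H + |β| * π) (hC : C = |V₀| + T * (H * F) + F)
    (hτ : 0 < τ) (hn : n * τ = T) (hs : τ * (1 + (box N).card * C) ^ 2 ≤ 1 / (N + 1)) {i : ℕ} (hi : i ≤ n) : ∫ z in Dom, (1 + ‖uN N (St h β N τ V₀ q₀ i).1 (ff h β (St h β N τ V₀ q₀ i).2) z‖) ≤ 4 * π ^ 2 * (1 + C) := by
  refine (uN_L1 (ff_adm' (β := β) hh (St_good (h := h) (β := β) (τ := τ) (V₀ := V₀) hq N i).adm) N _).trans ?_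
  have := St_Vb (N := N) (V₀ := V₀) hT.le hh hq hF hτ.le hn hi
  rw [← hF]
  refine mul_le_mul_of_nonneg_left ?_ (by positivity)
  linarith

lemma St_main (hT : 0 < T) (hh : Adm H h) (hq : Good M q₀) (hF : F = M + H + |β| * π) (hC : C = |V₀| + T * (H * F) + F)
    (hτ : 0 < τ) (hn : n * τ = T) (hs : τ * (1 + (box N).card * C) ^ 2 ≤ 1 / (N + 1)) {L : ℝ} {φ : ℝ × ℝ × ℝ → ℝ} (hφ : Test T L φ) (hL : 0 ≤ L) :
    IntervalIntegrable (fun s => GG φ (uN N (St h β N τ V₀ q₀ ⌊s / τ⌋₊).1 (ff h β (St h β N τ V₀ q₀ ⌊s / τ⌋₊).2)) (St h β N τ V₀ q₀ ⌊s / τ⌋₊).2 s) volume 0 T ∧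
    |(∫ z in Dom, φ (T, z) * (St h β N τ V₀ q₀ n).2 z) - (∫ z in Dom, φ (0, z) * q₀ z)
      - ∫ s in (0 : ℝ)..T, GG φ (uN N (St h β N τ V₀ q₀ ⌊s / τ⌋₊).1 (ff h β (St h β N τ V₀ q₀ ⌊s / τ⌋₊).2)) (St h β N τ V₀ q₀ ⌊s / τ⌋₊).2 s|
      ≤ T * (4 * π ^ 2 * M * (2 + C)) * L * (1 / (N + 1)) := by
  obtain ⟨hC0, -, -⟩ := C_nn hT hh hq hF hC hτ hn hs
  obtain ⟨hτ1, -⟩ := tau_le hT hh hq hF hC hτ hn hs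
  have hM := hq.nonneg
  set S := St h β N τ V₀ q₀ with hS
  set g : ℕ → ℝ → ℝ := fun i s => GG φ (uN N (S i).1 (ff h β (S i).2)) (S i).2 s with hg
  have hui : ∀ i, Integrable (uN N (S i).1 (ff h β (S i).2)) (volume.restrict Dom) := fun i =>
    (cont_memLp (uN_cont N _ _) 1).integrable le_rfl
  have hA : ∀ i, Adm M (S i).2 := fun i => (St_good hq N i).adm
  have hN1 : 1 / ((N : ℝ) + 1) ≤ 1 := by rw [div_le_one (by positivity)]; linarith [(Nat.cast_nonneg N : (0 : ℝ) ≤ N)]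
  have hsub : ∀ i < n, Icc (i * τ) ((i + 1) * τ) ⊆ Icc 0 T := by
    intro i hi
    apply Icc_subset_Icc (by positivity)
    rw [← hn]; gcongr; exact_mod_cast hi
  have hcg : ∀ i < n, ContinuousOn (g i) (Icc (i * τ) ((i + 1) * τ)) := fun i hi =>
    (GG_cont hφ hL (hA i) (hui i)).mono (hsub i hi)
  obtain ⟨h1, h2⟩ := floor_sum hτ g n hcg
  rw [hn] at h1 h2
  refine ⟨h1, ?_⟩
  have h2' : (∫ s in (0 : ℝ)..T, GG φ (uN N (S ⌊s / τ⌋₊).1 (ff h β (S ⌊s / τ⌋₊).2)) (S ⌊s / τ⌋₊).2 s) = ∑ i ∈ Finset.range n, ∫ s in (i * τ)..((i + 1) * τ), g i s := h2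
  rw [h2']
  have hte : (∫ z in Dom, φ (T, z) * (S n).2 z) - (∫ z in Dom, φ (0, z) * q₀ z)
      = ∑ i ∈ Finset.range n, ((∫ z in Dom, φ ((i + 1) * τ, z) * (S (i + 1)).2 z) - (∫ z in Dom, φ (i * τ, z) * (S i).2 z)) := by
    have := Finset.sum_range_sub (fun i : ℕ => ∫ z in Dom, φ (i * τ, z) * (S i).2 z) n
    push_cast at this
    rw [this, hn, zero_mul]; rfl
  rw [hte, ← Finset.sum_sub_distrib]
  refine (Finset.abs_sum_le_sum_abs _ _).trans ?_
  have hb : ∀ i ∈ Finset.range n, |(∫ z in Dom, φ ((i + 1) * τ, z) * (S (i + 1)).2 z) - (∫ z in Dom, φ (i * τ, z) * (S i).2 z)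
      - ∫ s in (i * τ)..((i + 1) * τ), g i s| ≤ τ * (4 * π ^ 2 * M * (2 + C) * L * (1 / (N + 1))) := by
    intro i hi
    rw [Finset.mem_range] at hi
    have b1 := onestep hT hh hq hF hC hτ hn hs hφ hL hi
    have b2 : |(∫ s in (i * τ)..((i + 1) * τ), g i s) - τ * g i (i * τ)| ≤ τ * (L * M * (4 * π ^ 2 * (1 + C)) * (1 / (N + 1))) := by
      have hle : (i : ℝ) * τ ≤ (i + 1) * τ := by nlinarith
      have hii : IntervalIntegrable (g i) volume (i * τ) ((i + 1) * τ) := by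
        apply ContinuousOn.intervalIntegrable; rw [uIcc_of_le hle]; exact hcg i hi
      have e1 : τ * g i (i * τ) = ∫ s in (i * τ)..((i + 1) * τ), g i (i * τ) := by
        rw [intervalIntegral.integral_const, smul_eq_mul]; ring
      rw [e1, ← intervalIntegral.integral_sub hii (by simp)]
      have := intervalIntegral.norm_integral_le_of_norm_le_const (a := i * τ) (b := (i + 1) * τ) (f := fun s => g i s - g i (i * τ))
        (C := L * M * (4 * π ^ 2 * (1 + C)) * (1 / (N + 1))) (fun s hs' => by
          rw [uIoc_of_le hle] at hs'
          have a1 : |s - i * τ| ≤ τ := by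
            rw [abs_of_nonneg (by linarith [hs'.1])]; linarith [hs'.2]
          refine (GG_lip hφ hL (hA i) (hui i) (uN_L1' hT hh hq hF hC hτ hn hs hi.le) (hsub i hi ⟨le_rfl, hle⟩) (a1.trans (hτ1.trans hN1))).trans ?_
          refine mul_le_mul_of_nonneg_left (a1.trans hτ1) (by positivity))
      rw [norm_eq_abs] at this
      refine this.trans (le_of_eq ?_)
      rw [show ((i : ℝ) + 1) * τ - i * τ = τ by ring, abs_of_pos hτ]; ring
    rw [abs_le] at b1 b2 ⊢
    have e3 : τ * (4 * π ^ 2 * M * (2 + C) * L * (1 / (N + 1))) = τ * (4 * π ^ 2 * (M * L) * (1 / (N + 1))) + τ * (L * M * (4 * π ^ 2 * (1 + C)) * (1 / (N + 1))) := by ring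
    rw [e3]
    constructor <;> linarith [b1.1, b1.2, b2.1, b2.2]
  refine (Finset.sum_le_sum hb).trans (le_of_eq ?_)
  rw [Finset.sum_const, Finset.card_range, nsmul_eq_mul, ← mul_assoc, hn]; ring

lemma St_equi (hT : 0 < T) (hh : Adm H h) (hq : Good M q₀) (hF : F = M + H + |β| * π) (hC : C = |V₀| + T * (H * F) + F)
    (hτ : 0 < τ) (hn : n * τ = T) (hs : τ * (1 + (box N).card * C) ^ 2 ≤ 1 / (N + 1)) {L : ℝ} {ϕ : ℝ × ℝ → ℝ} (hφ : Test T L (fun p => ϕ p.2)) (hL : 0 ≤ L) (i j : ℕ) (hij : i + j ≤ n) :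
    |(∫ z in Dom, ϕ z * (St h β N τ V₀ q₀ (i + j)).2 z) - (∫ z in Dom, ϕ z * (St h β N τ V₀ q₀ i).2 z)|
      ≤ j * τ * (4 * π ^ 2 * M * (2 + C) * L) := by
  obtain ⟨hC0, -, -⟩ := C_nn hT hh hq hF hC hτ hn hs
  have hM := hq.nonneg
  have hN1 : 1 / ((N : ℝ) + 1) ≤ 1 := by rw [div_le_one (by positivity)]; linarith [(Nat.cast_nonneg N : (0 : ℝ) ≤ N)]
  induction j with
  | zero => simp
  | succ j ih =>
    have ih := ih (by omega)
    have hi : i + j < n := by omega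
    have b1 := onestep hT hh hq hF hC hτ hn hs hφ hL hi
    have b2 := GG_bd (t := (i + j : ℕ) * τ) hφ.c1 (fun z _ => hφ.bdd1 _ (by
      refine ⟨by positivity, ?_⟩
      rw [← hn]; gcongr) z) hL (St_good (h := h) (β := β) (τ := τ) (V₀ := V₀) hq N (i + j)).adm
      ((cont_memLp (uN_cont N (St h β N τ V₀ q₀ (i + j)).1 (ff h β (St h β N τ V₀ q₀ (i + j)).2)) 1).integrable le_rfl) (uN_L1' hT hh hq hF hC hτ hn hs hi.le)
    simp only at b1
    rw [← add_assoc]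
    push_cast at b1 b2 ⊢
    have b3 := mul_le_mul_of_nonneg_left b2 hτ.le
    rw [← abs_of_pos hτ, ← abs_mul, abs_of_pos hτ] at b3
    have b4 : τ * (4 * π ^ 2 * (M * L) * (1 / (N + 1))) ≤ τ * (4 * π ^ 2 * (M * L) * 1) := by gcongr
    have e : ((j : ℝ) + 1) * τ * (4 * π ^ 2 * M * (2 + C) * L) = j * τ * (4 * π ^ 2 * M * (2 + C) * L) + τ * (4 * π ^ 2 * (M * L) * 1) + τ * (L * M * (4 * π ^ 2 * (1 + C))) := by ring
    rw [e]
    rw [abs_le] at b1 b3 ih ⊢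
    constructor <;> linarith [b1.1, b1.2, b3.1, b3.2, ih.1, ih.2]
end

end BQG

namespace BQG

lemma exists_apx {T H M β : ℝ} {h : ℝ × ℝ → ℝ} {V₀ : ℝ} {q₀ : ℝ × ℝ → ℝ} (hT : 0 < T) (hh : Adm H h) (hq : Good M q₀) :
    ∃ C : ℝ, 0 ≤ C ∧ ∀ N : ℕ, ∃ (V : ℝ → ℝ) (q : ℝ → ℝ × ℝ → ℝ), Apx T M β h V₀ q₀ C N V q := by
  obtain ⟨F, hF⟩ : ∃ F, F = M + H + |β| * π := ⟨_, rfl⟩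
  obtain ⟨C, hC⟩ : ∃ C, C = |V₀| + T * (H * F) + F := ⟨_, rfl⟩
  have hM := hq.nonneg
  have hH := hh.nonneg
  have hF0 : 0 ≤ F := by rw [hF]; positivity
  have hC0 : 0 ≤ C := by rw [hC]; positivity
  obtain ⟨A, hA⟩ : ∃ A, A = 4 * π ^ 2 * M * (2 + C) := ⟨_, rfl⟩
  have hA0 : 0 ≤ A := by rw [hA]; positivity
  refine ⟨C + T * A + A + H * F, by positivity, fun N => ?_⟩
  obtain ⟨D, hD⟩ : ∃ D, D = C + T * A + A + H * F := ⟨_, rfl⟩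
  rw [← hD]
  have hTA : 0 ≤ T * A := by positivity
  have hHF : 0 ≤ H * F := by positivity
  obtain ⟨n, hn⟩ := exists_nat_gt (T * (1 + (box N).card * C) ^ 2 * (N + 1))
  have hn0 : (0 : ℝ) < n := lt_of_le_of_lt (by positivity) hn
  obtain ⟨τ, hτd⟩ : ∃ τ, τ = T / n := ⟨_, rfl⟩
  have hτ : 0 < τ := by rw [hτd]; positivity
  have hnτ : n * τ = T := by rw [hτd]; field_simp
  have hs : τ * (1 + (box N).card * C) ^ 2 ≤ 1 / (N + 1) := by
    rw [hτd, div_mul_eq_mul_div, div_le_div_iff₀ hn0 (by positivity)]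
    linarith
  obtain ⟨hτ1, -⟩ := tau_le hT hh hq hF hC hτ hnτ hs
  have hN0 : (0 : ℝ) < 1 / (N + 1) := by positivity
  have hfl : ∀ t ∈ Icc (0 : ℝ) T, ⌊t / τ⌋₊ ≤ n := by
    intro t ht
    apply Nat.floor_le_of_le
    rw [div_le_iff₀ hτ, hnτ]; exact ht.2
  have hflT : ⌊T / τ⌋₊ = n := by
    rw [← hnτ, mul_div_cancel_right₀ _ hτ.ne', Nat.floor_natCast]
  have hfd : ∀ s t, 0 ≤ s → s ≤ t → ∃ j : ℕ, ⌊t / τ⌋₊ = ⌊s / τ⌋₊ + j ∧ j * τ ≤ (t - s) + τ := by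
    intro s t hs0 hst
    obtain ⟨j, hj⟩ := Nat.exists_eq_add_of_le (Nat.floor_mono (by gcongr : s / τ ≤ t / τ))
    refine ⟨j, hj, ?_⟩
    have h1 := Nat.floor_le (by have := hs0.trans hst; positivity : 0 ≤ t / τ)
    have h2 := Nat.lt_floor_add_one (s / τ)
    rw [hj, le_div_iff₀ hτ] at h1
    rw [div_lt_iff₀ hτ] at h2
    push_cast at h1
    linarith
  have heq : ∀ (L : ℝ) (ϕ : ℝ × ℝ → ℝ), Test T L (fun p => ϕ p.2) → 0 ≤ L → ∀ s ∈ Icc (0 : ℝ) T, ∀ t ∈ Icc (0 : ℝ) T, s ≤ t →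
      |(∫ z in Dom, ϕ z * (St h β N τ V₀ q₀ ⌊t / τ⌋₊).2 z) - ∫ z in Dom, ϕ z * (St h β N τ V₀ q₀ ⌊s / τ⌋₊).2 z| ≤ D * L * (|t - s| + 1 / (N + 1)) := by
    intro L ϕ hφ hL s hs' t ht hst
    obtain ⟨j, hj, hj2⟩ := hfd s t hs'.1 hst
    have h1 := St_equi hT hh hq hF hC hτ hnτ hs hφ hL ⌊s / τ⌋₊ j (hj ▸ hfl t ht)
    rw [hj, abs_of_nonneg (sub_nonneg.2 hst)]
    refine h1.trans ?_
    rw [← hA]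
    calc j * τ * (A * L) ≤ (t - s + 1 / (N + 1)) * (D * L) := by
          refine mul_le_mul (by linarith) ?_ (by positivity) (by linarith)
          refine mul_le_mul_of_nonneg_right ?_ hL
          linarith
      _ = _ := by ring
  have hVeq : ∀ s ∈ Icc (0 : ℝ) T, ∀ t ∈ Icc (0 : ℝ) T, s ≤ t →
      |(St h β N τ V₀ q₀ ⌊t / τ⌋₊).1 - (St h β N τ V₀ q₀ ⌊s / τ⌋₊).1| ≤ D * (|t - s| + 1 / (N + 1)) := by
    intro s hs' t ht hst
    obtain ⟨j, hj, hj2⟩ := hfd s t hs'.1 hst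
    have h1 := St_V (β := β) (V₀ := V₀) hh hq hτ.le N ⌊s / τ⌋₊ j
    rw [hj, abs_of_nonneg (sub_nonneg.2 hst)]
    refine h1.trans ?_
    rw [← hF]
    calc j * τ * (H * F) ≤ (t - s + 1 / (N + 1)) * D := by
          refine mul_le_mul (by linarith) (by linarith) (by positivity) (by linarith)
      _ = _ := by ring
  set r : ℕ → ℝ := fun i => (∫ z in Dom, h z * (vN N (ff h β (St h β N τ V₀ q₀ i).2) z).2) / (4 * π ^ 2) with hr
  have hrb : ∀ i, |r i| ≤ H * F := by
    intro i
    have := St_rate (β := β) (V₀ := V₀) (τ := τ) hh hq N i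
    simp only [uN_snd] at this
    rw [← hF] at this
    exact this
  have hVs : ∀ i, (St h β N τ V₀ q₀ i).1 = V₀ + ∑ k ∈ Finset.range i, ∫ s in (k * τ)..((k + 1) * τ), r k := by
    intro i
    induction i with
    | zero => simp [St]
    | succ i ih =>
      rw [Finset.sum_range_succ, ← add_assoc, ← ih]
      simp only [St, uN_snd, intervalIntegral.integral_const, smul_eq_mul]
      rw [hr]; ring
  have hri : ∀ i : ℕ, IntervalIntegrable (fun s => r ⌊s / τ⌋₊) volume 0 (i * τ) ∧
    ∫ s in (0 : ℝ)..(i * τ), r ⌊s / τ⌋₊ = ∑ k ∈ Finset.range i, ∫ s in (k * τ)..((k + 1) * τ), r k := fun i =>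
    floor_sum hτ (fun i _ => r i) i (fun _ _ => continuousOn_const)
  refine ⟨fun t => (St h β N τ V₀ q₀ ⌊t / τ⌋₊).1, fun t => (St h β N τ V₀ q₀ ⌊t / τ⌋₊).2, ?_⟩
  refine ⟨fun t => St_good hq N _, fun t ht => ?_, by simp [St], by simp [St], fun L φ hφ hL => ?_, fun L ϕ hφ hL s hs' t ht => ?_, fun s hs' t ht => ?_, ?_, fun t ht => ?_⟩
  · have := St_Vb (N := N) (V₀ := V₀) hT.le hh hq hF hτ.le hnτ (hfl t ht)
    linarith
  · obtain ⟨h1, h2⟩ := St_main hT hh hq hF hC hτ hnτ hs hφ hL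
    refine ⟨h1, ?_⟩
    simp only [hflT]
    refine h2.trans ?_
    rw [← hA]
    gcongr
    linarith
  · rcases le_total s t with hst | hst
    · exact heq L ϕ hφ hL s hs' t ht hst
    · have := heq L ϕ hφ hL t ht s hs' hst
      rwa [abs_sub_comm, abs_sub_comm s] at this
  · rcases le_total s t with hst | hst
    · exact hVeq s hs' t ht hst
    · have := hVeq t ht s hs' hst
      rwa [abs_sub_comm, abs_sub_comm s] at this
  · have := (hri n).1
    rwa [hnτ] at this
  · obtain ⟨i, hi⟩ : ∃ i, i = ⌊t / τ⌋₊ := ⟨_, rfl⟩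
    have h1 : (i : ℝ) * τ ≤ t := by
      rw [hi, ← le_div_iff₀ hτ]; exact Nat.floor_le (by have := ht.1; positivity)
    have h2 : t < (i + 1) * τ := by
      rw [hi, ← div_lt_iff₀ hτ]; exact Nat.lt_floor_add_one _
    have hI : IntervalIntegrable (fun s => r ⌊s / τ⌋₊) volume 0 T := by have := (hri n).1
                                                                        rwa [hnτ] at this
    have hI2 : IntervalIntegrable (fun s => r ⌊s / τ⌋₊) volume (i * τ) t := by
      refine hI.mono_set ?_
      rw [uIcc_of_le h1, uIcc_of_le hT.le]
      exact Icc_subset_Icc (by positivity) ht.2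
    have e1 : ∫ s in (0 : ℝ)..t, r ⌊s / τ⌋₊ = (∫ s in (0 : ℝ)..(i * τ), r ⌊s / τ⌋₊) + ∫ s in (i * τ)..t, r ⌊s / τ⌋₊ :=
      (intervalIntegral.integral_add_adjacent_intervals (hri i).1 hI2).symm
    have e2 : (St h β N τ V₀ q₀ ⌊t / τ⌋₊).1 - V₀ - (∫ s in (0 : ℝ)..t, r ⌊s / τ⌋₊) = -∫ s in (i * τ)..t, r ⌊s / τ⌋₊ := by
      rw [e1, (hri i).2, ← hi, hVs i]; ring
    change |(St h β N τ V₀ q₀ ⌊t / τ⌋₊).1 - V₀ - (∫ s in (0 : ℝ)..t, r ⌊s / τ⌋₊)| ≤ _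
    rw [e2, abs_neg]
    have := intervalIntegral.norm_integral_le_of_norm_le_const (a := i * τ) (b := t) (f := fun s => r ⌊s / τ⌋₊) (C := H * F)
      (fun s _ => hrb _)
    rw [norm_eq_abs] at this
    refine this.trans (mul_le_mul (by linarith) ?_ (abs_nonneg _) (by linarith))
    rw [abs_of_nonneg (by linarith)]
    linarith

end BQG

namespace BQG

lemma weak_lim {E : Type*} [NormedAddCommGroup E] [InnerProductSpace ℝ E] [CompleteSpace E] {S : Set E}
    (hS : ∀ f : E, (∀ s ∈ S, inner ℝ s f = 0) → f = 0) {Q : ℕ → E} {B : ℝ} (hB : ∀ n, ‖Q n‖ ≤ B)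
    (hc : ∀ s ∈ S, ∃ l, Filter.Tendsto (fun n => inner ℝ s (Q n)) Filter.atTop (nhds l)) :
    ∃ q : E, ∀ g, Filter.Tendsto (fun n => inner ℝ g (Q n)) Filter.atTop (nhds (inner ℝ g q)) := by
  have hB0 : 0 ≤ B := (norm_nonneg _).trans (hB 0)
  let W : Submodule ℝ E :=
    { carrier := {g | CauchySeq fun n => inner ℝ g (Q n)}
      add_mem' := by
        intro a b ha hb
        simp only [mem_ofPred_eq, inner_add_left] at *
        exact ha.add hb
      zero_mem' := by
        simp only [mem_ofPred_eq, inner_zero_left]; exact cauchySeq_const 0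
      smul_mem' := by
        intro c x hx
        simp only [mem_ofPred_eq, inner_smul_left] at *
        obtain ⟨l, hl⟩ := cauchySeq_tendsto_of_complete hx
        exact (hl.const_mul _).cauchySeq }
  have hcl : IsClosed (W : Set E) := by
    rw [← closure_subset_iff_isClosed]
    intro g hg
    change CauchySeq fun n => inner ℝ g (Q n)
    rw [Metric.cauchySeq_iff']
    intro ε hε
    obtain ⟨g', hg', hd⟩ := Metric.mem_closure_iff.1 hg (ε / (4 * (B + 1))) (by positivity)
    have hg'' : CauchySeq fun n => inner ℝ g' (Q n) := hg'
    obtain ⟨N, hN⟩ := Metric.cauchySeq_iff'.1 hg'' (ε / 4) (by positivity)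
    refine ⟨N, fun n hn => ?_⟩
    have key : ∀ n, dist (inner ℝ g (Q n)) (inner ℝ g' (Q n)) ≤ ε / 4 := by
      intro n
      rw [dist_eq, ← inner_sub_left]
      refine (abs_real_inner_le_norm _ _).trans ?_
      rw [dist_eq_norm] at hd
      calc _ ≤ (ε / (4 * (B + 1))) * (B + 1) := by
            refine mul_le_mul hd.le ((hB n).trans (by linarith)) (norm_nonneg _) (by positivity)
        _ = ε / 4 := by field_simp
    have k1 := key n
    have k2 := key N
    have k3 := hN n hn
    rw [dist_comm] at k2
    calc _ ≤ _ := dist_triangle4 _ (inner ℝ g' (Q n)) (inner ℝ g' (Q N)) _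
      _ < ε := by linarith
  have htop : W = ⊤ := by
    have : CompleteSpace W := hcl.completeSpace_coe
    rw [← Submodule.orthogonal_eq_bot_iff, Submodule.eq_bot_iff]
    intro f hf
    apply hS
    intro s hs
    obtain ⟨l, hl⟩ := hc s hs
    exact (Submodule.mem_orthogonal W f).1 hf s hl.cauchySeq
  have hlim : ∀ g, ∃ l, Filter.Tendsto (fun n => inner ℝ g (Q n)) Filter.atTop (nhds l) := fun g => by
    have : g ∈ W := htop ▸ Submodule.mem_top
    exact cauchySeq_tendsto_of_complete this
  choose l hl using hlim
  let ℓ : E →ₗ[ℝ] ℝ :=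
    { toFun := l
      map_add' := fun a b => by
        refine tendsto_nhds_unique (hl (a + b)) ?_
        simp only [inner_add_left]
        exact (hl a).add (hl b)
      map_smul' := fun c a => by
        refine tendsto_nhds_unique (hl (c • a)) ?_
        simp only [inner_smul_left]
        exact (hl a).const_mul _ }
  let ℓ' : E →L[ℝ] ℝ := ℓ.mkContinuous B (fun g => by
    refine le_of_tendsto (hl g).norm (Filter.Eventually.of_forall fun n => ?_)
    refine (norm_inner_le_norm _ _).trans ?_
    rw [mul_comm]
    exact mul_le_mul_of_nonneg_right (hB n) (norm_nonneg _))
  refine ⟨(InnerProductSpace.toDual ℝ E).symm ℓ', fun g => ?_⟩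
  have : inner ℝ g ((InnerProductSpace.toDual ℝ E).symm ℓ') = l g := by
    rw [real_inner_comm, InnerProductSpace.toDual_symm_apply]; rfl
  rw [this]; exact hl g

/-- Real Fourier modes. -/
def md (i : Bool × ℤ × ℤ) (z : ℝ × ℝ) : ℝ := if i.1 then cos (ph i.2 z) else sin (ph i.2 z)

lemma md_cont (i) : Continuous (md i) := by
  unfold md; split_ifs
  · exact continuous_cos.comp (ph_cont _)
  · exact continuous_sin.comp (ph_cont _)

lemma ee_md (m z) : ee m z = (md (true, m) z : ℂ) + Complex.I * (md (false, m) z : ℂ) := by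
  unfold ee md ph
  rw [mul_comm, Complex.exp_mul_I]
  push_cast
  simp; ring

lemma EE_md {g : ℝ × ℝ → ℝ} (hg : Integrable g (volume.restrict Dom)) (m) :
    EE g m = ((∫ z in Dom, md (true, m) z * g z : ℝ) : ℂ) + Complex.I * ((∫ z in Dom, md (false, m) z * g z : ℝ) : ℂ) := by
  have hi : ∀ i, Integrable (fun z => md i z * g z) (volume.restrict Dom) := fun i =>
    hg.bdd_mul (c := 1) (md_cont i).aestronglyMeasurable (Filter.Eventually.of_forall fun z => by
      unfold md; split_ifs
      · exact abs_cos_le_one _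
      · exact abs_sin_le_one _)
  unfold EE
  rw [← integral_complex_ofReal, ← integral_complex_ofReal, ← integral_const_mul, ← integral_add (hi _).ofReal ((hi _).ofReal.const_mul _)]
  congr 1; ext z; rw [ee_md]; push_cast; ring

lemma complete_real {f : ℝ × ℝ → ℝ} (hm : Measurable f) (hf : MemLp f 2 (volume.restrict Dom))
    (h0 : ∀ i, ∫ z in Dom, md i z * f z = 0) : f =ᵐ[volume.restrict Dom] 0 := by
  have := complete2 (fun z => (f z : ℂ)) (Complex.measurable_ofReal.comp hm) hf.ofReal (fun m => by
    have := EE_md (hf.integrable one_le_two) m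
    rw [h0, h0] at this
    simpa [EE] using this)
  filter_upwards [this] with z hz
  simpa using hz

lemma inner_toLp {g q : ℝ × ℝ → ℝ} (hg : MemLp g 2 (volume.restrict Dom)) (hq : MemLp q 2 (volume.restrict Dom)) :
    inner ℝ (hg.toLp g) (hq.toLp q) = ∫ z in Dom, g z * q z := by
  rw [L2.inner_def]
  refine integral_congr_ae ?_
  filter_upwards [hg.coeFn_toLp, hq.coeFn_toLp] with z h1 h2
  rw [h1, h2]; simp [mul_comm]

lemma md_memLp (i) : MemLp (md i) 2 (volume.restrict Dom) := cont_memLp (md_cont i) 2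

def clampM (M x : ℝ) : ℝ := max (-M) (min M x)

lemma clampM_abs {M : ℝ} (hM : 0 ≤ M) (x) : |clampM M x| ≤ M := by
  unfold clampM; rw [abs_le]; exact ⟨le_max_left _ _, max_le (by linarith) (min_le_left _ _)⟩

lemma clampM_eq {M x : ℝ} (h : |x| ≤ M) : clampM M x = x := by
  unfold clampM; rw [abs_le] at h; rw [min_eq_right h.2, max_eq_right h.1]

lemma clampM_cont (M) : Continuous (clampM M) := by unfold clampM; fun_prop

lemma int_lim_le {M : ℝ} {q : ℕ → ℝ × ℝ → ℝ} (hq : ∀ n, Adm M (q n)) {q' : ℝ × ℝ → ℝ} (hm : Measurable q')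
    (hq' : MemLp q' 2 (volume.restrict Dom))
    (hl : ∀ g, MemLp g 2 (volume.restrict Dom) → Filter.Tendsto (fun n => ∫ z in Dom, g z * q n z) Filter.atTop (nhds (∫ z in Dom, g z * q' z))) :
    ∀ᵐ z ∂(volume.restrict Dom), q' z ≤ M := by
  set A : Set (ℝ × ℝ) := {z | M < q' z} with hA
  have hAm : MeasurableSet A := measurableSet_lt measurable_const hm
  have hg : MemLp (A.indicator (fun _ => (1 : ℝ))) 2 (volume.restrict Dom) := (memLp_const (1 : ℝ)).indicator hAm
  have h1 := hl _ hg
  have h2 : ∀ n, ∫ z in Dom, A.indicator (fun _ => (1 : ℝ)) z * q n z ≤ ∫ z in Dom, A.indicator (fun _ => (1 : ℝ)) z * M := by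
    intro n
    refine integral_mono_ae ?_ ((hg.integrable one_le_two).mul_const M) ?_
    · exact (hg.integrable one_le_two).mul_bdd (c := M) (hq n).meas.aestronglyMeasurable (hq n).bdd
    · filter_upwards [(hq n).bdd] with z hz
      exact mul_le_mul_of_nonneg_left (le_of_abs_le hz) (indicator_nonneg (fun _ _ => zero_le_one) _)
  have h3 := le_of_tendsto' h1 h2
  have hi : Integrable (fun z => A.indicator (fun _ => (1 : ℝ)) z * (q' z - M)) (volume.restrict Dom) := by
    have : (fun z => A.indicator (fun _ => (1 : ℝ)) z * (q' z - M)) = A.indicator (fun z => q' z - M) := by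
      ext z; by_cases h : z ∈ A <;> simp [h]
    rw [this]
    exact ((hq'.integrable one_le_two).sub (integrable_const M)).indicator hAm
  have hi2 : Integrable (fun z => A.indicator (fun _ => (1 : ℝ)) z * q' z) (volume.restrict Dom) := by
    have : (fun z => A.indicator (fun _ => (1 : ℝ)) z * q' z) = A.indicator (fun z => q' z) := by
      ext z; by_cases h : z ∈ A <;> simp [h]
    rw [this]
    exact (hq'.integrable one_le_two).indicator hAm
  have hnn : ∀ z, 0 ≤ A.indicator (fun _ => (1 : ℝ)) z * (q' z - M) := by
    intro z
    by_cases h : z ∈ A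
    · have : M < q' z := h
      simp [h]; exact this.le
    · simp [h]
  have h4 : ∫ z in Dom, A.indicator (fun _ => (1 : ℝ)) z * (q' z - M) = 0 := by
    apply le_antisymm _ (integral_nonneg hnn)
    simp only [mul_sub]
    rw [integral_sub hi2 ((hg.integrable one_le_two).mul_const M)]
    linarith
  rw [integral_eq_zero_iff_of_nonneg hnn hi] at h4
  filter_upwards [h4] with z hz
  by_contra hc
  have : z ∈ A := not_le.1 hc
  simp [this] at hz
  have : M < q' z := this
  linarith

lemma weak_q {M : ℝ} {q : ℕ → ℝ × ℝ → ℝ} (hq : ∀ n, Adm M (q n))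
    (hc : ∀ i, ∃ l, Filter.Tendsto (fun n => ∫ z in Dom, md i z * q n z) Filter.atTop (nhds l)) :
    ∃ q' : ℝ × ℝ → ℝ, Measurable q' ∧ (∀ z, |q' z| ≤ M) ∧ ∀ g, MemLp g 2 (volume.restrict Dom) →
      Filter.Tendsto (fun n => ∫ z in Dom, g z * q n z) Filter.atTop (nhds (∫ z in Dom, g z * q' z)) := by
  have hM := (hq 0).nonneg
  obtain ⟨Q, hQ⟩ := weak_lim (E := Lp ℝ 2 (volume.restrict Dom)) (S := range fun i => (md_memLp i).toLp (md i))
    (Q := fun n => (hq n).memLp.toLp (q n)) (B := (measureUnivNNReal (volume.restrict Dom) : ℝ) ^ (ENNReal.toReal 2)⁻¹ * M) (by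
      intro f hf
      have hfm := Lp.memLp f
      have := complete_real (Lp.stronglyMeasurable f).measurable hfm (fun i => by
        rw [← inner_toLp (md_memLp i) hfm, Lp.toLp_coeFn]
        exact hf _ ⟨i, rfl⟩)
      rwa [Lp.eq_zero_iff_ae_eq_zero])
    (fun n => by
      have := Lp.norm_le_of_ae_bound (f := (hq n).memLp.toLp (q n)) hM (by
        filter_upwards [(hq n).memLp.coeFn_toLp, (hq n).bdd] with z h1 h2
        rw [h1]; exact h2)
      exact this)
    (by
      rintro _ ⟨i, rfl⟩
      simp only [inner_toLp]
      exact hc i)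
  have hl : ∀ g, MemLp g 2 (volume.restrict Dom) → Filter.Tendsto (fun n => ∫ z in Dom, g z * q n z) Filter.atTop (nhds (∫ z in Dom, g z * Q z)) := by
    intro g hg
    have := hQ (hg.toLp g)
    simp only [inner_toLp] at this
    have e := inner_toLp hg (Lp.memLp Q)
    rw [Lp.toLp_coeFn] at e
    rwa [e] at this
  have hQm := (Lp.stronglyMeasurable Q).measurable
  have b1 := int_lim_le hq hQm (Lp.memLp Q) hl
  have b2 := int_lim_le (q := fun n z => - q n z) (q' := fun z => - Q z) (M := M)
    (fun n => ⟨(hq n).meas.neg, by simpa only [abs_neg] using (hq n).bdd⟩) hQm.neg (Lp.memLp Q).neg (fun g hg => by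
      simp only [mul_neg, integral_neg]
      exact (hl g hg).neg)
  refine ⟨fun z => clampM M (Q z), (clampM_cont M).measurable.comp hQm, fun z => clampM_abs hM _, fun g hg => ?_⟩
  have e : ∫ z in Dom, g z * clampM M (Q z) = ∫ z in Dom, g z * Q z := by
    refine integral_congr_ae ?_
    filter_upwards [b1, b2] with z h1 h2
    rw [clampM_eq (abs_le.2 ⟨by linarith, h1⟩)]
  rw [e]; exact hl g hg

end BQG

namespace BQG

lemma fderiv_perx {φ : ℝ × ℝ × ℝ → ℝ} (hx : ∀ t x y : ℝ, φ (t, x + 2 * π, y) = φ (t, x, y)) (t x y : ℝ) :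
    fderiv ℝ φ (t, x + 2 * π, y) = fderiv ℝ φ (t, x, y) := by
  have e : (fun p : ℝ × ℝ × ℝ => φ (p + (0, 2 * π, 0))) = φ := by
    ext ⟨a, b, c⟩; simpa using hx a b c
  have := fderiv_comp_add_right (𝕜 := ℝ) (f := φ) (x := (t, x, y)) ((0, 2 * π, 0) : ℝ × ℝ × ℝ)
  rw [e] at this
  rw [this]; simp

lemma fderiv_pery {φ : ℝ × ℝ × ℝ → ℝ} (hy : ∀ t x y : ℝ, φ (t, x, y + 2 * π) = φ (t, x, y)) (t x y : ℝ) :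
    fderiv ℝ φ (t, x, y + 2 * π) = fderiv ℝ φ (t, x, y) := by
  have e : (fun p : ℝ × ℝ × ℝ => φ (p + (0, 0, 2 * π))) = φ := by
    ext ⟨a, b, c⟩; simpa using hy a b c
  have := fderiv_comp_add_right (𝕜 := ℝ) (f := φ) (x := (t, x, y)) ((0, 0, 2 * π) : ℝ × ℝ × ℝ)
  rw [e] at this
  rw [this]; simp

lemma per_bdd' {E : Type*} [NormedAddCommGroup E] {φ : ℝ × ℝ × ℝ → E} (hc : Continuous φ) (hx : ∀ t x y, φ (t, x + 2 * π, y) = φ (t, x, y))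
    (hy : ∀ t x y, φ (t, x, y + 2 * π) = φ (t, x, y)) (a b : ℝ) : ∃ C, 0 ≤ C ∧ ∀ t ∈ Icc a b, ∀ z, ‖φ (t, z)‖ ≤ C := by
  obtain ⟨C, hC⟩ := (isCompact_Icc (a := ((a, 0, 0) : ℝ × ℝ × ℝ)) (b := (b, 2 * π, 2 * π))).exists_bound_of_continuousOn hc.continuousOn
  refine ⟨max C 0, le_max_right _ _, fun t ht z => ?_⟩
  obtain ⟨x, y⟩ := z
  obtain ⟨x', hx', ex⟩ := Function.Periodic.exists_mem_Ico₀ (f := fun x => φ (t, x, y)) (c := 2 * π) (fun x => hx t x y) (by positivity) x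
  obtain ⟨y', hy', ey⟩ := Function.Periodic.exists_mem_Ico₀ (f := fun y => φ (t, x', y)) (c := 2 * π) (fun y => hy t x' y) (by positivity) y
  refine le_of_eq_of_le (congrArg norm (ex.trans ey)) (le_trans ?_ (le_max_left _ _))
  exact hC _ ⟨⟨ht.1, hx'.1, hy'.1⟩, ⟨ht.2, hx'.2.le, hy'.2.le⟩⟩

lemma test_of_C2 (T : ℝ) {φ : ℝ × ℝ × ℝ → ℝ} (hφ : ContDiff ℝ 2 φ) (hx : ∀ t x y : ℝ, φ (t, x + 2 * π, y) = φ (t, x, y))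
    (hy : ∀ t x y : ℝ, φ (t, x, y + 2 * π) = φ (t, x, y)) : ∃ L, 0 ≤ L ∧ Test T L φ := by
  have h1 : ContDiff ℝ 1 φ := hφ.of_le (by norm_num)
  have h2 : ContDiff ℝ 1 (fderiv ℝ φ) := hφ.fderiv_right (by norm_num)
  obtain ⟨C0, h00, hC0⟩ := per_bdd' h1.continuous hx hy 0 T
  obtain ⟨C1, h10, hC1⟩ := per_bdd' h2.continuous (fderiv_perx hx) (fderiv_pery hy) 0 T
  obtain ⟨C2, h20, hC2⟩ := per_bdd' (h2.continuous_fderiv one_ne_zero) (φ := fderiv ℝ (fderiv ℝ φ)) (fun t x y => by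
    have e : (fun p : ℝ × ℝ × ℝ => fderiv ℝ φ (p + (0, 2 * π, 0))) = fderiv ℝ φ := by
      ext1 ⟨a, b, c⟩; simpa using fderiv_perx hx a b c
    have := fderiv_comp_add_right (𝕜 := ℝ) (f := fderiv ℝ φ) (x := (t, x, y)) ((0, 2 * π, 0) : ℝ × ℝ × ℝ)
    rw [e] at this
    rw [this]; simp) (fun t x y => by
    have e : (fun p : ℝ × ℝ × ℝ => fderiv ℝ φ (p + (0, 0, 2 * π))) = fderiv ℝ φ := by
      ext1 ⟨a, b, c⟩; simpa using fderiv_pery hy a b c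
    have := fderiv_comp_add_right (𝕜 := ℝ) (f := fderiv ℝ φ) (x := (t, x, y)) ((0, 0, 2 * π) : ℝ × ℝ × ℝ)
    rw [e] at this
    rw [this]; simp) (-1) (T + 1)
  refine ⟨C0 + C1 + C2, by positivity, h1, hx, hy, fun t ht z => (hC0 t ht z).trans (by linarith), fun t ht z => (hC1 t ht z).trans (by linarith), ?_⟩
  intro t ht z _ p hp
  have hcv : Convex ℝ (Icc (-1 : ℝ) (T + 1) ×ˢ (univ : Set (ℝ × ℝ))) := (convex_Icc _ _).prod convex_univ
  have hp1 : |p.1 - t| ≤ 1 := by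
    have := (norm_fst_le (p - (t, z))).trans hp
    simpa using this
  rw [abs_le] at hp1
  have := hcv.norm_image_sub_le_of_norm_fderiv_le (𝕜 := ℝ) (f := fderiv ℝ φ) (C := C2) (x := (t, z)) (y := p)
    (fun x _ => h2.differentiable one_ne_zero x) (fun x hx => hC2 x.1 hx.1 x.2)
    ⟨⟨by linarith [ht.1], by linarith [ht.2]⟩, mem_univ _⟩ ⟨⟨by linarith [ht.1], by linarith [ht.2]⟩, mem_univ _⟩
  refine this.trans ?_
  refine mul_le_mul_of_nonneg_right (by linarith) (norm_nonneg _)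

lemma ph_perx (m : ℤ × ℤ) (x y : ℝ) : ph m (x + 2 * π, y) = ph m (x, y) + m.1 * (2 * π) := by unfold ph; simp; ring
lemma ph_pery (m : ℤ × ℤ) (x y : ℝ) : ph m (x, y + 2 * π) = ph m (x, y) + m.2 * (2 * π) := by unfold ph; simp; ring

lemma md_test (T : ℝ) (i) : ∃ L, 0 ≤ L ∧ Test T L (fun p => md i p.2) := by
  apply test_of_C2
  · unfold md ph; split_ifs <;> fun_prop
  · intro t x y
    simp only [md, ph_perx]; split_ifs
    · exact cos_add_int_mul_two_pi _ _
    · exact sin_add_int_mul_two_pi _ _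
  · intro t x y
    simp only [md, ph_pery]; split_ifs
    · exact cos_add_int_mul_two_pi _ _
    · exact sin_add_int_mul_two_pi _ _

lemma AA {ι : Type*} [Countable ι] {T : ℝ} (hT : 0 ≤ T) (a : ℕ → ι → ℝ → ℝ) (B C : ι → ℝ) (hC : ∀ i, 0 ≤ C i)
    (hb : ∀ N i, ∀ t ∈ Icc 0 T, |a N i t| ≤ B i)
    (he : ∀ N i, ∀ s ∈ Icc 0 T, ∀ t ∈ Icc 0 T, |a N i t - a N i s| ≤ C i * (|t - s| + 1 / (N + 1))) :
    ∃ θ : ℕ → ℕ, StrictMono θ ∧ ∀ i, ∀ t ∈ Icc 0 T, ∃ l, Filter.Tendsto (fun n => a (θ n) i t) Filter.atTop (nhds l) := by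
  let cl : ℝ → ℝ := fun t => max 0 (min T t)
  have hcl : ∀ t, cl t ∈ Icc 0 T := fun t => ⟨le_max_left _ _, max_le hT (min_le_left _ _)⟩
  have hclip : ∀ t ∈ Icc 0 T, ∀ r, |t - cl r| ≤ |t - r| := by
    intro t ht r
    have e : cl t = t := by simp only [cl]; rw [min_eq_right ht.2, max_eq_right ht.1]
    calc |t - cl r| = |cl t - cl r| := by rw [e]
      _ ≤ |min T t - min T r| := by
        have := abs_max_sub_max_le_abs (min T t) (min T r) 0
        simpa only [cl, max_comm] using this
      _ ≤ |t - r| := by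
        have := abs_min_sub_min_le_max T t T r
        simpa using this
  have hK : IsCompact (Set.pi univ fun p : ι × ℚ => Icc (-(B p.1)) (B p.1)) := isCompact_univ_pi fun p => isCompact_Icc
  obtain ⟨L, -, θ, hθ, hL⟩ := hK.tendsto_subseq (x := fun N (p : ι × ℚ) => a N p.1 (cl p.2))
    (fun N p _ => abs_le.1 (hb N p.1 _ (hcl _)))
  rw [tendsto_pi_nhds] at hL
  refine ⟨θ, hθ, fun i t ht => ?_⟩
  apply cauchySeq_tendsto_of_complete
  rw [Metric.cauchySeq_iff]
  intro ε hε
  have hCi := hC i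
  obtain ⟨r, hr⟩ : ∃ r : ℚ, |t - r| < ε / (6 * (C i + 1)) := by
    obtain ⟨r, h1, h2⟩ := exists_rat_btwn (show t < t + ε / (6 * (C i + 1)) by linarith [show 0 < ε / (6 * (C i + 1)) by positivity])
    refine ⟨r, ?_⟩
    rw [abs_sub_comm, abs_of_pos (by linarith)]; linarith
  have hca := (hL (i, r)).cauchySeq
  obtain ⟨N1, hN1⟩ := Metric.cauchySeq_iff.1 hca (ε / 3) (by positivity)
  obtain ⟨N2, hN2⟩ := exists_nat_one_div_lt (show 0 < ε / (6 * (C i + 1)) by positivity)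
  have key : ∀ n ≥ N2, |a (θ n) i t - a (θ n) i (cl r)| ≤ ε / 3 := by
    intro n hn
    refine (he (θ n) i _ (hcl r) t ht).trans ?_
    have h1 : 1 / ((θ n : ℝ) + 1) ≤ 1 / ((N2 : ℝ) + 1) := by
      gcongr
      exact hn.trans hθ.le_apply
    calc C i * (|t - cl r| + 1 / ((θ n : ℝ) + 1)) ≤ (C i + 1) * (ε / (6 * (C i + 1)) + ε / (6 * (C i + 1))) := by
          refine mul_le_mul (by linarith) (add_le_add ((hclip t ht r).trans hr.le) (h1.trans hN2.le)) (by positivity) (by positivity)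
      _ = ε / 3 := by field_simp; ring
  refine ⟨max N1 N2, fun m hm n hn => ?_⟩
  have k1 := key m ((le_max_right _ _).trans hm)
  have k2 := key n ((le_max_right _ _).trans hn)
  have k3 := hN1 m ((le_max_left _ _).trans hm) n ((le_max_left _ _).trans hn)
  simp only [Function.comp, dist_eq] at k3
  rw [dist_eq]
  rw [abs_le] at k1 k2
  rw [abs_lt] at k3 ⊢
  constructor <;> linarith [k1.1, k1.2, k2.1, k2.2, k3.1, k3.2]

end BQG

namespace BQG

lemma joint_meas {M : ℝ} {q : ℝ → ℝ × ℝ → ℝ} (hm : ∀ t, Measurable (q t)) (hb : ∀ t z, |q t z| ≤ M)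
    (hc : ∀ g, MemLp g 2 (volume.restrict Dom) → Continuous fun t => ∫ z in Dom, g z * q t z) :
    ∃ q' : ℝ → ℝ × ℝ → ℝ, Measurable (fun p : ℝ × (ℝ × ℝ) => q' p.1 p.2) ∧ (∀ t z, |q' t z| ≤ M) ∧
      ∀ t, q' t =ᵐ[volume.restrict Dom] q t := by
  have hM : 0 ≤ M := (abs_nonneg _).trans (hb 0 0)
  set δ : ℕ → ℝ := fun n => 1 / ((n : ℝ) + 1) with hδ
  have hδ0 : ∀ n, 0 < δ n := fun n => by simp only [hδ]; positivity
  set a : ℕ → ℝ → ℝ × ℝ → ℝ := fun n t z => (volume.real (Metric.closedBall (0 : ℝ × ℝ) (δ n)))⁻¹ *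
    ∫ w in Dom, ((Metric.closedBall z (δ n)).indicator (fun _ => (1 : ℝ)) w) * q t w with ha
  have haj : ∀ n, StronglyMeasurable (Function.uncurry (a n)) := by
    intro n
    apply stronglyMeasurable_uncurry_of_continuous_of_stronglyMeasurable
    · intro z
      refine continuous_const.mul (hc _ ?_)
      exact (memLp_const (1 : ℝ)).indicator Metric.isClosed_closedBall.measurableSet
    · intro t
      refine StronglyMeasurable.const_mul ?_ _
      have hS : MeasurableSet {p : (ℝ × ℝ) × (ℝ × ℝ) | dist p.2 p.1 ≤ δ n} :=
        (isClosed_le (by fun_prop) (by fun_prop)).measurableSet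
      have h1 : StronglyMeasurable (fun p : (ℝ × ℝ) × (ℝ × ℝ) => ({p : (ℝ × ℝ) × (ℝ × ℝ) | dist p.2 p.1 ≤ δ n}.indicator (fun _ => (1 : ℝ)) p) * q t p.2) :=
        ((stronglyMeasurable_const.indicator hS)).mul ((hm t).comp measurable_snd).stronglyMeasurable
      exact h1.integral_prod_right
  refine ⟨fun t z => clampM M (Filter.limUnder Filter.atTop fun n => a n t z), ?_, fun t z => clampM_abs hM _, fun t => ?_⟩
  · have := StronglyMeasurable.limUnder (l := Filter.atTop) haj
    exact (clampM_cont M).measurable.comp this.measurable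
  · have hloc : LocallyIntegrable (Dom.indicator (q t)) volume := by
      apply Integrable.locallyIntegrable
      rw [integrable_indicator_iff measurableSet_Dom]
      exact Integrable.of_bound (hm t).aestronglyMeasurable M (Filter.Eventually.of_forall (hb t))
    have h1 := IsUnifLocDoublingMeasure.ae_tendsto_average (μ := (volume : Measure (ℝ × ℝ))) hloc 1
    filter_upwards [ae_restrict_of_ae h1, ae_restrict_mem measurableSet_Dom] with z hz hzD
    have h2 := hz (l := Filter.atTop) (fun _ : ℕ => z) δ (by
      rw [tendsto_nhdsWithin_iff]
      exact ⟨tendsto_one_div_add_atTop_nhds_zero_nat, Filter.Eventually.of_forall hδ0⟩)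
      (Filter.Eventually.of_forall fun n => Metric.mem_closedBall_self (by have := hδ0 n; linarith))
    have h3 : ∀ n, (⨍ y in Metric.closedBall z (δ n), Dom.indicator (q t) y) = a n t z := by
      intro n
      rw [setAverage_eq, smul_eq_mul]
      have e1 : volume.real (Metric.closedBall z (δ n)) = volume.real (Metric.closedBall (0 : ℝ × ℝ) (δ n)) := by
        simp only [Measure.real, Measure.addHaar_closedBall_center]
      simp only [ha]
      rw [e1]
      congr 1
      rw [setIntegral_indicator measurableSet_Dom, inter_comm, ← setIntegral_indicator Metric.isClosed_closedBall.measurableSet]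
      congr 1; ext w
      by_cases hw : w ∈ Metric.closedBall z (δ n) <;> simp [hw]
    simp only [h3, indicator_of_mem hzD] at h2
    rw [h2.limUnder_eq, clampM_eq (hb t z)]

lemma md_abs (i z) : |md i z| ≤ 1 := by
  unfold md; split_ifs
  · exact abs_cos_le_one _
  · exact abs_sin_le_one _

lemma md_int_bd {M : ℝ} {q : ℝ × ℝ → ℝ} (hq : Adm M q) (i) : |∫ z in Dom, md i z * q z| ≤ M * (4 * π ^ 2) := by
  have := norm_integral_le_of_norm_le_const (μ := volume.restrict Dom) (f := fun z => md i z * q z) (C := M) (by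
    filter_upwards [hq.bdd] with z hz
    rw [norm_mul, ← one_mul M]
    exact mul_le_mul (md_abs i z) hz (abs_nonneg _) zero_le_one)
  rwa [volr_Dom] at this

/-- The limit object. -/
structure Lm (T M : ℝ) (V : ℝ → ℝ) (q : ℝ → ℝ × ℝ → ℝ) (Vn : ℕ → ℝ → ℝ) (qn : ℕ → ℝ → ℝ × ℝ → ℝ) : Prop where
  contV : Continuous V
  measq : Measurable (fun p : ℝ × (ℝ × ℝ) => q p.1 p.2)
  bdd : ∀ t z, |q t z| ≤ M
  cont : ∀ g, MemLp g 2 (volume.restrict Dom) → Continuous fun t => ∫ z in Dom, g z * q t z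
  limV : ∀ t ∈ Icc 0 T, Filter.Tendsto (fun n => Vn n t) Filter.atTop (nhds (V t))
  limq : ∀ t ∈ Icc 0 T, ∀ g, MemLp g 2 (volume.restrict Dom) →
    Filter.Tendsto (fun n => ∫ z in Dom, g z * qn n t z) Filter.atTop (nhds (∫ z in Dom, g z * q t z))

lemma weak_cont {M : ℝ} {q : ℝ → ℝ × ℝ → ℝ} (hm : ∀ t, Measurable (q t)) (hb : ∀ t z, |q t z| ≤ M)
    (hc : ∀ i, Continuous fun t => ∫ z in Dom, md i z * q t z) (g) (hg : MemLp g 2 (volume.restrict Dom)) :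
    Continuous fun t => ∫ z in Dom, g z * q t z := by
  have hA : ∀ t, Adm M (q t) := fun t => ⟨hm t, Filter.Eventually.of_forall (hb t)⟩
  rw [continuous_iff_continuousAt]
  intro t
  apply Filter.tendsto_of_seq_tendsto
  intro x hx
  obtain ⟨q', hm', hb', hl'⟩ := weak_q (q := fun n => q (x n)) (fun n => hA _) (fun i => ⟨_, ((hc i).tendsto t).comp hx⟩)
  have hA' : Adm M q' := ⟨hm', Filter.Eventually.of_forall hb'⟩
  have h0 : (fun z => q' z - q t z) =ᵐ[volume.restrict Dom] 0 := by
    refine complete_real (hm'.sub (hm t)) (hA'.memLp.sub (hA t).memLp) (fun i => ?_)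
    have e := tendsto_nhds_unique (hl' _ (md_memLp i)) (((hc i).tendsto t).comp hx)
    simp only [mul_sub]
    have hi : ∀ p, Adm M p → Integrable (fun z => md i z * p z) (volume.restrict Dom) := fun p hp =>
      (cont_int (md_cont i)).mul_bdd (c := M) hp.meas.aestronglyMeasurable hp.bdd
    rw [integral_sub (hi _ hA') (hi _ (hA t)), e, sub_self]
  have e2 : ∫ z in Dom, g z * q t z = ∫ z in Dom, g z * q' z := by
    refine integral_congr_ae ?_
    filter_upwards [h0] with z hz
    have : q' z - q t z = 0 := hz
    rw [show q' z = q t z by linarith]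
  simp only [e2]
  exact hl' g hg

lemma exists_lim {T M β C : ℝ} {h : ℝ × ℝ → ℝ} {V₀ : ℝ} {q₀ : ℝ × ℝ → ℝ} (hT : 0 ≤ T) (hC : 0 ≤ C) {Vn : ℕ → ℝ → ℝ} {qn : ℕ → ℝ → ℝ × ℝ → ℝ}
    (hA : ∀ N, Apx T M β h V₀ q₀ C N (Vn N) (qn N)) :
    ∃ (θ : ℕ → ℕ) (V : ℝ → ℝ) (q : ℝ → ℝ × ℝ → ℝ), StrictMono θ ∧ Lm T M V q (fun n => Vn (θ n)) (fun n => qn (θ n)) := by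
  choose L hL0 hL using md_test T
  obtain ⟨θ, hθ, hlim⟩ := AA hT (ι := Option (Bool × ℤ × ℤ)) (fun N o t => o.elim (Vn N t) (fun i => ∫ z in Dom, md i z * qn N t z))
    (fun o => o.elim C (fun _ => M * (4 * π ^ 2))) (fun o => o.elim C (fun i => C * L i))
    (by
      rintro (_ | i)
      · exact hC
      · exact mul_nonneg hC (hL0 i))
    (by
      rintro N (_ | i) t ht
      · exact (hA N).Vb t ht
      · exact md_int_bd ((hA N).good t).adm i)
    (by
      rintro N (_ | i) s hs t ht
      · exact (hA N).Vequi s hs t ht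
      · exact (hA N).equi (L i) (md i) (hL i) (hL0 i) s hs t ht)
  let cl : ℝ → ℝ := fun t => max 0 (min T t)
  have hcl : ∀ t, cl t ∈ Icc 0 T := fun t => ⟨le_max_left _ _, max_le hT (min_le_left _ _)⟩
  have hclc : Continuous cl := by simp only [cl]; fun_prop
  have hcle : ∀ t ∈ Icc 0 T, cl t = t := fun t ht => by simp only [cl]; rw [min_eq_right ht.2, max_eq_right ht.1]
  choose V hV using fun t => hlim none (cl t) (hcl t)
  choose q hqm hqb hql using fun t => weak_q (q := fun n => qn (θ n) (cl t)) (fun n => ((hA (θ n)).good (cl t)).adm)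
    (fun i => hlim (some i) (cl t) (hcl t))
  have hinv : Filter.Tendsto (fun n => 1 / ((θ n : ℝ) + 1)) Filter.atTop (nhds 0) :=
    (tendsto_one_div_add_atTop_nhds_zero_nat (𝕜 := ℝ)).comp hθ.tendsto_atTop
  have hgen : ∀ (D : ℝ) (a : ℕ → ℝ → ℝ) (A : ℝ → ℝ), (∀ t, Filter.Tendsto (fun n => a n (cl t)) Filter.atTop (nhds (A t))) →
      (∀ n, ∀ s t, |a n (cl t) - a n (cl s)| ≤ D * (|cl t - cl s| + 1 / ((θ n : ℝ) + 1))) → Continuous A := by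
    intro D a A hl hb
    have hb' : ∀ s t, |A t - A s| ≤ D * |cl t - cl s| := by
      intro s t
      refine le_of_tendsto_of_tendsto' ((hl t).sub (hl s)).abs ?_ (fun n => hb n s t)
      have := (hinv.const_add |cl t - cl s|).const_mul D
      simpa using this
    rw [continuous_iff_continuousAt]
    intro s
    rw [ContinuousAt, tendsto_iff_norm_sub_tendsto_zero]
    refine squeeze_zero (fun _ => norm_nonneg _) (fun t => hb' s t) ?_
    have : Continuous fun t => D * |cl t - cl s| := by fun_prop
    have := this.tendsto s
    simpa using this
  have hcV : Continuous V := hgen C (fun n => Vn (θ n)) V hV (fun n s t => (hA (θ n)).Vequi _ (hcl s) _ (hcl t))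
  have hcm : ∀ i, Continuous fun t => ∫ z in Dom, md i z * q t z := fun i =>
    hgen (C * L i) (fun n t => ∫ z in Dom, md i z * qn (θ n) t z) _ (fun t => hql t _ (md_memLp i))
      (fun n s t => (hA (θ n)).equi (L i) (md i) (hL i) (hL0 i) _ (hcl s) _ (hcl t))
  have hcq := weak_cont hqm hqb hcm
  obtain ⟨q', h1, h2, h3⟩ := joint_meas hqm hqb hcq
  have he : ∀ (g : ℝ × ℝ → ℝ) t, ∫ z in Dom, g z * q' t z = ∫ z in Dom, g z * q t z := fun g t => by
    refine integral_congr_ae ?_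
    filter_upwards [h3 t] with z hz
    rw [hz]
  refine ⟨θ, V, q', hθ, hcV, h1, h2, fun g hg => ?_, fun t ht => ?_, fun t ht g hg => ?_⟩
  · simp only [he]; exact hcq g hg
  · have := hV t
    rwa [hcle t ht] at this
  · rw [he]
    have := hql t g hg
    rwa [hcle t ht] at this

end BQG

namespace BQG

lemma gg_tend {f : ℕ → ℝ × ℝ → ℝ} {f' : ℝ × ℝ → ℝ} (hA : ∀ m, Filter.Tendsto (fun n => cA (f n) m) Filter.atTop (nhds (cA f' m)))
    (hB : ∀ m, Filter.Tendsto (fun n => cB (f n) m) Filter.atTop (nhds (cB f' m))) (m θ) :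
    Filter.Tendsto (fun n => gg (f n) m θ) Filter.atTop (nhds (gg f' m θ)) := by
  unfold gg
  exact (((hA m).mul_const _).add ((hB m).mul_const _)).const_mul _

lemma vN_tend {f : ℕ → ℝ × ℝ → ℝ} {f' : ℝ × ℝ → ℝ} (hA : ∀ m, Filter.Tendsto (fun n => cA (f n) m) Filter.atTop (nhds (cA f' m)))
    (hB : ∀ m, Filter.Tendsto (fun n => cB (f n) m) Filter.atTop (nhds (cB f' m))) (K z) :
    Filter.Tendsto (fun n => vN K (f n) z) Filter.atTop (nhds (vN K f' z)) := by
  unfold vN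
  refine Filter.Tendsto.prodMk_nhds ?_ ?_
  · exact tendsto_finsetSum _ fun m _ => (gg_tend hA hB m _).const_mul _
  · exact (tendsto_finsetSum _ fun m _ => (gg_tend hA hB m _).const_mul _).neg

lemma vN_bd {F : ℝ} {f : ℝ × ℝ → ℝ} (hf : Adm F f) (K z) : ‖vN K f z‖ ≤ (box K).card * F := by
  have := uN_bound hf K 0 z
  unfold uN at this
  rw [abs_zero, zero_add] at this
  have e : ((0, 0) : ℝ × ℝ) + vN K f z = vN K f z := zero_add _
  rwa [e] at this

lemma vN_L1_tend {F : ℝ} {f : ℕ → ℝ × ℝ → ℝ} {f' : ℝ × ℝ → ℝ} (hf : ∀ n, Adm F (f n)) (hf' : Adm F f')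
    (hA : ∀ m, Filter.Tendsto (fun n => cA (f n) m) Filter.atTop (nhds (cA f' m)))
    (hB : ∀ m, Filter.Tendsto (fun n => cB (f n) m) Filter.atTop (nhds (cB f' m))) (K) :
    Filter.Tendsto (fun n => ∫ z in Dom, ‖vN K (f n) z - vN K f' z‖) Filter.atTop (nhds 0) := by
  have := tendsto_integral_of_dominated_convergence (μ := volume.restrict Dom) (F := fun n z => ‖vN K (f n) z - vN K f' z‖)
    (f := fun _ => (0 : ℝ)) (fun _ => (box K).card * F + (box K).card * F)
    (fun n => ((vN_cont K (f n)).sub (vN_cont K f')).norm.aestronglyMeasurable) (integrable_const _)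
    (fun n => Filter.Eventually.of_forall fun z => by
      rw [norm_norm]
      exact (norm_sub_le _ _).trans (add_le_add (vN_bd (hf n) K z) (vN_bd hf' K z)))
    (Filter.Eventually.of_forall fun z => by
      have := vN_tend hA hB K z
      exact tendsto_iff_norm_sub_tendsto_zero.1 this)
  simpa using this

lemma vel_tend {F : ℝ} {f : ℕ → ℝ × ℝ → ℝ} {f' : ℝ × ℝ → ℝ} (hf : ∀ n, Adm F (f n)) (hf' : Adm F f')
    (hA : ∀ m, Filter.Tendsto (fun n => cA (f n) m) Filter.atTop (nhds (cA f' m)))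
    (hB : ∀ m, Filter.Tendsto (fun n => cB (f n) m) Filter.atTop (nhds (cB f' m))) {θ : ℕ → ℕ} (hθ : Filter.Tendsto θ Filter.atTop Filter.atTop) :
    Filter.Tendsto (fun n => ∫ z in Dom, ‖vN (θ n) (f n) z - vv f' z‖) Filter.atTop (nhds 0) := by
  have hF := hf'.nonneg
  have hvi : Integrable (vv f') (volume.restrict Dom) := (vv_memLp hf').integrable one_le_two
  rw [Metric.tendsto_atTop]
  intro ε hε
  obtain ⟨K, hK⟩ := exists_nat_one_div_lt (show 0 < ε / (3 * (2 * π * (π * F) + 1)) by positivity)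
  have hK' : 2 * π * (π * F / (K + 1)) ≤ ε / 3 := by
    calc 2 * π * (π * F / (K + 1)) = (2 * π * (π * F)) * (1 / (K + 1)) := by ring
      _ ≤ (2 * π * (π * F) + 1) * (ε / (3 * (2 * π * (π * F) + 1))) := by
        refine mul_le_mul (by linarith) hK.le (by positivity) (by positivity)
      _ = ε / 3 := by field_simp
  have h1 := (vN_L1_tend hf hf' hA hB K).eventually (gt_mem_nhds (show (0 : ℝ) < ε / 3 by positivity))
  obtain ⟨n0, hn0⟩ := Filter.eventually_atTop.1 (h1.and (hθ.eventually_ge_atTop K))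
  refine ⟨n0, fun n hn => ?_⟩
  obtain ⟨h2, h3⟩ := hn0 n hn
  rw [dist_zero_right, norm_of_nonneg (integral_nonneg fun _ => norm_nonneg _)]
  have t1 := tail_L1 (hf n) h3
  have t2 := vv_tail_L1 hf' K
  have i1 : Integrable (fun z => ‖vN (θ n) (f n) z - vN K (f n) z‖) (volume.restrict Dom) := ((vN_int _ _).sub (vN_int _ _)).norm
  have i2 : Integrable (fun z => ‖vN K (f n) z - vN K f' z‖) (volume.restrict Dom) := ((vN_int _ _).sub (vN_int _ _)).norm
  have i3 : Integrable (fun z => ‖vv f' z - vN K f' z‖) (volume.restrict Dom) := (hvi.sub (vN_int _ _)).norm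
  have i12 : Integrable (fun z => ‖vN (θ n) (f n) z - vN K (f n) z‖ + ‖vN K (f n) z - vN K f' z‖) (volume.restrict Dom) := i1.add i2
  calc ∫ z in Dom, ‖vN (θ n) (f n) z - vv f' z‖ ≤ ∫ z in Dom, (‖vN (θ n) (f n) z - vN K (f n) z‖ + ‖vN K (f n) z - vN K f' z‖ + ‖vv f' z - vN K f' z‖) := by
        refine integral_mono ((vN_int _ _).sub hvi).norm (i12.add i3) fun z => ?_
        simp only
        have := norm_add₃_le (a := vN (θ n) (f n) z - vN K (f n) z) (b := vN K (f n) z - vN K f' z) (c := vN K f' z - vv f' z)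
        rw [norm_sub_rev (vv f' z)]
        refine le_trans (le_of_eq ?_) this
        congr 1; abel
    _ = _ := by rw [integral_add i12 i3, integral_add i1 i2]
    _ < ε := by linarith

lemma GG_udiff {L M : ℝ} {φ : ℝ × ℝ × ℝ → ℝ} (hc : ContDiff ℝ 1 φ) {s : ℝ} (hL : ∀ z ∈ Dom, ‖fderiv ℝ φ (s, z)‖ ≤ L) (hL0 : 0 ≤ L)
    {q : ℝ × ℝ → ℝ} (hq : Adm M q) {u u' : ℝ × ℝ → ℝ × ℝ} (hu : Integrable u (volume.restrict Dom)) (hu' : Integrable u' (volume.restrict Dom)) :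
    Integrable (fun z => fderiv ℝ φ (s, z) (1, u z) * q z) (volume.restrict Dom) ∧
    |GG φ u q s - GG φ u' q s| ≤ L * M * ∫ z in Dom, ‖u z - u' z‖ := by
  have hM := hq.nonneg
  have hcl : Continuous fun p : (ℝ × ℝ × ℝ →L[ℝ] ℝ) × (ℝ × ℝ × ℝ) => p.1 p.2 := by fun_prop
  have hI : ∀ u : ℝ × ℝ → ℝ × ℝ, Integrable u (volume.restrict Dom) → Integrable (fun z => fderiv ℝ φ (s, z) (1, u z) * q z) (volume.restrict Dom) := by
    intro u hu
    have : Integrable (fun z => fderiv ℝ φ (s, z) (1, u z)) (volume.restrict Dom) := by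
      refine Integrable.mono' (g := fun z => L * (1 + ‖u z‖)) (((integrable_const _).add hu.norm).const_mul L) ?_ ?_
      · exact hcl.comp_aestronglyMeasurable ((fder_cont hc s).aestronglyMeasurable.prodMk (aestronglyMeasurable_const.prodMk hu.aestronglyMeasurable))
      · refine ae_restrict_of_forall_mem measurableSet_Dom fun z hz => ?_
        refine ((fderiv ℝ φ (s, z)).le_opNorm _).trans ?_
        refine mul_le_mul (hL z hz) ?_ (norm_nonneg _) hL0
        rw [Prod.norm_def]; simp only [norm_one]
        exact max_le (by linarith [norm_nonneg (u z)]) (by linarith)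
    exact this.mul_bdd (c := M) hq.meas.aestronglyMeasurable hq.bdd
  refine ⟨hI u hu, ?_⟩
  rw [GG_eq, GG_eq, ← integral_sub (hI u hu) (hI u' hu'), ← norm_eq_abs]
  refine (norm_integral_le_integral_norm _).trans ?_
  rw [← integral_const_mul]
  refine integral_mono_ae ((hI u hu).sub (hI u' hu')).norm ((hu.sub hu').norm.const_mul _) ?_
  filter_upwards [hq.bdd, ae_restrict_mem measurableSet_Dom] with z hz hzD
  rw [← sub_mul, norm_mul, ← map_sub]
  have h1 : ‖fderiv ℝ φ (s, z) ((1, u z) - (1, u' z))‖ ≤ L * ‖u z - u' z‖ := by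
    refine ((fderiv ℝ φ (s, z)).le_opNorm _).trans ?_
    refine mul_le_mul (hL z hzD) ?_ (norm_nonneg _) hL0
    rw [Prod.norm_def]; simp
  calc _ ≤ L * ‖u z - u' z‖ * M := mul_le_mul h1 hz (abs_nonneg _) (by positivity)
    _ = _ := by ring

lemma fd_memLp {L : ℝ} {φ : ℝ × ℝ × ℝ → ℝ} (hc : ContDiff ℝ 1 φ) {s : ℝ} (hL : ∀ z ∈ Dom, ‖fderiv ℝ φ (s, z)‖ ≤ L) (hL0 : 0 ≤ L)
    {u : ℝ × ℝ → ℝ × ℝ} (hu : MemLp u 2 (volume.restrict Dom)) :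
    MemLp (fun z => fderiv ℝ φ (s, z) (1, u z)) 2 (volume.restrict Dom) := by
  have hcl : Continuous fun p : (ℝ × ℝ × ℝ →L[ℝ] ℝ) × (ℝ × ℝ × ℝ) => p.1 p.2 := by fun_prop
  refine MemLp.mono' (g := fun z => L * (1 + ‖u z‖)) (((memLp_const (1 : ℝ)).add hu.norm).const_mul L) ?_ ?_
  · exact hcl.comp_aestronglyMeasurable ((fder_cont hc s).aestronglyMeasurable.prodMk (aestronglyMeasurable_const.prodMk hu.aestronglyMeasurable))
  · refine ae_restrict_of_forall_mem measurableSet_Dom fun z hz => ?_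
    refine ((fderiv ℝ φ (s, z)).le_opNorm _).trans ?_
    refine mul_le_mul (hL z hz) ?_ (norm_nonneg _) hL0
    rw [Prod.norm_def]; simp only [norm_one]
    exact max_le (by linarith [norm_nonneg (u z)]) (by linarith)

def uu (h : ℝ × ℝ → ℝ) (β : ℝ) (V : ℝ → ℝ) (q : ℝ → ℝ × ℝ → ℝ) (t : ℝ) (z : ℝ × ℝ) : ℝ × ℝ := (V t, 0) + vv (ff h β (q t)) z

section
variable {T H M β C V₀ : ℝ} {h q₀ : ℝ × ℝ → ℝ} {V : ℝ → ℝ} {q : ℝ → ℝ × ℝ → ℝ} {Vn : ℕ → ℝ → ℝ} {qn : ℕ → ℝ → ℝ × ℝ → ℝ}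
  {θ : ℕ → ℕ}

lemma Lm.adm (hl : Lm T M V q Vn qn) (t) : Adm M (q t) :=
  ⟨hl.measq.comp (measurable_const.prodMk measurable_id), Filter.Eventually.of_forall (hl.bdd t)⟩

lemma ff_int (hh : Adm H h) (hq : Adm M q₀) {g : ℝ × ℝ → ℝ} (hg : Continuous g) :
    ∫ z in Dom, ff h β q₀ z * g z = (∫ z in Dom, g z * q₀ z) - ∫ z in Dom, g z * (h z + β * z.2) := by
  have hm : Integrable (fun z => g z * q₀ z) (volume.restrict Dom) :=
    (cont_int hg).mul_bdd (c := M) hq.meas.aestronglyMeasurable hq.bdd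
  have hm2 : Integrable (fun z => g z * (h z + β * z.2)) (volume.restrict Dom) := by
    have i1 : Integrable (fun z => g z * h z) (volume.restrict Dom) :=
      (cont_int hg).mul_bdd (c := H) hh.meas.aestronglyMeasurable hh.bdd
    have i2 : Integrable (fun z => g z * (β * z.2)) (volume.restrict Dom) := cont_int (by fun_prop)
    have e : (fun z : ℝ × ℝ => g z * (h z + β * z.2)) = fun z => g z * h z + g z * (β * z.2) := by ext z; ring
    rw [e]; exact i1.add i2
  rw [← integral_sub hm hm2]
  congr 1; ext z; unfold ff; ring

lemma uu_memLp (hh : Adm H h) (hl : Lm T M V q Vn qn) (t) : MemLp (uu h β V q t) 2 (volume.restrict Dom) :=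
  (memLp_const ((V t, 0) : ℝ × ℝ)).add (vv_memLp (ff_adm' (β := β) hh (hl.adm t)))

lemma cAB_tend (hh : Adm H h) (hg : ∀ n t, Good M (qn n t)) (hl : Lm T M V q Vn qn)
    {t : ℝ} (ht : t ∈ Icc 0 T) :
    (∀ m, Filter.Tendsto (fun n => cA (ff h β (qn n t)) m) Filter.atTop (nhds (cA (ff h β (q t)) m))) ∧
    (∀ m, Filter.Tendsto (fun n => cB (ff h β (qn n t)) m) Filter.atTop (nhds (cB (ff h β (q t)) m))) := by
  constructor
  · intro m
    have hc : Continuous fun z : ℝ × ℝ => cos (m.1 * z.1) * sin (m.2 * z.2) := by fun_prop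
    unfold cA
    rw [ff_int hh (hl.adm t) hc]
    simp only [fun n => ff_int (β := β) hh (hg n t).adm hc]
    exact (hl.limq t ht _ (cont_memLp hc 2)).sub_const _
  · intro m
    have hc : Continuous fun z : ℝ × ℝ => sin (m.1 * z.1) * sin (m.2 * z.2) := by fun_prop
    unfold cB
    rw [ff_int hh (hl.adm t) hc]
    simp only [fun n => ff_int (β := β) hh (hg n t).adm hc]
    exact (hl.limq t ht _ (cont_memLp hc 2)).sub_const _

lemma vel_tend' (hh : Adm H h) (hg : ∀ n t, Good M (qn n t)) (hl : Lm T M V q Vn qn) (hθ : Filter.Tendsto θ Filter.atTop Filter.atTop)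
    {t : ℝ} (ht : t ∈ Icc 0 T) :
    Filter.Tendsto (fun n => ∫ z in Dom, ‖vN (θ n) (ff h β (qn n t)) z - vv (ff h β (q t)) z‖) Filter.atTop (nhds 0) := by
  obtain ⟨h1, h2⟩ := cAB_tend (β := β) hh hg hl ht
  exact vel_tend (fun n => ff_adm' hh (hg n t).adm) (ff_adm' hh (hl.adm t)) h1 h2 hθ

lemma mean_tend (hh : Adm H h) (hg : ∀ n t, Good M (qn n t)) (hl : Lm T M V q Vn qn) (hθ : Filter.Tendsto θ Filter.atTop Filter.atTop)
    {t : ℝ} (ht : t ∈ Icc 0 T) :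
    Filter.Tendsto (fun n => (∫ z in Dom, h z * (vN (θ n) (ff h β (qn n t)) z).2) / (4 * π ^ 2)) Filter.atTop
      (nhds ((∫ z in Dom, h z * (uu h β V q t z).2) / (4 * π ^ 2))) := by
  have hH := hh.nonneg
  refine Filter.Tendsto.div_const ?_ _
  rw [tendsto_iff_norm_sub_tendsto_zero]
  have h0 := (vel_tend' (β := β) hh hg hl hθ ht).const_mul H
  rw [mul_zero] at h0
  refine squeeze_zero (fun _ => norm_nonneg _) (fun n => ?_) h0
  have hvi : Integrable (vv (ff h β (q t))) (volume.restrict Dom) := (vv_memLp (ff_adm' (β := β) hh (hl.adm t))).integrable one_le_two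
  have e : ∀ z, (uu h β V q t z).2 = (vv (ff h β (q t)) z).2 := fun z => by simp [uu]
  simp only [e]
  rw [← integral_sub (hh.mul_int (vN_int _ _).snd) (hh.mul_int hvi.snd)]
  refine (norm_integral_le_integral_norm _).trans ?_
  rw [← integral_const_mul]
  refine integral_mono_ae ((hh.mul_int (vN_int _ _).snd).sub (hh.mul_int hvi.snd)).norm (((vN_int _ _).sub hvi).norm.const_mul _) ?_
  filter_upwards [hh.bdd] with z hz
  rw [← mul_sub, norm_mul]
  exact mul_le_mul hz (norm_snd_le (vN (θ n) (ff h β (qn n t)) z - vv (ff h β (q t)) z)) (norm_nonneg _) hH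

lemma GG_tend (hh : Adm H h) (hg : ∀ n t, Good M (qn n t)) (hl : Lm T M V q Vn qn) (hθ : Filter.Tendsto θ Filter.atTop Filter.atTop)
    {t : ℝ} (ht : t ∈ Icc 0 T) {L : ℝ} {φ : ℝ × ℝ × ℝ → ℝ} (hφ : Test T L φ) (hL : 0 ≤ L) :
    Filter.Tendsto (fun n => GG φ (uN (θ n) (Vn n t) (ff h β (qn n t))) (qn n t) t) Filter.atTop
      (nhds (GG φ (uu h β V q t) (q t) t)) := by
  have hb := fun z (_ : z ∈ Dom) => hφ.bdd1 t ht z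
  have hum := uu_memLp (β := β) hh hl t
  have hui := hum.integrable one_le_two
  have hni : ∀ n, Integrable (uN (θ n) (Vn n t) (ff h β (qn n t))) (volume.restrict Dom) := fun n =>
    (cont_memLp (uN_cont _ _ _) 1).integrable le_rfl
  have h1 : Filter.Tendsto (fun n => GG φ (uu h β V q t) (qn n t) t) Filter.atTop (nhds (GG φ (uu h β V q t) (q t) t)) := by
    simp only [GG_eq]
    exact hl.limq t ht _ (fd_memLp hφ.c1 hb hL hum)
  have h2 : Filter.Tendsto (fun n => GG φ (uN (θ n) (Vn n t) (ff h β (qn n t))) (qn n t) t - GG φ (uu h β V q t) (qn n t) t) Filter.atTop (nhds 0) := by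
    rw [tendsto_zero_iff_norm_tendsto_zero]
    have h3 : Filter.Tendsto (fun n => L * M * (4 * π ^ 2 * |Vn n t - V t| + ∫ z in Dom, ‖vN (θ n) (ff h β (qn n t)) z - vv (ff h β (q t)) z‖))
        Filter.atTop (nhds 0) := by
      have a1 := tendsto_iff_norm_sub_tendsto_zero.1 (hl.limV t ht)
      have := ((a1.const_mul (4 * π ^ 2)).add (vel_tend' (β := β) hh hg hl hθ ht)).const_mul (L * M)
      simpa using this
    refine squeeze_zero (fun _ => norm_nonneg _) (fun n => ?_) h3
    refine (GG_udiff hφ.c1 hb hL (hg n t).adm (hni n) hui).2.trans ?_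
    refine mul_le_mul_of_nonneg_left ?_ (mul_nonneg hL (hg n t).nonneg)
    have hvi : Integrable (vv (ff h β (q t))) (volume.restrict Dom) := (vv_memLp (ff_adm' (β := β) hh (hl.adm t))).integrable one_le_two
    have i1 : Integrable (fun z => ‖vN (θ n) (ff h β (qn n t)) z - vv (ff h β (q t)) z‖) (volume.restrict Dom) := ((vN_int _ _).sub hvi).norm
    have e : 4 * π ^ 2 * |Vn n t - V t| = ∫ z in Dom, |Vn n t - V t| := by rw [integral_const, volr_Dom, smul_eq_mul]
    rw [e, ← integral_add (integrable_const _) i1]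
    refine integral_mono ((hni n).sub hui).norm ((integrable_const _).add i1) fun z => ?_
    simp only [uN, uu]
    have e2 : ((Vn n t, 0) : ℝ × ℝ) + vN (θ n) (ff h β (qn n t)) z - ((V t, 0) + vv (ff h β (q t)) z)
      = (Vn n t - V t, 0) + (vN (θ n) (ff h β (qn n t)) z - vv (ff h β (q t)) z) := by
      rw [add_sub_add_comm]; simp
    rw [e2]
    refine (norm_add_le _ _).trans ?_
    refine add_le_add_left (le_of_eq ?_) _
    rw [Prod.norm_def]; simp
  have := h2.add h1
  simpa using this

end

end BQG

namespace BQG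

section
variable {T H M β C V₀ : ℝ} {h q₀ : ℝ × ℝ → ℝ} {V : ℝ → ℝ} {q : ℝ → ℝ × ℝ → ℝ} {Vn : ℕ → ℝ → ℝ} {qn : ℕ → ℝ → ℝ × ℝ → ℝ}
  {θ : ℕ → ℕ}

lemma one_div_tend (hθ : Filter.Tendsto θ Filter.atTop Filter.atTop) (c : ℝ) :
    Filter.Tendsto (fun n => c * (1 / ((θ n : ℝ) + 1))) Filter.atTop (nhds 0) := by
  have := (tendsto_one_div_add_atTop_nhds_zero_nat (𝕜 := ℝ)).comp hθ
  have := this.const_mul c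
  simpa only [mul_zero, Function.comp_def] using this

lemma lim_weak (hT : 0 < T) (hh : Adm H h) (hA : ∀ n, Apx T M β h V₀ q₀ C (θ n) (Vn n) (qn n))
    (hl : Lm T M V q Vn qn) (hθ : Filter.Tendsto θ Filter.atTop Filter.atTop)
    {L : ℝ} {φ : ℝ × ℝ × ℝ → ℝ} (hφ : Test T L φ) (hL : 0 ≤ L) :
    (∫ z in Dom, φ (T, z) * q T z) - (∫ z in Dom, φ (0, z) * q₀ z)
      = ∫ s in (0 : ℝ)..T, GG φ (uu h β V q s) (q s) s := by
  have hI : Filter.Tendsto (fun n => ∫ s in (0 : ℝ)..T, GG φ (uN (θ n) (Vn n s) (ff h β (qn n s))) (qn n s) s) Filter.atTop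
      (nhds (∫ s in (0 : ℝ)..T, GG φ (uu h β V q s) (q s) s)) := by
    refine intervalIntegral.tendsto_integral_filter_of_dominated_convergence
      (fun _ => L * M * (4 * π ^ 2 * (1 + C + (M + H + |β| * π)))) ?_ ?_ ?_ ?_
    · refine Filter.Eventually.of_forall fun n => ?_
      exact ((hA n).main L φ hφ hL).1.def'.aestronglyMeasurable
    · refine Filter.Eventually.of_forall fun n => Filter.Eventually.of_forall fun t ht => ?_
      rw [uIoc_of_le hT.le] at ht
      have ht' : t ∈ Icc 0 T := ⟨ht.1.le, ht.2⟩
      refine GG_bd hφ.c1 (fun z _ => hφ.bdd1 t ht' z) hL ((hA n).good t).adm ((cont_memLp (uN_cont _ _ _) 1).integrable le_rfl) ?_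
      refine (uN_L1 (ff_adm' (β := β) hh ((hA n).good t).adm) _ _).trans ?_
      have := (hA n).Vb t ht'
      gcongr
    · exact intervalIntegrable_const
    · refine Filter.Eventually.of_forall fun t ht => ?_
      rw [uIoc_of_le hT.le] at ht
      exact GG_tend hh (fun n => (hA n).good) hl hθ ⟨ht.1.le, ht.2⟩ hφ hL
  have hq := hl.limq T ⟨hT.le, le_rfl⟩ (fun z => φ (T, z)) (cont_memLp (hφ.c1.continuous.comp (by fun_prop)) 2)
  have h1 := (hq.sub_const (∫ z in Dom, φ (0, z) * q₀ z)).sub hI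
  have h2 : Filter.Tendsto (fun n => (∫ z in Dom, φ (T, z) * qn n T z) - (∫ z in Dom, φ (0, z) * q₀ z)
      - ∫ s in (0 : ℝ)..T, GG φ (uN (θ n) (Vn n s) (ff h β (qn n s))) (qn n s) s) Filter.atTop (nhds 0) :=
    squeeze_zero_norm (fun n => ((hA n).main L φ hφ hL).2) (one_div_tend hθ _)
  exact sub_eq_zero.1 (tendsto_nhds_unique h1 h2)

lemma lim_mean (hh : Adm H h) (hA : ∀ n, Apx T M β h V₀ q₀ C (θ n) (Vn n) (qn n))
    (hl : Lm T M V q Vn qn) (hθ : Filter.Tendsto θ Filter.atTop Filter.atTop)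
    {t : ℝ} (ht : t ∈ Icc 0 T) :
    V t = V₀ + ∫ s in Ioc (0 : ℝ) t, (∫ z in Dom, h z * (uu h β V q s z).2) / (4 * π ^ 2) := by
  rw [← intervalIntegral.integral_of_le ht.1]
  have hI : Filter.Tendsto (fun n => ∫ s in (0 : ℝ)..t, (∫ z in Dom, h z * (vN (θ n) (ff h β (qn n s)) z).2) / (4 * π ^ 2)) Filter.atTop
      (nhds (∫ s in (0 : ℝ)..t, (∫ z in Dom, h z * (uu h β V q s z).2) / (4 * π ^ 2))) := by
    refine intervalIntegral.tendsto_integral_filter_of_dominated_convergence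
      (fun _ => H * (M + H + |β| * π)) ?_ ?_ ?_ ?_
    · refine Filter.Eventually.of_forall fun n => ?_
      refine ((hA n).Vint.mono_set ?_).def'.aestronglyMeasurable
      rw [uIcc_of_le ht.1, uIcc_of_le (ht.1.trans ht.2)]
      exact Icc_subset_Icc_right ht.2
    · refine Filter.Eventually.of_forall fun n => Filter.Eventually.of_forall fun s hs => ?_
      exact hmean_bound hh (vN_int _ _) (vN_L1 (ff_adm' (β := β) hh ((hA n).good s).adm) _)
    · exact intervalIntegrable_const
    · refine Filter.Eventually.of_forall fun s hs => ?_
      rw [uIoc_of_le ht.1] at hs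
      exact mean_tend hh (fun n => (hA n).good) hl hθ ⟨hs.1.le, hs.2.trans ht.2⟩
  have h1 := ((hl.limV t ht).sub_const V₀).sub hI
  have h2 : Filter.Tendsto (fun n => Vn n t - V₀ - ∫ s in (0 : ℝ)..t, (∫ z in Dom, h z * (vN (θ n) (ff h β (qn n s)) z).2) / (4 * π ^ 2))
      Filter.atTop (nhds 0) :=
    squeeze_zero_norm (fun n => (hA n).Veq t ht) (one_div_tend hθ _)
  have := tendsto_nhds_unique h1 h2
  linarith

lemma cAB_cont (hh : Adm H h) (hl : Lm T M V q Vn qn) (m) :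
    (Continuous fun t => cA (ff h β (q t)) m) ∧ (Continuous fun t => cB (ff h β (q t)) m) := by
  constructor
  · have hc : Continuous fun z : ℝ × ℝ => cos (m.1 * z.1) * sin (m.2 * z.2) := by fun_prop
    unfold cA
    simp only [fun t => ff_int (β := β) hh (hl.adm t) hc]
    exact (hl.cont _ (cont_memLp hc 2)).sub continuous_const
  · have hc : Continuous fun z : ℝ × ℝ => sin (m.1 * z.1) * sin (m.2 * z.2) := by fun_prop
    unfold cB
    simp only [fun t => ff_int (β := β) hh (hl.adm t) hc]
    exact (hl.cont _ (cont_memLp hc 2)).sub continuous_const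

lemma vN_joint (hh : Adm H h) (hl : Lm T M V q Vn qn) (N : ℕ) :
    Continuous fun p : ℝ × (ℝ × ℝ) => vN N (ff h β (q p.1)) p.2 := by
  have h1 : ∀ m, Continuous fun p : ℝ × (ℝ × ℝ) => gg (ff h β (q p.1)) m (ph m p.2) := by
    intro m
    obtain ⟨a, b⟩ := cAB_cont (β := β) hh hl m
    have a' := a.comp (continuous_fst (X := ℝ) (Y := ℝ × ℝ))
    have b' := b.comp (continuous_fst (X := ℝ) (Y := ℝ × ℝ))
    simp only [Function.comp_def] at a' b'
    unfold gg ph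
    fun_prop
  unfold vN
  refine Continuous.prodMk ?_ (Continuous.neg ?_)
  · exact continuous_finsetSum _ fun m _ => continuous_const.mul (h1 m)
  · exact continuous_finsetSum _ fun m _ => continuous_const.mul (h1 m)

lemma uu_meas (hh : Adm H h) (hl : Lm T M V q Vn qn) : Measurable fun p : ℝ × (ℝ × ℝ) => uu h β V q p.1 p.2 := by
  unfold uu vv
  have h1 : StronglyMeasurable fun p : ℝ × (ℝ × ℝ) => Filter.limUnder Filter.atTop (fun l : ℕ => vN (2 ^ l) (ff h β (q p.1)) p.2) :=
    StronglyMeasurable.limUnder fun l => (vN_joint hh hl (2 ^ l)).stronglyMeasurable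
  have h2 : Measurable fun p : ℝ × (ℝ × ℝ) => ((V p.1, 0) : ℝ × ℝ) := (hl.contV.measurable.comp measurable_fst).prodMk measurable_const
  exact h2.add h1.measurable

lemma refl_mp : MeasurePreserving (fun z : ℝ × ℝ => (z.1, -z.2)) (volume.restrict Dom) (volume.restrict Dom) := by
  have h0 : MeasurePreserving (fun z : ℝ × ℝ => (z.1, -z.2)) volume volume :=
    (MeasurePreserving.id volume).prod (Measure.measurePreserving_neg volume)
  have h1 := h0.restrict_preimage measurableSet_Dom
  have h2 : (fun z : ℝ × ℝ => (z.1, -z.2)) ⁻¹' Dom = Ioc (-π) π ×ˢ Ico (-π) π := by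
    ext z; simp only [Dom, mem_preimage, mem_prod, mem_Ioc, mem_Ico]
    constructor
    · rintro ⟨a, b, c⟩; exact ⟨a, by linarith, by linarith⟩
    · rintro ⟨a, b, c⟩; exact ⟨a, by linarith, by linarith⟩
  have h3 : (Ioc (-π) π ×ˢ Ico (-π) π : Set (ℝ × ℝ)) =ᵐ[volume] Dom :=
    Measure.set_prod_ae_eq (Filter.EventuallyEq.refl _ _) Ico_ae_eq_Ioc
  rw [h2, Measure.restrict_congr_set h3] at h1
  exact h1

lemma refl_int {E : Type*} [NormedAddCommGroup E] [NormedSpace ℝ E] (F : ℝ × ℝ → E) :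
    ∫ z in Dom, F (z.1, -z.2) = ∫ z in Dom, F z := by
  have : MeasurableEmbedding (fun z : ℝ × ℝ => (z.1, -z.2)) :=
    ((MeasurableEquiv.refl ℝ).prodCongr (MeasurableEquiv.neg ℝ)).measurableEmbedding
  exact refl_mp.integral_comp this F

lemma EE_odd {g : ℝ × ℝ → ℝ} (hg : Good M g) (j k : ℤ) : EE g (j, k) + EE g (j, -k) = 0 := by
  have h1 : EE g (j, -k) = - EE g (j, k) := by
    unfold EE
    rw [← refl_int, ← integral_neg]
    congr 1; ext z
    rw [hg.odd]
    unfold ee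
    push_cast
    rw [neg_mul, neg_mul_neg]
  rw [h1]; ring

lemma lim_odd (hA : ∀ n, Apx T M β h V₀ q₀ C (θ n) (Vn n) (qn n)) (hl : Lm T M V q Vn qn) {t : ℝ} (ht : t ∈ Icc 0 T) :
    OddInY (q t) := by
  intro j k
  rw [chat_EE (hl.adm t).integrable]
  have h1 : ∀ m, Filter.Tendsto (fun n => EE (qn n t) m) Filter.atTop (nhds (EE (q t) m)) := by
    intro m
    rw [EE_md (hl.adm t).integrable]
    simp only [fun n => EE_md ((hA n).good t).adm.integrable m]
    have a := hl.limq t ht _ (md_memLp (true, m))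
    have b := hl.limq t ht _ (md_memLp (false, m))
    exact ((Complex.continuous_ofReal.tendsto _).comp a).add (((Complex.continuous_ofReal.tendsto _).comp b).const_mul _)
  have h2 := (h1 (-j, k)).add (h1 (-j, -k))
  simp only [fun n => EE_odd ((hA n).good t) (-j) k] at h2
  rw [tendsto_nhds_unique h2 tendsto_const_nhds, zero_div]

end
end BQG

namespace BQG

lemma haar2 : (volume : Measure (ℝ × ℝ)).IsAddHaarMeasure :=
  inferInstanceAs ((volume : Measure ℝ).prod (volume : Measure ℝ)).IsAddHaarMeasure

instance haar3 : (volume : Measure (ℝ × ℝ × ℝ)).IsAddHaarMeasure := by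
  have := haar2
  exact inferInstanceAs ((volume : Measure ℝ).prod (volume : Measure (ℝ × ℝ))).IsAddHaarMeasure

/-- mollification -/
def mol (ρ : ContDiffBump (0 : ℝ × ℝ × ℝ)) {E : Type*} [NormedAddCommGroup E] [NormedSpace ℝ E] (g : ℝ × ℝ × ℝ → E) :
    ℝ × ℝ × ℝ → E :=
  convolution (ρ.normed volume) g (ContinuousLinearMap.lsmul ℝ ℝ) volume

section
variable {E : Type*} [NormedAddCommGroup E] [NormedSpace ℝ E] {ρ : ContDiffBump (0 : ℝ × ℝ × ℝ)}

lemma mol_eq (g : ℝ × ℝ × ℝ → E) (p) : mol ρ g p = ∫ t, ρ.normed volume t • g (p - t) := rfl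

lemma mol_c2 {g : ℝ × ℝ × ℝ → ℝ} (hg : Continuous g) : ContDiff ℝ 2 (mol ρ g) :=
  (ρ.hasCompactSupport_normed (μ := volume)).contDiff_convolution_left _ ρ.contDiff_normed hg.locallyIntegrable

lemma mol_int [CompleteSpace E] {g : ℝ × ℝ × ℝ → E} (hg : Continuous g) (p) : Integrable fun t => ρ.normed volume t • g (p - t) := by
  refine Continuous.integrable_of_hasCompactSupport ?_ ?_
  · exact ρ.continuous_normed.smul (hg.comp (by fun_prop))
  · exact (ρ.hasCompactSupport_normed (μ := volume)).smul_right

lemma rho_zero (hr : ρ.rOut ≤ 1) {t : ℝ × ℝ × ℝ} (ht : ¬ ‖t‖ ≤ 1) : ρ.normed volume t = 0 := by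
  have : t ∉ Function.support (ρ.normed volume) := by
    rw [ρ.support_normed_eq]
    rw [mem_ball_zero_iff]; intro h; exact ht (h.le.trans hr)
  simpa using this

lemma mol_bd (hr : ρ.rOut ≤ 1) {g : ℝ × ℝ × ℝ → E} {K : ℝ} {p} (hK : ∀ t, ‖t‖ ≤ 1 → ‖g (p - t)‖ ≤ K) : ‖mol ρ g p‖ ≤ K := by
  rw [mol_eq]
  have h1 := norm_integral_le_of_norm_le (f := fun t => ρ.normed volume t • g (p - t)) (ρ.integrable_normed.mul_const K) (μ := volume)
    (Filter.Eventually.of_forall fun t => by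
      rw [norm_smul, norm_of_nonneg (ρ.nonneg_normed t)]
      by_cases ht : ‖t‖ ≤ 1
      · exact mul_le_mul_of_nonneg_left (hK t ht) (ρ.nonneg_normed t)
      · rw [rho_zero hr ht]; simp)
  rwa [integral_mul_const, ρ.integral_normed, one_mul] at h1

lemma mol_fderiv (hr : ρ.rOut ≤ 1) {φ : ℝ × ℝ × ℝ → ℝ} (hφ : ContDiff ℝ 1 φ) (p) : fderiv ℝ (mol ρ φ) p = mol ρ (fderiv ℝ φ) p := by
  have hd : Continuous (fderiv ℝ φ) := hφ.continuous_fderiv one_ne_zero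
  obtain ⟨K, hK⟩ := (isCompact_closedBall p 2).exists_bound_of_continuousOn hd.continuousOn
  have := hasFDerivAt_integral_of_dominated_of_fderiv_le (𝕜 := ℝ) (μ := volume) (s := Metric.ball p 1) (x₀ := p)
    (F := fun x t => ρ.normed volume t • φ (x - t)) (F' := fun x t => ρ.normed volume t • fderiv ℝ φ (x - t))
    (bound := fun t => ρ.normed volume t * K) (Metric.ball_mem_nhds p one_pos)
    (Filter.Eventually.of_forall fun x => (mol_int hφ.continuous x).aestronglyMeasurable)
    (mol_int hφ.continuous p) (mol_int hd p).aestronglyMeasurable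
    (Filter.Eventually.of_forall fun t x hx => by
      rw [norm_smul, norm_of_nonneg (ρ.nonneg_normed t)]
      by_cases ht : ‖t‖ ≤ 1
      · refine mul_le_mul_of_nonneg_left (hK _ ?_) (ρ.nonneg_normed t)
        rw [Metric.mem_ball, dist_eq_norm] at hx
        rw [Metric.mem_closedBall, dist_eq_norm]
        calc ‖x - t - p‖ = ‖(x - p) - t‖ := by congr 1; abel
          _ ≤ ‖x - p‖ + ‖t‖ := norm_sub_le _ _
          _ ≤ 2 := by linarith
      · rw [rho_zero hr ht]; simp)
    (ρ.integrable_normed.mul_const K)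
    (Filter.Eventually.of_forall fun t x hx => by
      have h1 : HasFDerivAt φ (fderiv ℝ φ (x - t)) (x - t) := (hφ.differentiable one_ne_zero).differentiableAt.hasFDerivAt
      have h2 : HasFDerivAt (fun x => φ (x - t)) (fderiv ℝ φ (x - t)) x := (hasFDerivAt_comp_sub t).2 h1
      exact h2.const_smul (ρ.normed volume t))
  exact this.fderiv

def rhoN (n : ℕ) : ContDiffBump (0 : ℝ × ℝ × ℝ) where
  rIn := 1 / (2 * ((n : ℝ) + 1))
  rOut := 1 / ((n : ℝ) + 1)
  rIn_pos := by positivity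
  rIn_lt_rOut := by
    have : (0 : ℝ) < n + 1 := by positivity
    exact one_div_lt_one_div_of_lt this (by linarith)

lemma rhoN_le (n) : (rhoN n).rOut ≤ 1 := by
  have : (0 : ℝ) ≤ n := by positivity
  show 1 / ((n : ℝ) + 1) ≤ 1
  rw [div_le_one (by positivity)]; linarith

lemma mol_tend {g : ℝ × ℝ × ℝ → E} [CompleteSpace E] (hg : Continuous g) (p) :
    Filter.Tendsto (fun n => mol (rhoN n) g p) Filter.atTop (nhds (g p)) :=
  ContDiffBump.convolution_tendsto_right_of_continuous (μ := volume) tendsto_one_div_add_atTop_nhds_zero_nat hg p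

end

section
variable {T H M β C V₀ : ℝ} {h q₀ : ℝ × ℝ → ℝ} {V : ℝ → ℝ} {q : ℝ → ℝ × ℝ → ℝ} {Vn : ℕ → ℝ → ℝ} {qn : ℕ → ℝ → ℝ × ℝ → ℝ}
  {θ : ℕ → ℕ}

lemma GG_meas (hh : Adm H h) (hl : Lm T M V q Vn qn) {φ : ℝ × ℝ × ℝ → ℝ} (hφ : ContDiff ℝ 1 φ) :
    StronglyMeasurable fun s => GG φ (uu h β V q s) (q s) s := by
  simp only [GG_eq]
  have hcl : Continuous fun p : (ℝ × ℝ × ℝ →L[ℝ] ℝ) × (ℝ × ℝ × ℝ) => p.1 p.2 := by fun_prop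
  have h1 : Measurable fun p : ℝ × (ℝ × ℝ) => fderiv ℝ φ (p.1, p.2) (1, uu h β V q p.1 p.2) :=
    hcl.measurable.comp (((hφ.continuous_fderiv one_ne_zero).comp (by fun_prop : Continuous fun p : ℝ × (ℝ × ℝ) => (p.1, p.2))).measurable.prodMk
      (measurable_const.prodMk (uu_meas hh hl)))
  have h2 : StronglyMeasurable fun p : ℝ × (ℝ × ℝ) => fderiv ℝ φ (p.1, p.2) (1, uu h β V q p.1 p.2) * q p.1 p.2 :=
    (h1.mul hl.measq).stronglyMeasurable
  exact h2.integral_prod_right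

lemma uu_L1 (hh : Adm H h) (hl : Lm T M V q Vn qn) (t) :
    ∫ z in Dom, (1 + ‖uu h β V q t z‖) ≤ 4 * π ^ 2 * (1 + |V t|) + 2 * π * (π * (M + H + |β| * π)) := by
  have hf := ff_adm' (β := β) hh (hl.adm t)
  have hv : Integrable (fun z => ‖vv (ff h β (q t)) z‖) (volume.restrict Dom) := ((vv_memLp hf).integrable one_le_two).norm
  have h1 : ∫ z in Dom, (1 + ‖uu h β V q t z‖) ≤ ∫ z in Dom, ((1 + |V t|) + ‖vv (ff h β (q t)) z‖) := by
    refine integral_mono ((integrable_const _).add ((uu_memLp (β := β) hh hl t).integrable one_le_two).norm) ((integrable_const _).add hv) ?_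
    intro z
    have : ‖uu h β V q t z‖ ≤ ‖((V t, 0) : ℝ × ℝ)‖ + ‖vv (ff h β (q t)) z‖ := norm_add_le _ _
    have e : ‖((V t, 0) : ℝ × ℝ)‖ = |V t| := by rw [Prod.norm_def]; simp
    simp only
    linarith
  refine h1.trans ?_
  rw [integral_add (integrable_const _) hv, integral_const, volr_Dom, smul_eq_mul]
  linarith [vv_L1 hf]

lemma weak_C1 (hT : 0 < T) (hh : Adm H h) (hl : Lm T M V q Vn qn) (hq₀ : Adm M q₀)
    (hw : ∀ L φ, Test T L φ → 0 ≤ L → (∫ z in Dom, φ (T, z) * q T z) - (∫ z in Dom, φ (0, z) * q₀ z)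
      = ∫ s in (0 : ℝ)..T, GG φ (uu h β V q s) (q s) s)
    {φ : ℝ × ℝ × ℝ → ℝ} (hφ : ContDiff ℝ 1 φ)
    (hx : ∀ t x y : ℝ, φ (t, x + 2 * π, y) = φ (t, x, y)) (hy : ∀ t x y : ℝ, φ (t, x, y + 2 * π) = φ (t, x, y)) :
    (∫ z in Dom, φ (T, z) * q T z) - (∫ z in Dom, φ (0, z) * q₀ z)
      = ∫ s in (0 : ℝ)..T, GG φ (uu h β V q s) (q s) s := by
  have hd : Continuous (fderiv ℝ φ) := hφ.continuous_fderiv one_ne_zero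
  obtain ⟨K0, hK00, hK0⟩ := per_bdd' hφ.continuous hx hy (-1) (T + 1)
  obtain ⟨K1, hK10, hK1⟩ := per_bdd' hd (fderiv_perx hx) (fderiv_pery hy) (-1) (T + 1)
  obtain ⟨B, hB⟩ := (isCompact_Icc (a := (0 : ℝ)) (b := T)).exists_bound_of_continuousOn hl.contV.continuousOn
  have hts : ∀ t ∈ Icc 0 T, ∀ (z : ℝ × ℝ) (p : ℝ × ℝ × ℝ), ‖p‖ ≤ 1 → (t - p.1) ∈ Icc (-1) (T + 1) ∧ (t, z) - p = (t - p.1, z - p.2) := by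
    intro t ht z p hp
    have := (norm_fst_le p).trans hp
    rw [norm_eq_abs, abs_le] at this
    exact ⟨⟨by linarith [ht.1], by linarith [ht.2]⟩, rfl⟩
  have b0 : ∀ n, ∀ t ∈ Icc 0 T, ∀ z, ‖mol (rhoN n) φ (t, z)‖ ≤ K0 := by
    intro n t ht z
    refine mol_bd (rhoN_le n) fun p hp => ?_
    obtain ⟨a, b⟩ := hts t ht z p hp
    rw [b]; exact hK0 _ a _
  have b1 : ∀ n, ∀ t ∈ Icc 0 T, ∀ z, ‖fderiv ℝ (mol (rhoN n) φ) (t, z)‖ ≤ K1 := by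
    intro n t ht z
    rw [mol_fderiv (rhoN_le n) hφ]
    refine mol_bd (rhoN_le n) fun p hp => ?_
    obtain ⟨a, b⟩ := hts t ht z p hp
    rw [b]; exact hK1 _ a _
  have hc2 : ∀ n, ContDiff ℝ 2 (mol (rhoN n) φ) := fun n => mol_c2 hφ.continuous
  have hc1 : ∀ n, ContDiff ℝ 1 (mol (rhoN n) φ) := fun n => (hc2 n).of_le one_le_two
  have hwn : ∀ n, (∫ z in Dom, mol (rhoN n) φ (T, z) * q T z) - (∫ z in Dom, mol (rhoN n) φ (0, z) * q₀ z)
      = ∫ s in (0 : ℝ)..T, GG (mol (rhoN n) φ) (uu h β V q s) (q s) s := by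
    intro n
    obtain ⟨L, hL, ht⟩ := test_of_C2 T (hc2 n)
      (fun t x y => by
        simp only [mol_eq]; congr 1; ext p
        have := hx (t - p.1) (x - p.2.1) (y - p.2.2)
        rw [show ((t, x + 2 * π, y) : ℝ × ℝ × ℝ) - p = (t - p.1, x - p.2.1 + 2 * π, y - p.2.2) by
          ext <;> simp; ring, this]; rfl)
      (fun t x y => by
        simp only [mol_eq]; congr 1; ext p
        have := hy (t - p.1) (x - p.2.1) (y - p.2.2)
        rw [show ((t, x, y + 2 * π) : ℝ × ℝ × ℝ) - p = (t - p.1, x - p.2.1, y - p.2.2 + 2 * π) by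
          ext <;> simp; ring, this]; rfl)
    exact hw L _ ht hL
  have t0 : ∀ t ∈ Icc 0 T, ∀ {g : ℝ × ℝ → ℝ}, Adm M g → Filter.Tendsto (fun n => ∫ z in Dom, mol (rhoN n) φ (t, z) * g z) Filter.atTop
      (nhds (∫ z in Dom, φ (t, z) * g z)) := by
    intro t ht g hg
    refine tendsto_integral_of_dominated_convergence (fun _ => K0 * M) (fun n => ?_) (integrable_const _) (fun n => ?_) ?_
    · exact ((hc1 n).continuous.comp (by fun_prop : Continuous fun z : ℝ × ℝ => (t, z))).aestronglyMeasurable.mul hg.meas.aestronglyMeasurable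
    · filter_upwards [hg.bdd] with z hz
      rw [norm_mul]
      exact mul_le_mul (b0 n t ht z) hz (abs_nonneg _) hK00
    · exact Filter.Eventually.of_forall fun z => (mol_tend hφ.continuous _).mul_const _
  have tG : Filter.Tendsto (fun n => ∫ s in (0 : ℝ)..T, GG (mol (rhoN n) φ) (uu h β V q s) (q s) s) Filter.atTop
      (nhds (∫ s in (0 : ℝ)..T, GG φ (uu h β V q s) (q s) s)) := by
    refine intervalIntegral.tendsto_integral_filter_of_dominated_convergence
      (fun _ => K1 * M * (4 * π ^ 2 * (1 + B) + 2 * π * (π * (M + H + |β| * π)))) ?_ ?_ ?_ ?_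
    · exact Filter.Eventually.of_forall fun n => (GG_meas hh hl (hc1 n)).aestronglyMeasurable
    · refine Filter.Eventually.of_forall fun n => Filter.Eventually.of_forall fun t ht => ?_
      rw [uIoc_of_le hT.le] at ht
      have ht' : t ∈ Icc 0 T := ⟨ht.1.le, ht.2⟩
      refine GG_bd (hc1 n) (fun z _ => b1 n t ht' z) hK10 (hl.adm t) ((uu_memLp (β := β) hh hl t).integrable one_le_two) ?_
      refine (uu_L1 hh hl t).trans ?_
      have := hB t ht'
      rw [norm_eq_abs] at this
      gcongr
    · exact intervalIntegrable_const
    · refine Filter.Eventually.of_forall fun t ht => ?_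
      rw [uIoc_of_le hT.le] at ht
      have ht' : t ∈ Icc 0 T := ⟨ht.1.le, ht.2⟩
      have hui := (uu_memLp (β := β) hh hl t).integrable one_le_two
      simp only [GG_eq]
      refine tendsto_integral_of_dominated_convergence (fun z => K1 * (1 + ‖uu h β V q t z‖) * M) (fun n => ?_) ?_ (fun n => ?_) ?_
      · exact ((GG_udiff (hc1 n) (fun z _ => b1 n t ht' z) hK10 (hl.adm t) hui hui).1).aestronglyMeasurable
      · exact (((integrable_const _).add hui.norm).const_mul K1).mul_const M
      · refine Filter.Eventually.of_forall fun z => ?_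
        rw [norm_mul]
        refine mul_le_mul ?_ (hl.bdd t z) (abs_nonneg _) (by positivity)
        refine ((fderiv ℝ _ (t, z)).le_opNorm _).trans ?_
        refine mul_le_mul (b1 n t ht' z) ?_ (norm_nonneg _) hK10
        rw [Prod.norm_def]; simp only [norm_one]
        exact max_le (by linarith [norm_nonneg (uu h β V q t z)]) (by linarith)
      · refine Filter.Eventually.of_forall fun z => Filter.Tendsto.mul_const _ ?_
        simp only [fun n => mol_fderiv (rhoN_le n) hφ]
        exact ((ContinuousLinearMap.apply ℝ ℝ ((1, uu h β V q t z) : ℝ × ℝ × ℝ)).continuous.tendsto _).comp (mol_tend hd (t, z))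
  have hL := (t0 T ⟨hT.le, le_rfl⟩ (hl.adm T)).sub (t0 0 ⟨le_rfl, hT.le⟩ hq₀)
  simp only [hwn] at hL
  exact tendsto_nhds_unique hL tG

end
end BQG

namespace BQG

def wr (x : ℝ) : ℝ := x - 2 * π * (⌈(x - π) / (2 * π)⌉ : ℝ)

lemma wr_meas : Measurable wr := by
  unfold wr
  have : Measurable fun x : ℝ => (⌈(x - π) / (2 * π)⌉ : ℝ) :=
    (measurable_from_top (f := fun n : ℤ => (n : ℝ))).comp (Int.measurable_ceil.comp (by fun_prop))
  exact measurable_id.sub (this.const_mul _)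

lemma wr_per (x : ℝ) : wr (x + 2 * π) = wr x := by
  have hp := pi_pos
  unfold wr
  have : (x + 2 * π - π) / (2 * π) = (x - π) / (2 * π) + 1 := by field_simp; ring
  rw [this, Int.ceil_add_one]; push_cast; ring

lemma wr_self {x : ℝ} (hx : x ∈ Ioc (-π) π) : wr x = x := by
  have hp := pi_pos
  unfold wr
  have : ⌈(x - π) / (2 * π)⌉ = 0 := by
    rw [Int.ceil_eq_iff]
    push_cast
    constructor
    · rw [lt_div_iff₀ (by positivity)]; linarith [hx.1]
    · exact div_nonpos_of_nonpos_of_nonneg (by linarith [hx.2]) (by positivity)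
  rw [this]; simp

lemma odd_ae {M : ℝ} {q₀ : ℝ × ℝ → ℝ} (hq : Adm M q₀) (ho : OddInY q₀) :
    ∀ᵐ z ∂(volume.restrict Dom), q₀ (z.1, -z.2) = - q₀ z := by
  have hR : Measurable fun z : ℝ × ℝ => ((z.1, -z.2) : ℝ × ℝ) := by fun_prop
  have hq' : Adm M (fun z => q₀ (z.1, -z.2)) := ⟨hq.meas.comp hR, refl_mp.quasiMeasurePreserving.ae hq.bdd⟩
  have hE : ∀ m : ℤ × ℤ, EE q₀ m + EE q₀ (m.1, -m.2) = 0 := by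
    rintro ⟨j, k⟩
    have key : ∀ n : ℕ, EE q₀ (j, n) + EE q₀ (j, -n) = 0 := by
      intro n
      have := ho (-j) n
      rw [chat_EE hq.integrable, neg_neg] at this
      have hp : (4 * (π : ℂ)) ≠ 0 := by
        have := pi_ne_zero
        simp [this]
      exact (div_eq_zero_iff.1 this).resolve_right hp
    obtain ⟨n, rfl | rfl⟩ := k.eq_nat_or_neg
    · exact key n
    · simp only [neg_neg]; rw [add_comm]; exact key n
  have hf : Adm (M + M) (fun z => q₀ z + q₀ (z.1, -z.2)) := by
    refine ⟨hq.meas.add hq'.meas, ?_⟩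
    filter_upwards [hq.bdd, hq'.bdd] with z h1 h2
    exact (abs_add_le _ _).trans (add_le_add h1 h2)
  have hEE : ∀ m, EE (fun z => q₀ z + q₀ (z.1, -z.2)) m = 0 := by
    intro m
    rw [← hE m]
    have e2 : EE q₀ (m.1, -m.2) = EE (fun z => q₀ (z.1, -z.2)) m := by
      unfold EE
      rw [← refl_int]
      congr 1; ext z
      unfold ee; push_cast; rw [neg_mul_neg]
    rw [e2, EE_md hf.integrable, EE_md hq.integrable, EE_md hq'.integrable]
    have i : ∀ (i) {g : ℝ × ℝ → ℝ}, Adm M g → Integrable (fun z => md i z * g z) (volume.restrict Dom) := fun i g hg =>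
      ((md_memLp i).integrable one_le_two).mul_bdd (c := M) hg.meas.aestronglyMeasurable hg.bdd
    have e : ∀ i, ∫ z in Dom, md i z * (q₀ z + q₀ (z.1, -z.2)) = (∫ z in Dom, md i z * q₀ z) + ∫ z in Dom, md i z * q₀ (z.1, -z.2) := by
      intro j
      rw [← integral_add (i j hq) (i j hq')]
      congr 1; ext z; ring
    rw [e, e]; push_cast; ring
  have := complete_real hf.meas (hf.memLp) (by
    rintro ⟨b, m⟩
    have := hEE m
    rw [EE_md hf.integrable] at this
    have hre := congrArg Complex.re this
    have him := congrArg Complex.im this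
    simp at hre him
    cases b
    · exact him
    · exact hre)
  filter_upwards [this] with z hz
  have : q₀ z + q₀ (z.1, -z.2) = 0 := hz
  linarith

lemma exists_good {M : ℝ} {q₀ : ℝ × ℝ → ℝ} (hq : Adm M q₀) (ho : OddInY q₀) :
    ∃ q, Good M q ∧ ∀ᵐ z ∂(volume.restrict Dom), q z = q₀ z := by
  have hM := hq.nonneg
  have hR : Measurable fun z : ℝ × ℝ => ((z.1, -z.2) : ℝ × ℝ) := by fun_prop
  set q1 : ℝ × ℝ → ℝ := fun z => clampM M (q₀ (wr z.1, wr z.2)) with hq1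
  have m1 : Measurable q1 := (clampM_cont M).measurable.comp (hq.meas.comp ((wr_meas.comp measurable_fst).prodMk (wr_meas.comp measurable_snd)))
  have e1 : ∀ᵐ z ∂(volume.restrict Dom), q1 z = q₀ z := by
    filter_upwards [hq.bdd, ae_restrict_mem measurableSet_Dom] with z hz hzD
    simp only [hq1]
    rw [wr_self hzD.1, wr_self hzD.2, clampM_eq hz]
  have e2 : ∀ᵐ z ∂(volume.restrict Dom), q1 (z.1, -z.2) = q₀ (z.1, -z.2) := refl_mp.quasiMeasurePreserving.ae e1
  refine ⟨fun z => (q1 z - q1 (z.1, -z.2)) / 2, ⟨(m1.sub (m1.comp hR)).div_const 2, fun z => ?_, fun x y => ?_, fun x y => ?_, fun x y => ?_⟩, ?_⟩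
  · have a := abs_le.1 (clampM_abs hM (q₀ (wr z.1, wr z.2)))
    have b := abs_le.1 (clampM_abs hM (q₀ (wr z.1, wr (-z.2))))
    simp only [hq1]
    rw [abs_le]; constructor <;> linarith
  · simp only [hq1, wr_per]
  · have : wr (-(y + 2 * π)) = wr (-y) := by rw [← wr_per]; congr 1; ring
    simp only [hq1, wr_per, this]
  · simp only [neg_neg]; ring
  · filter_upwards [e1, e2, odd_ae hq ho] with z h1 h2 h3
    rw [h1, h2, h3]; ring

end BQG

namespace BQG

/-- **Existence of weak solutions** (Proposition 2.2, weak-solution part). For every `T > 0`,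
every `V₀ ∈ ℝ` and every `q₀ ∈ L^∞(D)` odd in `y`, there exists a weak solution `(V,q)` (with
its associated velocity field `u`) of the barotropic quasi-geostrophic equations on `[0,T]`
with initial datum `(V₀,q₀)`. -/
theorem existence_of_weak_solutions
    (T : ℝ) (hT : 0 < T) (β : ℝ)
    (h : ℝ × ℝ → ℝ) (hmeas : Measurable h)
    (hbdd : ∃ M : ℝ, ∀ᵐ z ∂(volume.restrict Dom), |h z| ≤ M)
    (hodd : OddInY h)
    (hsmooth : ContDiffOn ℝ (⊤ : ℕ∞) h (Icc (-π) π ×ˢ Ioo 0 π))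
    (V₀ : ℝ) (q₀ : ℝ × ℝ → ℝ) (hq₀meas : Measurable q₀)
    (hq₀bdd : ∃ M : ℝ, ∀ᵐ z ∂(volume.restrict Dom), |q₀ z| ≤ M)
    (hq₀odd : OddInY q₀) :
    ∃ (V : ℝ → ℝ) (q : ℝ → ℝ × ℝ → ℝ) (u : ℝ → ℝ × ℝ → ℝ × ℝ),
      IsWeakSolution T β h V₀ q₀ V q u := by
  obtain ⟨H, hH⟩ := hbdd
  obtain ⟨M, hM⟩ := hq₀bdd
  have hh : Adm H h := ⟨hmeas, hH⟩
  have hq : Adm M q₀ := ⟨hq₀meas, hM⟩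
  obtain ⟨q0', hg, hae⟩ := exists_good hq hq₀odd
  obtain ⟨C, hC, hapx⟩ := exists_apx (β := β) (V₀ := V₀) hT hh hg
  choose Vn qn hA using hapx
  obtain ⟨θ, V, q, hθ, hl⟩ := exists_lim hT.le hC hA
  have hA' := fun n => hA (θ n)
  have hθ' := hθ.tendsto_atTop
  refine ⟨V, q, uu h β V q, ?_⟩
  constructor
  · exact hl.contV.measurable
  · obtain ⟨B, hB⟩ := (isCompact_Icc (a := (0 : ℝ)) (b := T)).exists_bound_of_continuousOn hl.contV.continuousOn
    exact ⟨B, hB⟩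
  · exact hl.measq
  · exact ⟨M, Filter.Eventually.of_forall fun p => hl.bdd _ _⟩
  · exact ae_restrict_of_forall_mem measurableSet_Icc fun t ht => lim_odd hA' hl ht
  · intro g hgc
    have := hl.cont g (cont_memLp hgc 2)
    simp only [mul_comm (q _ _)]
    exact this.continuousOn
  · exact uu_meas hh hl
  · exact Filter.Eventually.of_forall fun t => isVelocity_vv (ff_adm' (β := β) hh (hl.adm t)) (V t)
  · intro φ hφ hx hy
    have h1 := weak_C1 hT hh hl hg.adm (fun L φ ht hL => lim_weak hT hh hA' hl hθ' ht hL) hφ hx hy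
    rw [intervalIntegral.integral_of_le hT.le, ← integral_Icc_eq_integral_Ioc] at h1
    have h2 : ∫ z in Dom, φ (0, z) * q₀ z = ∫ z in Dom, φ (0, z) * q0' z := by
      refine integral_congr_ae ?_
      filter_upwards [hae] with z hz
      rw [hz]
    rw [h2]
    exact h1
  · intro t ht
    exact lim_mean hh hA' hl hθ' ht

end BQG
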